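/- arXiv:2004.12001 — 2 statements merged into one kernel-verified Lean document; each statement's English description precedes it below -/
import Mathlib

section
/- For every s ∈ [0,1], the infimum of dim_A D(F) over all non-empty sets F ⊆ ℝ² with dim_A F ≥ s is equal to s. That is, inf{dim_A D(F) : F ⊆ ℝ² non-empty and dim_A F ≥ s} = s. -/
open Metric MeasureTheory Filter Set
open scoped ENNReal NNReal Pointwise Topology

noncomputable section

/-- The Assouad dimension of a subset of a (pseudo)metric space: the infimum of all
`α ≥ 0` for which there is `C > 0` such that for every `x ∈ E` and all scales `0 < r < R`,
the set `E ∩ B(x,R)` can be covered by at most `C (R/r)^α` sets of diameter at most `r`. -/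
def assouadDim {X : Type*} [PseudoMetricSpace X] (E : Set X) : ℝ :=
  sInf {α : ℝ | 0 ≤ α ∧ ∃ C : ℝ, 0 < C ∧ ∀ x ∈ E, ∀ r R : ℝ, 0 < r → r < R →
    ∃ 𝒰 : Finset (Set X), (E ∩ closedBall x R ⊆ ⋃ U ∈ 𝒰, U) ∧
      (∀ U ∈ 𝒰, EMetric.diam U ≤ ENNReal.ofReal r) ∧
      ((𝒰.card : ℝ) ≤ C * (R / r) ^ α)}

/-- Euclidean space `ℝⁿ`. -/
abbrev Euc (n : ℕ) := EuclideanSpace ℝ (Fin n)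

/-- The distance set `D(F) = {|x - y| : x, y ∈ F}`. -/
def distSet {n : ℕ} (F : Set (Euc n)) : Set ℝ :=
  {d : ℝ | ∃ x ∈ F, ∃ y ∈ F, d = dist x y}

/-!
For the lower bound, suppose `D(F)` is `α`-homogeneous and `α < t ≤ 1`. Since `α < 1`, the set
`D(F)` contains no long approximate arithmetic progressions. It suffices to bound finite separated
subsets `X` of `F` satisfying a Frostman condition of exponent `t`. The distances to a point `y`
take few values at each scale, so the points of `X` cannot concentrate near one direction from `y`,
and there are pins `x`, `x'` in `X` seen from `y` at an angle `φ` that is small but bounded below.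
Near `y` the level sets of `dist · x` and `dist · x'` then cross at angle `φ`. Call a point stable
at scale `ρ` if all distances to a pin attained in a window of size `H' ρ` around it are nearly
attained in a smaller window of size `H ρ`. Two stable points on the same level of `dist · x` but
far apart would allow one to slide back and forth along the two families of level sets, and so
produce an approximate progression of distances. Pigeonholing over a chain of windows makes most
scales stable for most points, so the number of cells meeting `X` near `y` grows by a factor of
roughly `q ^ α` when the scale shrinks by a factor of `q`, and this gives the exponent `t`.

For sharpness take integers whose base `b` digits are smaller than `b ^ s`, placed on a line: the
number of possible digits at most doubles when passing to differences, which costs an arbitrarily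
small amount of dimension once `b` is large.
-/

section Homogeneous

variable {X Y : Type*} [PseudoMetricSpace X] [PseudoMetricSpace Y]

/-- `(C, α)`-homogeneity in the sense of Luukkainen: the covering property quantified over in
`assouadDim`. -/
def AssouadHomogeneous (E : Set X) (C α : ℝ) : Prop :=
  ∀ x ∈ E, ∀ r R : ℝ, 0 < r → r < R →
    ∃ 𝒰 : Finset (Set X), (E ∩ closedBall x R ⊆ ⋃ U ∈ 𝒰, U) ∧
      (∀ U ∈ 𝒰, ediam U ≤ ENNReal.ofReal r) ∧ (𝒰.card : ℝ) ≤ C * (R / r) ^ α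

theorem dist_le_of_ediam_le {U : Set X} {r : ℝ} (hr : 0 ≤ r) (hU : ediam U ≤ ENNReal.ofReal r)
    {x y : X} (hx : x ∈ U) (hy : y ∈ U) : dist x y ≤ r := by
  have h := (edist_le_ediam_of_mem hx hy).trans hU
  rwa [edist_dist, ENNReal.ofReal_le_ofReal_iff hr] at h

namespace AssouadHomogeneous

variable {E : Set X} {C α : ℝ}

theorem mono {E' : Set X} (h : AssouadHomogeneous E' C α) (hE : E ⊆ E') :
    AssouadHomogeneous E C α := fun x hx r R hr hrR =>
  let ⟨𝒰, hcov, hdiam, hcard⟩ := h x (hE hx) r R hr hrR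
  ⟨𝒰, (inter_subset_inter_left _ hE).trans hcov, hdiam, hcard⟩

theorem image_isometry (h : AssouadHomogeneous E C α) {g : X → Y} (hg : Isometry g) :
    AssouadHomogeneous (g '' E) C α := by
  rintro _ ⟨x, hx, rfl⟩ r R hr hrR
  obtain ⟨𝒰, hcov, hdiam, hcard⟩ := h x hx r R hr hrR
  refine ⟨𝒰.image (g '' ·), ?_, ?_, le_trans (by exact_mod_cast Finset.card_image_le) hcard⟩
  · rintro _ ⟨⟨y, hy, rfl⟩, hyR⟩
    rw [mem_closedBall, hg.dist_eq] at hyR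
    obtain ⟨U, hU, hyU⟩ := mem_iUnion₂.1 (hcov ⟨hy, hyR⟩)
    exact mem_iUnion₂.2 ⟨g '' U, Finset.mem_image_of_mem _ hU, mem_image_of_mem g hyU⟩
  · simpa [hg.ediam_image] using hdiam

theorem assouadDim_le (h : AssouadHomogeneous E C α) (hC : 0 < C) (hα : 0 ≤ α) :
    assouadDim E ≤ α :=
  csInf_le ⟨0, fun _ hβ => hβ.1⟩ ⟨hα, C, hC, h⟩

theorem le_assouadDim (h : AssouadHomogeneous E C α) (hC : 0 < C) (hα : 0 ≤ α) {s : ℝ}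
    (hs : ∀ β C' : ℝ, 0 ≤ β → 0 < C' → AssouadHomogeneous E C' β → s ≤ β) : s ≤ assouadDim E :=
  le_csInf ⟨α, hα, C, hC, h⟩ fun β ⟨hβ, C', hC', h'⟩ => hs β C' hβ hC' h'

theorem card_le_of_separated (h : AssouadHomogeneous E C α) {x : X} (hx : x ∈ E) {r R : ℝ}
    (hr : 0 < r) (hrR : r < R) {S : Finset X} (hS : (S : Set X) ⊆ E ∩ closedBall x R)
    (hsep : (S : Set X).Pairwise fun y z => r < dist y z) : (S.card : ℝ) ≤ C * (R / r) ^ α := by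
  obtain ⟨𝒰, hcov, hdiam, hcard⟩ := h x hx r R hr hrR
  choose! U hU hyU using fun y (hy : y ∈ S) => mem_iUnion₂.1 (hcov (hS hy))
  refine le_trans ?_ hcard
  exact_mod_cast Finset.card_le_card_of_injOn U (fun y hy => hU y hy) fun y hy z hz hyz =>
    by_contra fun hne => (hsep hy hz hne).not_ge <|
      dist_le_of_ediam_le hr.le (hdiam _ (hU y hy)) (hyU y hy) (hyz ▸ hyU z hz)

/-- Passing between coverings and separated sets costs a factor `2` in the scale. -/
theorem of_card_separated_le
    (h : ∀ x ∈ E, ∀ r R : ℝ, 0 < r → r < R → ∀ S : Finset X, (S : Set X) ⊆ E ∩ closedBall x R →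
      ((S : Set X).Pairwise fun y z => r / 2 < dist y z) → (S.card : ℝ) ≤ C * (R / r) ^ α) :
    AssouadHomogeneous E C α := by
  intro x hx r R hr hrR
  set A := E ∩ closedBall x R
  have hsep : ∀ {N : Set X}, IsSeparated ((r / 2).toNNReal : ℝ≥0∞) N →
      N.Pairwise fun y z => r / 2 < dist y z := fun hN y hy z hz hyz => by
    have : ((r / 2).toNNReal : ℝ≥0∞) < edist y z := hN hy hz hyz
    rw [edist_dist] at this
    exact (ENNReal.ofReal_lt_ofReal_iff_of_nonneg (by positivity)).1 this
  have hpack : packingNumber (r / 2).toNNReal A ≠ ⊤ := by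
    refine ne_top_of_le_ne_top (ENat.natCast_ne_top ⌊C * (R / r) ^ α⌋₊) ?_
    refine iSup_le fun N => iSup_le fun hNA => iSup_le fun hN => not_lt.1 fun hlt => ?_
    obtain ⟨S, hSN, hS⟩ := exists_subset_encard_eq (Order.add_one_le_of_lt hlt)
    have hfin : S.Finite := finite_of_encard_eq_coe hS
    have hcard := h x hx r R hr hrR hfin.toFinset
      (by rw [hfin.coe_toFinset]; exact hSN.trans hNA)
      (by simpa using (hsep hN).mono hSN)
    rw [hfin.encard_eq_coe_toFinset_card] at hS
    have : hfin.toFinset.card = ⌊C * (R / r) ^ α⌋₊ + 1 := by exact_mod_cast hS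
    have := Nat.le_floor hcard
    omega
  set N := maximalSeparatedSet (r / 2).toNNReal A
  have hfin : N.Finite := encard_ne_top_iff.1 <| by rwa [encard_maximalSeparatedSet hpack]
  refine ⟨hfin.toFinset.image fun y => closedBall y (r / 2), ?_, ?_, ?_⟩
  · have := isCover_iff_subset_iUnion_closedBall.1 (isCover_maximalSeparatedSet hpack)
    simpa [Real.coe_toNNReal _ (half_pos hr).le] using this
  · simp only [Finset.forall_mem_image]
    refine fun y _ => ediam_le_of_forall_dist_le fun a ha b hb => ?_
    linarith [dist_triangle_right a b y, mem_closedBall.1 ha, mem_closedBall.1 hb]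
  · refine le_trans (by exact_mod_cast Finset.card_image_le)
      (h x hx r R hr hrR hfin.toFinset ?_ ?_)
    · rw [hfin.coe_toFinset]
      exact maximalSeparatedSet_subset
    · simpa using hsep isSeparated_maximalSeparatedSet

end AssouadHomogeneous

end Homogeneous

section Grid

theorem card_image_floor_div_le {ι : Type*} (S : Finset ι) (g : ι → ℝ) {w L : ℝ} (hw : 0 < w)
    (hL : 0 ≤ L) (hS : ∀ i ∈ S, ∀ j ∈ S, |g i - g j| ≤ L) :
    ((S.image fun i => ⌊g i / w⌋).card : ℝ) ≤ L / w + 2 := by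
  rcases S.eq_empty_or_nonempty with rfl | hne
  · rw [Finset.image_empty, Finset.card_empty, Nat.cast_zero]
    positivity
  obtain ⟨i₀, hi₀, hmin⟩ := S.exists_min_image g hne
  have hsub : (S.image fun i => ⌊g i / w⌋) ⊆
      Finset.Icc ⌊g i₀ / w⌋ (⌊g i₀ / w⌋ + (⌊L / w⌋ + 1)) := by
    simp only [Finset.subset_iff, Finset.forall_mem_image, Finset.mem_Icc]
    refine fun i hi => ⟨Int.floor_le_floor (by gcongr; exact hmin i hi), ?_⟩
    have hi' : g i / w ≤ g i₀ / w + L / w := by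
      rw [← add_div]
      gcongr
      linarith [le_abs_self (g i - g i₀), hS i hi i₀ hi₀]
    linarith [Int.floor_le_floor hi', Int.le_floor_add_floor (g i₀ / w) (L / w)]
  have hcard := Finset.card_le_card hsub
  rw [Int.card_Icc] at hcard
  have hfloor : (0 : ℤ) ≤ ⌊L / w⌋ := Int.floor_nonneg.2 (by positivity)
  have : ((S.image fun i => ⌊g i / w⌋).card : ℤ) ≤ ⌊L / w⌋ + 2 := by omega
  calc ((S.image fun i => ⌊g i / w⌋).card : ℝ) ≤ ⌊L / w⌋ + 2 := by exact_mod_cast this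
    _ ≤ L / w + 2 := by gcongr; exact Int.floor_le _

theorem abs_sub_lt_of_floor_div_eq {a b w : ℝ} (hw : 0 < w) (h : ⌊a / w⌋ = ⌊b / w⌋) :
    |a - b| < w := by
  have := Int.abs_sub_lt_one_of_floor_eq_floor h
  rwa [← sub_div, abs_div, abs_of_pos hw, div_lt_one hw] at this

theorem AssouadHomogeneous.card_image_floor_le {D : Set ℝ} {C α : ℝ}
    (h : AssouadHomogeneous D C α) (hC : 0 ≤ C) {ι : Type*} (S : Finset ι) (f : ι → ℝ)
    (hf : ∀ i ∈ S, f i ∈ D) {w q : ℝ} (hw : 0 < w) (hq : 1 < q)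
    (hS : ∀ i ∈ S, ∀ j ∈ S, |f i - f j| ≤ q * w) :
    ((S.image fun i => ⌊f i / w⌋).card : ℝ) ≤ 3 * C * q ^ α := by
  classical
  rcases S.eq_empty_or_nonempty with rfl | ⟨i₀, hi₀⟩
  · rw [Finset.image_empty, Finset.card_empty, Nat.cast_zero]
    positivity
  obtain ⟨𝒰, hcov, hdiam, hcard⟩ := h (f i₀) (hf i₀ hi₀) w (q * w) hw (by nlinarith)
  rw [mul_div_cancel_right₀ _ hw.ne'] at hcard
  have hsub : (S.image fun i => ⌊f i / w⌋) ⊆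
      𝒰.biUnion fun U => (S.filter fun i => f i ∈ U).image fun i => ⌊f i / w⌋ := by
    simp only [Finset.subset_iff, Finset.forall_mem_image]
    intro i hi
    obtain ⟨U, hU, hiU⟩ := mem_iUnion₂.1 (hcov ⟨hf i hi, hS i hi i₀ hi₀⟩)
    exact Finset.mem_biUnion.2
      ⟨U, hU, Finset.mem_image_of_mem _ (Finset.mem_filter.2 ⟨hi, hiU⟩)⟩
  have hcell : ∀ U ∈ 𝒰, ((S.filter fun i => f i ∈ U).image fun i => ⌊f i / w⌋).card ≤ 3 := by
    intro U hU
    have := card_image_floor_div_le (S.filter fun i => f i ∈ U) f hw hw.le fun i hi j hj =>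
      dist_le_of_ediam_le hw.le (hdiam U hU) (Finset.mem_filter.1 hi).2 (Finset.mem_filter.1 hj).2
    rw [div_self hw.ne', show (1 : ℝ) + 2 = (3 : ℕ) by norm_num] at this
    exact_mod_cast this
  calc ((S.image fun i => ⌊f i / w⌋).card : ℝ) ≤ 𝒰.card * 3 := by
        exact_mod_cast (Finset.card_le_card hsub).trans
          (Finset.card_biUnion_le_card_mul _ _ _ hcell)
    _ ≤ 3 * C * q ^ α := by linarith

theorem assouadHomogeneous_real (E : Set ℝ) : AssouadHomogeneous E 6 1 := by
  refine .of_card_separated_le fun x _ r R hr hrR S hS hsep => ?_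
  have hr2 : 0 < r / 2 := by positivity
  have hinj : Set.InjOn (fun y : ℝ => ⌊y / (r / 2)⌋) S := fun y hy z hz hyz =>
    by_contra fun hne => (hsep hy hz hne).not_gt (abs_sub_lt_of_floor_div_eq hr2 hyz)
  have hcard := card_image_floor_div_le S id hr2 (L := 2 * R) (by linarith) fun y hy z hz => by
    have := dist_triangle_right y z x
    rw [id, id, ← Real.dist_eq]
    linarith [mem_closedBall.1 (hS hy).2, mem_closedBall.1 (hS hz).2]
  have hq : 1 < R / r := by rwa [one_lt_div hr]
  have hqr : 2 * R / (r / 2) = 4 * (R / r) := by ring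
  simp only [id, Finset.card_image_of_injOn hinj] at hcard
  rw [Real.rpow_one]
  linarith

section GridCell

variable {ι : Type*}

/-- The index of the half-open cube of side `L`, with corners on the lattice `L ℤ^ι`, that
contains `x`. -/
def gridCell (L : ℝ) (x : EuclideanSpace ℝ ι) : ι → ℤ := fun i => ⌊x i / L⌋

theorem abs_coord_sub_lt_of_gridCell_eq {L : ℝ} (hL : 0 < L) {x y : EuclideanSpace ℝ ι}
    (h : gridCell L x = gridCell L y) (i : ι) : |x i - y i| < L :=
  abs_sub_lt_of_floor_div_eq hL (congrFun h i)

variable [Fintype ι]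

theorem abs_coord_sub_le_dist (x y : EuclideanSpace ℝ ι) (i : ι) : |x i - y i| ≤ dist x y := by
  rw [dist_eq_norm]
  exact PiLp.norm_apply_le (x - y) i

theorem dist_le_of_gridCell_eq {L : ℝ} (hL : 0 < L) {x y : EuclideanSpace ℝ ι}
    (h : gridCell L x = gridCell L y) : dist x y ≤ Fintype.card ι * L := by
  rw [EuclideanSpace.dist_eq]
  refine Real.sqrt_le_iff.2 ⟨by positivity, ?_⟩
  have hn : (Fintype.card ι : ℝ) ≤ (Fintype.card ι : ℝ) ^ 2 := by
    exact_mod_cast Nat.le_self_pow two_ne_zero _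
  calc ∑ i, dist (x i) (y i) ^ 2 ≤ ∑ _i : ι, L ^ 2 := by
        gcongr with i
        exact (abs_coord_sub_lt_of_gridCell_eq hL h i).le
    _ = Fintype.card ι * L ^ 2 := by simp
    _ ≤ (Fintype.card ι * L) ^ 2 := by rw [mul_pow]; gcongr

theorem card_image_gridCell_le {w L : ℝ} (hw : 0 < w) (hL : 0 ≤ L)
    (S : Finset (EuclideanSpace ℝ ι)) (hS : ∀ x ∈ S, ∀ y ∈ S, ∀ i, |x i - y i| ≤ L) :
    ((S.image (gridCell w)).card : ℝ) ≤ (L / w + 2) ^ Fintype.card ι := by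
  classical
  have hsub : S.image (gridCell w) ⊆ Fintype.piFinset fun i => S.image fun x => ⌊x i / w⌋ := by
    simp only [Finset.subset_iff, Finset.forall_mem_image, Fintype.mem_piFinset]
    exact fun x hx i => Finset.mem_image_of_mem (fun x : EuclideanSpace ℝ ι => ⌊x i / w⌋) hx
  calc ((S.image (gridCell w)).card : ℝ) ≤ ∏ i, ((S.image fun x => ⌊x i / w⌋).card : ℝ) := by
        exact_mod_cast (Finset.card_le_card hsub).trans_eq (Fintype.card_piFinset _)
    _ ≤ ∏ _i : ι, (L / w + 2) := by
        gcongr with i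
        exact card_image_floor_div_le S (fun x => x i) hw hL fun x hx y hy => hS x hx y hy i
    _ = _ := by simp

theorem card_le_of_pairwise_lt_dist {w L : ℝ} (hw : 0 < w) (hL : 0 ≤ L)
    {S : Finset (EuclideanSpace ℝ ι)} (hS : ∀ x ∈ S, ∀ y ∈ S, ∀ i, |x i - y i| ≤ L)
    (hsep : (S : Set (EuclideanSpace ℝ ι)).Pairwise fun x y => Fintype.card ι * w < dist x y) :
    (S.card : ℝ) ≤ (L / w + 2) ^ Fintype.card ι := by
  have hinj : Set.InjOn (gridCell w) S := fun x hx y hy hxy =>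
    by_contra fun hne => (hsep hx hy hne).not_ge (dist_le_of_gridCell_eq hw hxy)
  simpa [Finset.card_image_of_injOn hinj] using card_image_gridCell_le hw hL S hS

end GridCell

theorem exists_card_le_mul_card_fiber {ι κ : Type*} [DecidableEq κ] {S : Finset ι}
    (hS : S.Nonempty) (k : ι → κ) :
    ∃ a ∈ S.image k, S.card ≤ (S.image k).card * (S.filter fun i => k i = a).card := by
  obtain ⟨a, ha, hmax⟩ := (S.image k).exists_max_image
    (fun a => (S.filter fun i => k i = a).card) (hS.image k)
  refine ⟨a, ha, ?_⟩
  rw [Finset.card_eq_sum_card_image k S, ← smul_eq_mul]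
  exact Finset.sum_le_card_nsmul _ _ _ hmax

end Grid

section ApproxAP

/-- `D` contains an approximate arithmetic progression with `M` steps, each step differing from a
common nonzero increment by at most half of it. -/
def HasApproxAP (D : Set ℝ) (M : ℕ) : Prop :=
  ∃ Δ ≠ 0, ∃ u : ℕ → ℝ, (∀ i ≤ M, u i ∈ D) ∧ ∀ i < M, |u (i + 1) - u i - Δ| ≤ |Δ| / 2

theorem HasApproxAP.mono {D D' : Set ℝ} {M : ℕ} (h : HasApproxAP D M) (hD : D ⊆ D') :
    HasApproxAP D' M :=
  let ⟨Δ, hΔ, u, hu, hstep⟩ := h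
  ⟨Δ, hΔ, u, fun i hi => hD (hu i hi), hstep⟩

theorem abs_sub_sub_mul_le_of_forall_step {u : ℕ → ℝ} {Δ ε : ℝ} {i j : ℕ} (hij : i ≤ j)
    (h : ∀ k < j, |u (k + 1) - u k - Δ| ≤ ε) :
    |u j - u i - (j - i) * Δ| ≤ (j - i) * ε := by
  induction j, hij using Nat.le_induction with
  | base => simp
  | succ j _ ih =>
    have hsplit : u (j + 1) - u i - ((j + 1 : ℕ) - i) * Δ =
        (u j - u i - (j - i) * Δ) + (u (j + 1) - u j - Δ) := by push_cast; ring
    calc _ ≤ |u j - u i - (j - i) * Δ| + |u (j + 1) - u j - Δ| := hsplit ▸ abs_add_le _ _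
      _ ≤ (j - i) * ε + ε := add_le_add (ih fun k hk => h k (by omega)) (h j (by omega))
      _ = _ := by push_cast; ring

theorem abs_sub_mem_Icc_of_forall_step {u : ℕ → ℝ} {Δ : ℝ} {i j : ℕ} (hij : i ≤ j)
    (h : ∀ k < j, |u (k + 1) - u k - Δ| ≤ |Δ| / 2) :
    |u j - u i| ∈ Icc ((j - i) * (|Δ| / 2)) ((j - i) * (3 / 2 * |Δ|)) := by
  have hdev := abs_sub_sub_mul_le_of_forall_step hij h
  have hij' : (i : ℝ) ≤ j := by exact_mod_cast hij
  have habs : |(j - i) * Δ| = (j - i) * |Δ| := by rw [abs_mul, abs_of_nonneg (sub_nonneg.2 hij')]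
  have hlo := abs_sub_abs_le_abs_sub ((j - i) * Δ) (u j - u i)
  have hhi := abs_sub_abs_le_abs_sub (u j - u i) ((j - i) * Δ)
  rw [abs_sub_comm ((j - i) * Δ)] at hlo
  constructor <;> linarith

theorem HasApproxAP.le_of_homogeneous {D : Set ℝ} {C α : ℝ} (h : AssouadHomogeneous D C α) {M : ℕ}
    (hM : 1 ≤ M) (hD : HasApproxAP D M) : (M : ℝ) ≤ C * (5 * M) ^ α := by
  obtain ⟨Δ, hΔ, u, hu, hstep⟩ := hD
  have hM' : (1 : ℝ) ≤ M := by exact_mod_cast hM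
  have hΔ' : 0 < |Δ| := abs_pos.2 hΔ
  have hgap : ∀ i j, i ≤ j → j ≤ M →
      dist (u j) (u i) ∈ Icc ((j - i) * (|Δ| / 2)) ((j - i) * (3 / 2 * |Δ|)) :=
    fun i j hij hj => abs_sub_mem_Icc_of_forall_step hij fun k hk => hstep k (by omega)
  have hsep : ∀ i ≤ M, ∀ j ≤ M, i ≠ j → 3 / 10 * |Δ| < dist (u i) (u j) := by
    intro i hi j hj hne
    wlog hij : i < j generalizing i j
    · rw [dist_comm]; exact this j hj i hi hne.symm (by omega)
    have hij' : (i : ℝ) + 1 ≤ j := by exact_mod_cast hij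
    rw [dist_comm]
    nlinarith [(hgap i j hij.le hj).1]
  have hnear : ∀ i ≤ M, dist (u i) (u 0) ≤ 3 / 2 * M * |Δ| := by
    intro i hi
    have hi' : (i : ℝ) ≤ M := by exact_mod_cast hi
    have := (hgap 0 i i.zero_le hi).2
    rw [Nat.cast_zero, sub_zero] at this
    nlinarith
  have hinj : Set.InjOn u (Finset.Iic M) := fun i hi j hj hij => by
    by_contra hne
    have := hsep i (Finset.mem_Iic.1 hi) j (Finset.mem_Iic.1 hj) hne
    rw [hij, dist_self] at this
    linarith
  have hcard := h.card_le_of_separated (hu 0 M.zero_le) (r := 3 / 10 * |Δ|) (R := 3 / 2 * M * |Δ|)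
    (S := (Finset.Iic M).image u) (by positivity) (by nlinarith)
    (by simpa [Set.subset_def] using fun i hi => ⟨hu i hi, hnear i hi⟩)
    (by
      rw [Finset.coe_image, Finset.coe_Iic]
      rintro _ ⟨i, hi, rfl⟩ _ ⟨j, hj, rfl⟩ hne
      exact hsep i hi j hj fun hij => hne (congrArg u hij))
  rw [Finset.card_image_of_injOn hinj, Nat.card_Iic] at hcard
  have hratio : 3 / 2 * M * |Δ| / (3 / 10 * |Δ|) = 5 * M := by field_simp; norm_num
  rw [hratio] at hcard
  push_cast at hcard
  linarith

theorem AssouadHomogeneous.exists_not_hasApproxAP {D : Set ℝ} {C α : ℝ}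
    (h : AssouadHomogeneous D C α) (hα : α < 1) : ∃ M : ℕ, ¬ HasApproxAP D M := by
  have hlim : Tendsto (fun M : ℕ => (M : ℝ) ^ (1 - α)) atTop atTop :=
    (tendsto_rpow_atTop (sub_pos.2 hα)).comp tendsto_natCast_atTop_atTop
  obtain ⟨M, hM, hM1⟩ :=
    ((hlim.eventually_gt_atTop (C * 5 ^ α)).and (eventually_ge_atTop 1)).exists
  refine ⟨M, fun hD => (hD.le_of_homogeneous h hM1).not_gt ?_⟩
  have hM0 : (0 : ℝ) < M := by exact_mod_cast hM1
  calc C * (5 * M) ^ α = C * 5 ^ α * M ^ α := by rw [Real.mul_rpow (by norm_num) hM0.le]; ring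
    _ < M ^ (1 - α) * M ^ α := by gcongr
    _ = M := by rw [← Real.rpow_add hM0]; simp

end ApproxAP

section Transversal

/-- On `s`, the difference `f' - f` is `2φ`-Lipschitz, and it varies at rate at least `φ / 2` in
the directions in which `f` varies little. -/
structure TransversalOn {X : Type*} [PseudoMetricSpace X] (s : Set X) (f f' : X → ℝ) (φ : ℝ) :
    Prop where
  sub_le : ∀ z ∈ s, ∀ z' ∈ s, |(f' z - f z) - (f' z' - f z')| ≤ 2 * φ * dist z z'
  le_sub : ∀ z ∈ s, ∀ z' ∈ s, |f z - f z'| ≤ dist z z' / 4 →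
    φ / 2 * dist z z' ≤ |(f' z - f z) - (f' z' - f z')|

theorem TransversalOn.mono {X : Type*} [PseudoMetricSpace X] {s s' : Set X} {f f' : X → ℝ} {φ : ℝ}
    (h : TransversalOn s' f f' φ) (hs : s ⊆ s') : TransversalOn s f f' φ where
  sub_le z hz z' hz' := h.sub_le z (hs hz) z' (hs hz')
  le_sub z hz z' hz' := h.le_sub z (hs hz) z' (hs hz')

variable {V : Type*} [NormedAddCommGroup V] [InnerProductSpace ℝ V]

/-- The unit vector pointing from `x` to `y`; it is `0` when `x = y`. -/
def unitDirection (x y : V) : V := (dist x y)⁻¹ • (y - x)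

theorem norm_unitDirection {x y : V} (h : 0 < dist x y) : ‖unitDirection x y‖ = 1 := by
  rw [unitDirection, norm_smul, ← dist_eq_norm', norm_inv, Real.norm_of_nonneg dist_nonneg,
    inv_mul_cancel₀ h.ne']

theorem dist_smul_unitDirection {x y : V} (h : 0 < dist x y) :
    dist x y • unitDirection x y = y - x := by
  rw [unitDirection, smul_inv_smul₀ h.ne']

theorem norm_sub_norm_eq_inner {u v : V} (h : 0 < ‖u‖ + ‖v‖) :
    ‖u‖ - ‖v‖ = inner ℝ (u - v) ((‖u‖ + ‖v‖)⁻¹ • (u + v)) := by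
  rw [inner_smul_right, inner_sub_left, inner_add_right, inner_add_right,
    real_inner_self_eq_norm_sq, real_inner_self_eq_norm_sq, real_inner_comm u v]
  field_simp
  ring

theorem norm_inv_smul_add_sub_inv_smul_le {u v p : V} {ρ : ℝ} (hpos : 0 < ‖u‖ + ‖v‖)
    (hp : ‖p‖ ≤ ‖u‖ + ‖v‖) (hp0 : 0 < ‖p‖) (hu : ‖u - p‖ ≤ ρ) (hv : ‖v - p‖ ≤ ρ) :
    ‖(‖u‖ + ‖v‖)⁻¹ • (u + v) - ‖p‖⁻¹ • p‖ ≤ 4 * ρ / ‖p‖ := by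
  set a := ‖u‖ + ‖v‖ with ha
  have hsplit : a⁻¹ • (u + v) - ‖p‖⁻¹ • p =
      a⁻¹ • (((u - p) + (v - p)) + (‖p‖⁻¹ * ((‖p‖ - ‖u‖) + (‖p‖ - ‖v‖))) • p) := by
    have hcoeff : ‖p‖⁻¹ * ((‖p‖ - ‖u‖) + (‖p‖ - ‖v‖)) = 2 - ‖p‖⁻¹ * a := by
      rw [ha]; field_simp; ring
    rw [hcoeff]
    match_scalars <;> field_simp; ring
  have hu' := (abs_norm_sub_norm_le p u).trans (norm_sub_rev p u ▸ hu)
  have hv' := (abs_norm_sub_norm_le p v).trans (norm_sub_rev p v ▸ hv)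
  have hcorr : ‖(‖p‖⁻¹ * ((‖p‖ - ‖u‖) + (‖p‖ - ‖v‖))) • p‖ ≤ 2 * ρ := by
    rw [norm_smul, norm_mul, norm_inv, norm_norm, mul_right_comm, inv_mul_cancel₀ hp0.ne', one_mul]
    exact (norm_add_le _ _).trans (by simp only [Real.norm_eq_abs]; linarith)
  calc _ = a⁻¹ * ‖((u - p) + (v - p)) + (‖p‖⁻¹ * ((‖p‖ - ‖u‖) + (‖p‖ - ‖v‖))) • p‖ := by
        rw [hsplit, norm_smul, norm_inv, Real.norm_of_nonneg hpos.le]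
    _ ≤ ‖p‖⁻¹ * (4 * ρ) := by
        gcongr
        linarith [norm_add_le ((u - p) + (v - p))
          ((‖p‖⁻¹ * ((‖p‖ - ‖u‖) + (‖p‖ - ‖v‖))) • p), norm_add_le (u - p) (v - p)]
    _ = 4 * ρ / ‖p‖ := by ring

theorem abs_dist_sub_dist_sub_inner_unitDirection_le {x y z z' : V} {ρ : ℝ} (hx : 0 < dist x y)
    (hρ : ρ ≤ dist x y / 2) (hz : dist z y ≤ ρ) (hz' : dist z' y ≤ ρ) :
    |dist z x - dist z' x - inner ℝ (z - z') (unitDirection x y)| ≤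
      4 * ρ / dist x y * dist z z' := by
  have hzx := dist_triangle x z y
  have hzx' := dist_triangle x z' y
  rw [dist_comm x z, dist_eq_norm z] at hzx
  rw [dist_comm x z', dist_eq_norm z'] at hzx'
  rw [dist_eq_norm' x] at hx hρ hzx hzx'
  have hge : ‖y - x‖ ≤ ‖z - x‖ + ‖z' - x‖ := by linarith
  rw [dist_eq_norm z x, dist_eq_norm z' x, norm_sub_norm_eq_inner (hx.trans_le hge),
    sub_sub_sub_cancel_right, ← inner_sub_right, unitDirection, dist_eq_norm' x, dist_eq_norm z z',
    mul_comm (4 * ρ / ‖y - x‖)]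
  refine (abs_real_inner_le_norm _ _).trans (mul_le_mul_of_nonneg_left ?_ (norm_nonneg _))
  exact norm_inv_smul_add_sub_inv_smul_le (hx.trans_le hge) hge hx
    (by simpa [dist_eq_norm] using hz) (by simpa [dist_eq_norm] using hz')

variable [Fact (Module.finrank ℝ V = 2)]

theorem sq_inner_sub_inner_mul_inner (h d : V) {e : V} (he : ‖e‖ = 1) :
    (inner ℝ h d - inner ℝ h e * inner ℝ e d) ^ 2 =
      (‖h‖ ^ 2 - inner ℝ h e ^ 2) * (‖d‖ ^ 2 - inner ℝ e d ^ 2) := by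
  have : FiniteDimensional ℝ V := .of_fact_finrank_eq_two
  let o : Orientation ℝ V (Fin 2) :=
    (Module.finBasisOfFinrankEq ℝ V Fact.out).orientation
  have hmix := o.inner_mul_inner_add_areaForm_mul_areaForm e h d
  have hsq := o.inner_sq_add_areaForm_sq e h
  have hsq' := o.inner_sq_add_areaForm_sq e d
  simp only [he, one_pow, one_mul] at hmix hsq hsq'
  rw [real_inner_comm e h, ← hmix, ← hsq, ← hsq']
  ring

theorem le_abs_inner_sub_of_abs_inner_le {h e e' : V} (he : ‖e‖ = 1) (he' : ‖e'‖ = 1)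
    (hφ : ‖e' - e‖ ≤ 1 / 4) (hh : |inner ℝ h e| ≤ 17 / 64 * ‖h‖) :
    7 / 8 * ‖e' - e‖ * ‖h‖ ≤ |inner ℝ h (e' - e)| := by
  set φ := ‖e' - e‖ with hφ_def
  have hφ0 : 0 ≤ φ := norm_nonneg _
  have hed : inner ℝ e (e' - e) = - φ ^ 2 / 2 := by
    have := norm_sub_sq_real e' e
    rw [he, he', ← hφ_def] at this
    rw [inner_sub_right, real_inner_self_eq_norm_sq, he, real_inner_comm]
    linarith
  have hLagrange := sq_inner_sub_inner_mul_inner h (e' - e) he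
  rw [hed, ← hφ_def] at hLagrange
  have hh' : (15 / 16 * ‖h‖) ^ 2 ≤ ‖h‖ ^ 2 - inner ℝ h e ^ 2 := by
    have := sq_le_sq' (neg_le_of_abs_le hh) (le_of_abs_le hh)
    nlinarith [norm_nonneg h]
  have hd : (31 / 32 * φ) ^ 2 ≤ φ ^ 2 - (- φ ^ 2 / 2) ^ 2 := by
    have hsq : φ ^ 2 ≤ 1 / 16 := by nlinarith
    nlinarith [mul_nonneg (sq_nonneg φ) (sub_nonneg.2 hsq)]
  have hmain : 15 / 16 * ‖h‖ * (31 / 32 * φ) ≤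
      |inner ℝ h (e' - e) - inner ℝ h e * (- φ ^ 2 / 2)| := by
    refine (le_abs_self _).trans (sq_le_sq.1 ?_)
    rw [hLagrange, mul_pow]
    exact mul_le_mul hh' hd (by positivity) ((sq_nonneg _).trans hh')
  have hcorr : |inner ℝ h e * (- φ ^ 2 / 2)| ≤ 17 / 64 * ‖h‖ * (φ / 8) := by
    rw [abs_mul, neg_div, abs_neg, abs_of_nonneg (by positivity : 0 ≤ φ ^ 2 / 2)]
    have : φ ^ 2 / 2 ≤ φ / 8 := by nlinarith
    gcongr
  nlinarith [abs_sub (inner ℝ h (e' - e)) (inner ℝ h e * (- φ ^ 2 / 2)),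
    mul_nonneg (norm_nonneg h) hφ0]

/-- Near a common point `y`, the gradients of the two distance functions stay within `φ / 16` of
the unit vectors at `y`, whose difference is nearly orthogonal to each of them. -/
theorem transversalOn_dist {x x' y : V} {ρ φ : ℝ} (hρ : 0 < ρ)
    (hφ : ‖unitDirection x' y - unitDirection x y‖ = φ) (hφ4 : φ ≤ 1 / 4)
    (hx : ρ ≤ φ / 64 * dist x y) (hx' : ρ ≤ φ / 64 * dist x' y) :
    TransversalOn (closedBall y ρ) (dist · x) (dist · x') φ := by
  have hφ0 : 0 < φ := lt_of_not_ge fun h => hρ.not_ge <|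
    hx.trans (mul_nonpos_of_nonpos_of_nonneg (by linarith) dist_nonneg)
  have hsecant : ∀ p : V, ρ ≤ φ / 64 * dist p y → 0 < dist p y ∧
      ∀ z ∈ closedBall y ρ, ∀ z' ∈ closedBall y ρ,
        |dist z p - dist z' p - inner ℝ (z - z') (unitDirection p y)| ≤ φ / 16 * dist z z' := by
    intro p hp
    have hp0 : 0 < dist p y := pos_of_mul_pos_right (hρ.trans_le hp) (by positivity)
    refine ⟨hp0, fun z hz z' hz' => ?_⟩
    refine (abs_dist_sub_dist_sub_inner_unitDirection_le hp0 (by nlinarith) hz hz').trans ?_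
    exact mul_le_mul_of_nonneg_right ((div_le_iff₀ hp0).2 (by linarith)) dist_nonneg
  obtain ⟨hx0, hsec⟩ := hsecant x hx
  obtain ⟨hx0', hsec'⟩ := hsecant x' hx'
  set e := unitDirection x y
  set e' := unitDirection x' y
  have hdiff : ∀ z ∈ closedBall y ρ, ∀ z' ∈ closedBall y ρ,
      |(dist z x' - dist z x) - (dist z' x' - dist z' x) - inner ℝ (z - z') (e' - e)| ≤
        φ / 8 * dist z z' := by
    intro z hz z' hz'
    rw [inner_sub_right, sub_sub_sub_comm (dist z x'),
      sub_sub_sub_comm (dist z x' - dist z' x')]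
    exact (abs_sub _ _).trans (by linarith [hsec z hz z' hz', hsec' z hz z' hz'])
  refine ⟨fun z hz z' hz' => ?_, fun z hz z' hz' hf => ?_⟩
  · have hmain := abs_real_inner_le_norm (z - z') (e' - e)
    rw [hφ, ← dist_eq_norm] at hmain
    nlinarith [hdiff z hz z' hz', abs_sub_abs_le_abs_sub
      (dist z x' - dist z x - (dist z' x' - dist z' x)) (inner ℝ (z - z') (e' - e)),
      mul_nonneg hφ0.le (dist_nonneg (x := z) (y := z'))]
  · have horth : |inner ℝ (z - z') e| ≤ 17 / 64 * ‖z - z'‖ := by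
      have := abs_sub_abs_le_abs_sub (inner ℝ (z - z') e) (dist z x - dist z' x)
      rw [abs_sub_comm (inner ℝ _ _)] at this
      rw [← dist_eq_norm]
      nlinarith [hsec z hz z' hz', dist_nonneg (x := z) (y := z')]
    have hmain := le_abs_inner_sub_of_abs_inner_le (norm_unitDirection hx0)
      (norm_unitDirection hx0') (hφ.trans_le hφ4) horth
    rw [hφ, ← dist_eq_norm] at hmain
    have := abs_sub_abs_le_abs_sub (inner ℝ (z - z') (e' - e))
      (dist z x' - dist z x - (dist z' x' - dist z' x))
    rw [abs_sub_comm (inner ℝ _ _)] at this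
    nlinarith [hdiff z hz z' hz', mul_nonneg hφ0.le (dist_nonneg (x := z) (y := z'))]

end Transversal

section Window

variable {X : Type*} [PseudoMetricSpace X]

/-- Every value of `f` attained on `P` at distance at most `r'` from `x`, and within `w` of `f x`,
is attained up to `ε` already at distance at most `r` from `x`. -/
def WindowStable (P : Set X) (f : X → ℝ) (r r' w ε : ℝ) (x : X) : Prop :=
  ∀ z ∈ P, dist z x ≤ r' → |f z - f x| ≤ w → ∃ z' ∈ P, dist z' x ≤ r ∧ |f z' - f z| ≤ ε

theorem exists_chain {Y : Type*} {p : ℕ → Y → Prop} {rel : Y → Y → Prop} {M : ℕ} {y : Y}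
    (h0 : p 0 y) (hstep : ∀ i < M, ∀ z, p i z → ∃ z', p (i + 1) z' ∧ rel z z') :
    ∃ u : ℕ → Y, (∀ i ≤ M, p i (u i)) ∧ ∀ i < M, rel (u i) (u (i + 1)) := by
  have : Nonempty Y := ⟨y⟩
  choose! next hnext hrel using hstep
  let u : ℕ → Y := fun n => Nat.rec y next n
  have hu : ∀ i ≤ M, p i (u i) := fun i => by
    induction i with
    | zero => exact fun _ => h0
    | succ i ih => exact fun hi => hnext i hi _ (ih (Nat.le_of_succ_le hi))
  exact ⟨u, hu, fun i hi => hrel i hi _ (hu i hi.le)⟩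

/-- Passing from a point near `x` to one near `x'` with almost the same value of `f`, and back with
almost the same value of `f'`, changes `f` by almost `Δ = (f' x' - f x') - (f' x - f x)`. -/
theorem WindowStable.exists_shift {P : Set X} {f f' : X → ℝ} {φ r r' w ε : ℝ}
    (hT : TransversalOn P f f' φ) (hφ : 0 ≤ φ) (hφr : 2 * φ * r ≤ ε) {x x' : X} (hx : x ∈ P)
    (hx' : x' ∈ P) (hdist : dist x x' ≤ r' - r) (hs' : WindowStable P f r r' w ε x')
    (hs : WindowStable P f' r r' w ε x) (hε : 0 ≤ ε) {z : X} (hz : z ∈ P) (hzx : dist z x ≤ r)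
    (hw : |f z - f x| + |f x - f x'| + 2 * ε + |(f' x' - f x') - (f' x - f x)| ≤ w) :
    ∃ z' ∈ P, dist z' x ≤ r ∧ |f z' - f z - ((f' x' - f x') - (f' x - f x))| ≤ 4 * ε := by
  have hnear : ∀ a ∈ P, ∀ b ∈ P, dist a b ≤ r → |(f' a - f a) - (f' b - f b)| ≤ ε :=
    fun a ha b hb hab => (hT.sub_le a ha b hb).trans <|
      (mul_le_mul_of_nonneg_left hab (by positivity)).trans hφr
  obtain ⟨z₁, hz₁, hz₁x', hfz₁⟩ := hs' z hz ((dist_triangle z x x').trans (by linarith)) <| by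
    have := abs_sub_le (f z) (f x) (f x')
    have := abs_nonneg ((f' x' - f x') - (f' x - f x))
    linarith
  have hg₁ := hnear z₁ hz₁ x' hx' hz₁x'
  obtain ⟨z₂, hz₂, hz₂x, hfz₂⟩ := hs z₁ hz₁
    ((dist_triangle_right z₁ x x').trans (by linarith)) <| by
    have hsplit : f' z₁ - f' x = (f z - f x) + (f z₁ - f z) +
      ((f' z₁ - f z₁) - (f' x' - f x')) + ((f' x' - f x') - (f' x - f x)) := by ring
    have := abs_nonneg (f x - f x')
    rw [hsplit]
    refine (abs_add_le _ _).trans ?_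
    linarith [abs_add_three (f z - f x) (f z₁ - f z) ((f' z₁ - f z₁) - (f' x' - f x'))]
  refine ⟨z₂, hz₂, hz₂x, ?_⟩
  have hg₂ := hnear z₂ hz₂ x hx hz₂x
  rw [abs_le] at *
  constructor <;> linarith

theorem hasApproxAP_image_of_windowStable {P : Set X} {f f' : X → ℝ} {φ r r' ρ ε : ℝ} {M : ℕ}
    (hT : TransversalOn P f f' φ) (hφ : 0 ≤ φ) (hr : 0 ≤ r) (hε : 0 < ε) (hφr : 2 * φ * r ≤ ε)
    {x x' : X} (hx : x ∈ P) (hx' : x' ∈ P) (hdist : dist x x' ≤ r' - r) (hf : |f x - f x'| ≤ ρ)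
    (hΔ : 8 * ε ≤ |(f' x' - f x') - (f' x - f x)|)
    (hΔ' : |(f' x' - f x') - (f' x - f x)| ≤ 4 * ρ)
    (hs' : WindowStable P f r r' ((6 * M + 10) * ρ) ε x')
    (hs : WindowStable P f' r r' ((6 * M + 10) * ρ) ε x) : HasApproxAP (f '' P) M := by
  set Δ := (f' x' - f x') - (f' x - f x)
  obtain ⟨u, hu, hstep⟩ := exists_chain (M := M) (y := x)
    (p := fun i z => z ∈ P ∧ dist z x ≤ r ∧ |f z - f x| ≤ i * (6 * ρ))
    (rel := fun z z' => |f z' - f z - Δ| ≤ |Δ| / 2) ⟨hx, by simpa, by simp⟩ <| by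
    rintro i hi z ⟨hz, hzx, hfz⟩
    have hi' : (i : ℝ) + 1 ≤ M := by exact_mod_cast hi
    obtain ⟨z', hz', hz'x, hshift⟩ :=
      hs'.exists_shift hT hφ hφr hx hx' hdist hs hε.le hz hzx (by nlinarith)
    refine ⟨z', ⟨hz', hz'x, ?_⟩, hshift.trans (by linarith)⟩
    have hsplit : f z' - f x = (f z - f x) + (f z' - f z - Δ) + Δ := by ring
    rw [hsplit]
    push_cast
    linarith [abs_add_three (f z - f x) (f z' - f z - Δ) Δ]
  exact ⟨Δ, abs_pos.1 (by linarith), fun i => f (u i),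
    fun i hi => mem_image_of_mem f (hu i hi).1, hstep⟩

theorem dist_le_of_windowStable {P : Set X} {f f' : X → ℝ} {φ r r' ρ q : ℝ} {M : ℕ}
    (hAP : ¬ HasApproxAP (f '' P) M) (hT : TransversalOn P f f' φ) (hφ : 0 < φ) (hφ1 : φ ≤ 1)
    (hr : 0 ≤ r) (hρ : 0 < ρ) (hq : 1 ≤ q) (hφr : 2 * φ * r ≤ ρ / (16 * q))
    (hr' : 2 * (ρ / φ) ≤ r' - r) {x x' : X} (hx : x ∈ P) (hx' : x' ∈ P)
    (hdist : dist x x' ≤ 2 * (ρ / φ)) (hf : |f x - f x'| ≤ ρ / (4 * q))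
    (hs' : WindowStable P f r r' ((6 * M + 10) * ρ) (ρ / (16 * q)) x')
    (hs : WindowStable P f' r r' ((6 * M + 10) * ρ) (ρ / (16 * q)) x) :
    dist x x' ≤ ρ / φ / q := by
  by_contra! hfar
  have hq0 : 0 < q := by linarith
  have hfar' : ρ / q ≤ φ * dist x x' := by
    rw [div_right_comm, div_lt_iff₀ hφ] at hfar
    linarith
  have hε : 16 * (ρ / (16 * q)) = ρ / q := by field_simp
  have hf' : |f x - f x'| ≤ dist x x' / 4 := by
    refine hf.trans ?_
    rw [mul_comm 4, ← div_div]
    have := mul_le_of_le_one_left (dist_nonneg (x := x) (y := x')) hφ1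
    linarith
  have hΔ := hT.le_sub x hx x' hx' hf'
  have hΔ' := hT.sub_le x hx x' hx'
  have hφd : φ * dist x x' ≤ 2 * ρ := by
    calc φ * dist x x' ≤ φ * (2 * (ρ / φ)) := by gcongr
      _ = 2 * ρ := by field_simp
  rw [abs_sub_comm] at hΔ hΔ'
  refine hAP (hasApproxAP_image_of_windowStable hT hφ.le hr (by positivity) hφr hx hx'
    (hdist.trans hr') (hf.trans (div_le_self hρ.le (by linarith))) ?_ ?_ hs' hs) <;> linarith

open Classical in
/-- Witnesses of instability for different windows have `ε`-separated values of `f`, all of them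
within `w` of `f x`. -/
theorem card_filter_not_windowStable_le (P : Set X) (f : X → ℝ) {r : ℕ → ℝ} (hr : Monotone r)
    {w ε : ℝ} (hw : 0 ≤ w) (hε : 0 < ε) (x : X) (K : ℕ) :
    (((Finset.range K).filter fun k => ¬ WindowStable P f (r k) (r (k + 1)) w ε x).card : ℝ) ≤
      2 * w / ε + 2 := by
  set S := (Finset.range K).filter fun k => ¬ WindowStable P f (r k) (r (k + 1)) w ε x
  have hwit : ∀ k ∈ S, ∃ z ∈ P, dist z x ≤ r (k + 1) ∧ |f z - f x| ≤ w ∧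
      ∀ z' ∈ P, dist z' x ≤ r k → ε < |f z' - f z| := fun k hk => by
    simpa [WindowStable] using (Finset.mem_filter.1 hk).2
  have : Nonempty X := ⟨x⟩
  choose! z hzP hzr hzw hzε using hwit
  have hinj : Set.InjOn (fun k => ⌊f (z k) / ε⌋) S := by
    intro k hk k' hk' heq
    by_contra hne
    wlog hlt : k < k' generalizing k k'
    · exact this hk' hk heq.symm (Ne.symm hne) (by omega)
    exact (hzε k' hk' (z k) (hzP k hk) ((hzr k hk).trans (hr hlt))).not_gt
      (abs_sub_lt_of_floor_div_eq hε heq)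
  have hcard := card_image_floor_div_le S (fun k => f (z k)) hε (L := 2 * w) (by positivity)
    fun k hk k' hk' => (abs_sub_le _ (f x) _).trans <| by
      linarith [hzw k hk, hzw k' hk', abs_sub_comm (f x) (f (z k'))]
  rwa [Finset.card_image_of_injOn hinj] at hcard

open Classical in
/-- The number of pairs `(x, l)`, with `x ∈ P` and `l < n`, for which `f` is unstable at `x` and
scale `ρ l`; the parameters `H`, `H'`, `W`, `η` of the window are relative to the scale. -/
def unstableCount (P : Finset X) (f : X → ℝ) (H H' W η : ℝ) (ρ : ℕ → ℝ) (n : ℕ) : ℕ :=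
  ∑ x ∈ P, ((Finset.range n).filter fun l =>
    ¬ WindowStable P f (H * ρ l) (H' * ρ l) (W * ρ l) (η * ρ l) x).card

theorem exists_unstableCount_le (P : Finset X) (f : X → ℝ) {H : ℕ → ℝ} (hH : Monotone H)
    {W η δ : ℝ} {ρ : ℕ → ℝ} (hW : 0 ≤ W) (hη : 0 < η) (hρ : ∀ l, 0 < ρ l) {K : ℕ} (hK : K ≠ 0)
    (hδ : 2 * W / η + 2 ≤ K * δ) (n : ℕ) :
    ∃ k < K, (unstableCount P f (H k) (H (k + 1)) W η ρ n : ℝ) ≤ δ * n * P.card := by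
  classical
  have hpoint : ∀ x l, (((Finset.range K).filter fun k => ¬ WindowStable P f (H k * ρ l)
      (H (k + 1) * ρ l) (W * ρ l) (η * ρ l) x).card : ℝ) ≤ K * δ := fun x l => by
    have hρl := hρ l
    refine (card_filter_not_windowStable_le P f (hH.mul_const hρl.le)
      (mul_nonneg hW hρl.le) (mul_pos hη hρl) x K).trans (le_of_eq_of_le ?_ hδ)
    rw [← mul_assoc, mul_div_mul_right _ _ hρl.ne']
  have hswap : ∑ k ∈ Finset.range K, unstableCount P f (H k) (H (k + 1)) W η ρ n =
      ∑ x ∈ P, ∑ l ∈ Finset.range n, ((Finset.range K).filter fun k => ¬ WindowStable P f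
        (H k * ρ l) (H (k + 1) * ρ l) (W * ρ l) (η * ρ l) x).card := by
    simp only [unstableCount, Finset.card_filter]
    rw [Finset.sum_comm]
    exact Finset.sum_congr rfl fun x _ => Finset.sum_comm
  obtain ⟨k, hk, hle⟩ := Finset.exists_le_of_sum_le (s := Finset.range K)
    (f := fun k => (unstableCount P f (H k) (H (k + 1)) W η ρ n : ℝ))
    (g := fun _ => δ * n * P.card) (by simpa using hK) <| by
    rw [← Nat.cast_sum, hswap]
    push_cast
    calc ∑ x ∈ P, ∑ l ∈ Finset.range n, (((Finset.range K).filter fun k => ¬ WindowStable P f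
          (H k * ρ l) (H (k + 1) * ρ l) (W * ρ l) (η * ρ l) x).card : ℝ)
        ≤ ∑ _x ∈ P, ∑ _l ∈ Finset.range n, K * δ := by gcongr with x _ l _; exact hpoint x l
      _ = ∑ _k ∈ Finset.range K, δ * n * P.card := by
        simp only [Finset.sum_const, Finset.card_range, nsmul_eq_mul]
        ring
  exact ⟨k, Finset.mem_range.1 hk, hle⟩

end Window

section Branching

variable {X K : Type*} [DecidableEq K]

/-- A weighted Kraft inequality: if at every node the weights of the outgoing edges, which depend
only on a type, sum to at most `1`, then so do the products of the weights along the branches. -/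
theorem sum_prod_weight_le {T : Type*} [Fintype T] [DecidableEq T] (P : Finset X)
    (key : ℕ → X → K) (type : ℕ → X → T) {c : T → ℝ} (hc : ∀ t, 0 ≤ c t) {n : ℕ} {V : ℝ}
    (hV : 0 ≤ V)
    (hnode : ∀ l < n, ∀ k, ∑ t, c t *
      ((P.filter fun x => key l x = k ∧ type l x = t).image (key (l + 1))).card ≤ 1)
    (hlast : ∀ k, ((P.filter fun x => key n x = k).card : ℝ) ≤ V) (k : K) :
    ∑ x ∈ P.filter (fun x => key 0 x = k), ∏ i ∈ Finset.range n, c (type i x) ≤ V := by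
  rw [Finset.range_eq_Ico]
  revert k
  refine Nat.decreasingInduction' (P := fun l => ∀ k, ∑ x ∈ P.filter (fun x => key l x = k),
    ∏ i ∈ Finset.Ico l n, c (type i x) ≤ V) (fun l hl _ ih k => ?_) n.zero_le (by simpa)
  have htype : ∀ t, ∑ x ∈ P.filter (fun x => key l x = k ∧ type l x = t),
      ∏ i ∈ Finset.Ico (l + 1) n, c (type i x) ≤
        ((P.filter fun x => key l x = k ∧ type l x = t).image (key (l + 1))).card * V := fun t => by
    rw [← Finset.sum_fiberwise_of_maps_to fun x hx => Finset.mem_image_of_mem (key (l + 1)) hx,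
      ← nsmul_eq_mul]
    refine Finset.sum_le_card_nsmul _ _ _ fun k' _ => le_trans ?_ (ih k')
    refine Finset.sum_le_sum_of_subset_of_nonneg ?_ fun _ _ _ => Finset.prod_nonneg fun _ _ => hc _
    exact Finset.filter_subset_filter _ (Finset.filter_subset _ _)
  calc ∑ x ∈ P.filter (fun x => key l x = k), ∏ i ∈ Finset.Ico l n, c (type i x)
      = ∑ t, c t * ∑ x ∈ P.filter (fun x => key l x = k ∧ type l x = t),
          ∏ i ∈ Finset.Ico (l + 1) n, c (type i x) := by
        rw [← Finset.sum_fiberwise _ (type l)]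
        refine Finset.sum_congr rfl fun t _ => ?_
        rw [Finset.filter_filter, Finset.mul_sum]
        refine Finset.sum_congr rfl fun x hx => ?_
        rw [Finset.prod_eq_prod_Ico_succ_bot hl, (Finset.mem_filter.1 hx).2.2]
    _ ≤ ∑ t, c t * (((P.filter fun x => key l x = k ∧ type l x = t).image
          (key (l + 1))).card * V) := by
        gcongr with t
        exacts [hc t, htype t]
    _ ≤ V := by
        simp only [← mul_assoc, ← Finset.sum_mul]
        exact mul_le_of_le_one_left hV (hnode l hl k)

theorem card_mul_rpow_neg_le_sum {ι : Type*} (S : Finset ι) {B θ : ℝ} (hB : 1 ≤ B) (b : ι → ℝ)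
    (hb : ∑ i ∈ S, b i ≤ θ * S.card) : S.card * B ^ (-θ) ≤ ∑ i ∈ S, B ^ (-b i) := by
  rcases S.eq_empty_or_nonempty with rfl | hS
  · simp
  have hcard : (0 : ℝ) < S.card := by exact_mod_cast hS.card_pos
  have hJensen := (convexOn_rpow_left (zero_lt_one.trans_le hB)).map_sum_le (t := S)
    (w := fun _ => (S.card : ℝ)⁻¹) (p := fun i => -b i) (fun _ _ => by positivity)
    (by simp [hcard.ne']) (fun _ _ => mem_univ _)
  simp only [smul_eq_mul, ← Finset.mul_sum, Finset.sum_neg_distrib] at hJensen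
  calc S.card * B ^ (-θ) ≤ S.card * B ^ ((S.card : ℝ)⁻¹ * -∑ i ∈ S, b i) := by
        gcongr
        rw [mul_neg, neg_le_neg_iff, inv_mul_le_iff₀ hcard]
        linarith
    _ ≤ S.card * ((S.card : ℝ)⁻¹ * ∑ i ∈ S, B ^ (-b i)) := by gcongr
    _ = _ := mul_inv_cancel_left₀ hcard.ne' _

theorem card_le_of_branching (P : Finset X) (key : ℕ → X → K) (good : ℕ → X → Prop)
    [∀ l x, Decidable (good l x)] {n : ℕ} {A B V V₀ θ : ℝ} (hA : 0 < A) (hB : 1 ≤ B) (hV : 0 ≤ V)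
    (hfirst : ((P.image (key 0)).card : ℝ) ≤ V₀)
    (hgood : ∀ l < n, ∀ k, (((P.filter fun x => key l x = k ∧ good l x).image
      (key (l + 1))).card : ℝ) ≤ A / 2)
    (hbad : ∀ l < n, ∀ k, (((P.filter fun x => key l x = k ∧ ¬ good l x).image
      (key (l + 1))).card : ℝ) ≤ A * B / 2)
    (hlast : ∀ k, ((P.filter fun x => key n x = k).card : ℝ) ≤ V)
    (hcount : ∑ x ∈ P, (((Finset.range n).filter fun l => ¬ good l x).card : ℝ) ≤
      θ * n * P.card) : (P.card : ℝ) ≤ V₀ * V * (A * B ^ θ) ^ n := by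
  have hB0 : 0 < B := zero_lt_one.trans_le hB
  let c : Bool → ℝ := fun t => cond t A⁻¹ (A * B)⁻¹
  have hc : ∀ t, 0 ≤ c t := by rintro (_ | _) <;> simp only [c, cond] <;> positivity
  set b : X → ℝ := fun x => (((Finset.range n).filter fun l => ¬ good l x).card : ℝ) with hb
  have hnode : ∀ l < n, ∀ k, ∑ t, c t *
      ((P.filter fun x => key l x = k ∧ decide (good l x) = t).image (key (l + 1))).card ≤ 1 := by
    intro l hl k
    simp only [Fintype.sum_bool, c, cond, decide_eq_true_eq, decide_eq_false_iff_not]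
    have h₁ := mul_le_mul_of_nonneg_left (hgood l hl k) (inv_nonneg.2 hA.le)
    have h₂ := mul_le_mul_of_nonneg_left (hbad l hl k) (inv_nonneg.2 (mul_pos hA hB0).le)
    rw [← mul_div_assoc, inv_mul_cancel₀ (by positivity)] at h₁ h₂
    linarith
  have hprod : ∀ x, ∏ i ∈ Finset.range n, c (decide (good i x)) = (A ^ n)⁻¹ * B ^ (-b x) := by
    intro x
    have hsplit : ∀ i, c (decide (good i x)) = A⁻¹ * if ¬ good i x then B⁻¹ else 1 := fun i => by
      by_cases hi : good i x <;> simp [c, hi, mul_comm]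
    simp_rw [hsplit]
    rw [Finset.prod_mul_distrib, Finset.prod_const, Finset.card_range, ← Finset.prod_filter,
      Finset.prod_const, hb, Real.rpow_neg hB0.le, Real.rpow_natCast, inv_pow, inv_pow]
  have hsum : (A ^ n)⁻¹ * ∑ x ∈ P, B ^ (-b x) ≤ V₀ * V := by
    rw [Finset.mul_sum, ← Finset.sum_fiberwise_of_maps_to fun x hx =>
      Finset.mem_image_of_mem (key 0) hx]
    refine (Finset.sum_le_card_nsmul _ _ V fun k _ => ?_).trans ?_
    · simp_rw [← hprod]
      exact sum_prod_weight_le P key (fun l x => decide (good l x)) hc hV hnode hlast k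
    · rw [nsmul_eq_mul]
      gcongr
  have hJensen := card_mul_rpow_neg_le_sum P hB b hcount
  calc (P.card : ℝ) = (A ^ n)⁻¹ * (P.card * B ^ (-(θ * n))) * (A * B ^ θ) ^ n := by
        rw [mul_pow, ← Real.rpow_mul_natCast hB0.le, Real.rpow_neg hB0.le]
        have := Real.rpow_pos_of_pos hB0 (θ * n)
        field_simp
    _ ≤ (A ^ n)⁻¹ * (∑ x ∈ P, B ^ (-b x)) * (A * B ^ θ) ^ n := by gcongr
    _ ≤ V₀ * V * (A * B ^ θ) ^ n := by gcongr

end Branching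

section StablePair

theorem AssouadHomogeneous.card_image_gridCell_floor_le {D : Set ℝ} {C α : ℝ}
    (h : AssouadHomogeneous D C α) (hC : 0 ≤ C) {ι : Type*} [Fintype ι]
    (S : Finset (EuclideanSpace ℝ ι)) (f : EuclideanSpace ℝ ι → ℝ) (hf : ∀ x ∈ S, f x ∈ D)
    {L L' w q : ℝ} (hL : 0 < L) (hL' : 0 ≤ L') (hw : 0 < w) (hq : 1 < q)
    (hcoord : ∀ x ∈ S, ∀ y ∈ S, ∀ i, |x i - y i| ≤ L')
    (hfS : ∀ x ∈ S, ∀ y ∈ S, |f x - f y| ≤ q * w) :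
    ((S.image fun x => (gridCell L x, ⌊f x / w⌋)).card : ℝ) ≤
      (L' / L + 2) ^ Fintype.card ι * (3 * C * q ^ α) := by
  have hsub : (S.image fun x => (gridCell L x, ⌊f x / w⌋)) ⊆
      S.image (gridCell L) ×ˢ S.image fun x => ⌊f x / w⌋ := by
    simp only [Finset.subset_iff, Finset.forall_mem_image, Finset.mem_product]
    exact fun x hx => ⟨Finset.mem_image_of_mem _ hx, Finset.mem_image_of_mem
      (fun x : EuclideanSpace ℝ ι => ⌊f x / w⌋) hx⟩
  calc ((S.image fun x => (gridCell L x, ⌊f x / w⌋)).card : ℝ)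
      ≤ (S.image (gridCell L)).card * (S.image fun x => ⌊f x / w⌋).card := by
        exact_mod_cast (Finset.card_le_card hsub).trans_eq (Finset.card_product _ _)
    _ ≤ _ := mul_le_mul (card_image_gridCell_le hL hL' S hcoord)
        (h.card_image_floor_le hC S f hf hw hq hfS) (by positivity) (by positivity)

/-- The strip of scale `ρ` containing `x`: the points of a square of side `ρ / φ` at which `f` lies
in an interval of length `ρ / (4 q)`. -/
def stripCell (f : Euc 2 → ℝ) (φ q ρ : ℝ) (x : Euc 2) : (Fin 2 → ℤ) × ℤ :=
  (gridCell (ρ / φ) x, ⌊f x / (ρ / (4 * q))⌋)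

variable {f f' : Euc 2 → ℝ} {φ q ρ : ℝ}

theorem abs_coord_sub_lt_of_stripCell_eq (hφ : 0 < φ) (hρ : 0 < ρ) {x x' : Euc 2}
    (h : stripCell f φ q ρ x = stripCell f φ q ρ x') (i : Fin 2) : |x i - x' i| < ρ / φ :=
  abs_coord_sub_lt_of_gridCell_eq (by positivity) (congrArg Prod.fst h) i

theorem dist_le_of_stripCell_eq (hφ : 0 < φ) (hρ : 0 < ρ) {x x' : Euc 2}
    (h : stripCell f φ q ρ x = stripCell f φ q ρ x') : dist x x' ≤ 2 * (ρ / φ) := by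
  simpa using dist_le_of_gridCell_eq (by positivity) (congrArg Prod.fst h)

theorem abs_sub_lt_of_stripCell_eq (hq : 0 < q) (hρ : 0 < ρ) {x x' : Euc 2}
    (h : stripCell f φ q ρ x = stripCell f φ q ρ x') : |f x - f x'| < ρ / (4 * q) :=
  abs_sub_lt_of_floor_div_eq (by positivity) (congrArg Prod.snd h)

section Branch

variable {D : Set ℝ} {C α : ℝ} (h : AssouadHomogeneous D C α) (hC : 0 ≤ C) (hφ : 0 < φ) (hρ : 0 < ρ)
  {S : Finset (Euc 2)} (hfD : ∀ x ∈ S, f x ∈ D)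
  (hcell : ∀ x ∈ S, ∀ x' ∈ S, stripCell f φ q ρ x = stripCell f φ q ρ x')
include h hC hφ hρ hfD hcell

theorem card_image_stripCell_div_le_of_coord (hq : 1 < q) {L : ℝ} (hL : 0 ≤ L)
    (hcoord : ∀ x ∈ S, ∀ x' ∈ S, ∀ i, |x i - x' i| ≤ L) :
    ((S.image (stripCell f φ q (ρ / q))).card : ℝ) ≤
      (L / (ρ / φ / q) + 2) ^ 2 * (3 * C * q ^ α) := by
  have hq0 : 0 < q := by linarith
  have := h.card_image_gridCell_floor_le hC S f hfD (L := ρ / q / φ) (w := ρ / q / (4 * q))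
    (by positivity) hL (by positivity) hq hcoord fun x hx x' hx' => by
      refine (abs_sub_lt_of_stripCell_eq hq0 hρ (hcell x hx x' hx')).le.trans_eq ?_
      field_simp
  rw [Fintype.card_fin] at this
  rwa [div_right_comm ρ φ]

theorem card_image_stripCell_div_le (hq : 2 ≤ q) :
    ((S.image (stripCell f φ q (ρ / q))).card : ℝ) ≤ 54 * C * q ^ α * q ^ 2 / 2 := by
  have := card_image_stripCell_div_le_of_coord h hC hφ hρ hfD hcell (by linarith)
    (L := ρ / φ) (by positivity)
    fun x hx x' hx' i => (abs_coord_sub_lt_of_stripCell_eq hφ hρ (hcell x hx x' hx') i).le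
  rw [div_div_cancel₀ (by positivity)] at this
  calc _ ≤ (q + 2) ^ 2 * (3 * C * q ^ α) := this
    _ ≤ 9 * q ^ 2 * (3 * C * q ^ α) := by gcongr; nlinarith
    _ = _ := by ring

theorem card_image_stripCell_div_le_of_windowStable (hq : 2 ≤ q) (hφ1 : φ ≤ 1) {P : Set (Euc 2)}
    {M : ℕ} (hAP : ¬ HasApproxAP (f '' P) M) (hSP : (S : Set (Euc 2)) ⊆ P)
    (hT : TransversalOn P f f' φ) {r r' : ℝ} (hr : 0 ≤ r) (hφr : 2 * φ * r ≤ ρ / (16 * q))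
    (hr' : 2 * (ρ / φ) ≤ r' - r)
    (hs : ∀ x ∈ S, WindowStable P f r r' ((6 * M + 10) * ρ) (ρ / (16 * q)) x)
    (hs' : ∀ x ∈ S, WindowStable P f' r r' ((6 * M + 10) * ρ) (ρ / (16 * q)) x) :
    ((S.image (stripCell f φ q (ρ / q))).card : ℝ) ≤ 54 * C * q ^ α / 2 := by
  have hq0 : 0 < q := by linarith
  have hcoord : ∀ x ∈ S, ∀ x' ∈ S, ∀ i, |x i - x' i| ≤ ρ / φ / q := fun x hx x' hx' i =>
    (abs_coord_sub_le_dist x x' i).trans <| dist_le_of_windowStable hAP hT hφ hφ1 hr hρ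
      (by linarith) hφr hr' (hSP hx) (hSP hx') (dist_le_of_stripCell_eq hφ hρ (hcell x hx x' hx'))
      (abs_sub_lt_of_stripCell_eq hq0 hρ (hcell x hx x' hx')).le (hs x' hx') (hs' x hx)
  have := card_image_stripCell_div_le_of_coord h hC hφ hρ hfD hcell (by linarith) (by positivity)
    hcoord
  rw [div_self (by positivity)] at this
  linarith

end Branch

theorem card_image_stripCell_le_of_dist_le {D : Set ℝ} {C α : ℝ} (h : AssouadHomogeneous D C α)
    (hC : 0 ≤ C) (hφ : 0 < φ) (hφ2 : φ ≤ 1 / 2) (hρ : 0 < ρ) (hq : 2 ≤ q) {P : Finset (Euc 2)}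
    (hfD : ∀ x ∈ P, f x ∈ D) (hlip : ∀ x ∈ P, ∀ x' ∈ P, |f x - f x'| ≤ dist x x')
    (hdiam : ∀ x ∈ P, ∀ x' ∈ P, dist x x' ≤ 2 * ρ) :
    ((P.image (stripCell f φ q ρ)).card : ℝ) ≤ 27 * C * (8 * q) ^ α := by
  have := h.card_image_gridCell_floor_le hC P f hfD (L := ρ / φ) (L' := 2 * ρ)
    (w := ρ / (4 * q)) (q := 8 * q) (by positivity) (by positivity) (by positivity) (by linarith)
    (fun x hx x' hx' i => (abs_coord_sub_le_dist x x' i).trans (hdiam x hx x' hx'))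
    fun x hx x' hx' => (hlip x hx x' hx').trans <| (hdiam x hx x' hx').trans_eq <| by
      field_simp; norm_num
  have hratio : 2 * ρ / (ρ / φ) = 2 * φ := by field_simp
  rw [Fintype.card_fin, hratio] at this
  calc _ ≤ (2 * φ + 2) ^ 2 * (3 * C * (8 * q) ^ α) := this
    _ ≤ 3 ^ 2 * (3 * C * (8 * q) ^ α) := by gcongr; linarith
    _ = _ := by ring

theorem card_le_of_stripCell_eq (hφ : 0 < φ) (hρ : 0 < ρ) (hq : 0 ≤ q) {δ : ℝ} (hδ : 0 < δ)
    (hρδ : ρ ≤ q * δ) {S : Finset (Euc 2)}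
    (hcell : ∀ x ∈ S, ∀ x' ∈ S, stripCell f φ q ρ x = stripCell f φ q ρ x')
    (hsep : (S : Set (Euc 2)).Pairwise fun x y => δ < dist x y) :
    (S.card : ℝ) ≤ (2 * q / φ + 2) ^ 2 := by
  have := card_le_of_pairwise_lt_dist (w := δ / 2) (L := q * δ / φ) (by positivity) (by positivity)
    (fun x hx x' hx' i => (abs_coord_sub_lt_of_stripCell_eq hφ hρ (hcell x hx x' hx') i).le.trans
      (by gcongr))
    (by simpa [mul_div_cancel₀] using hsep)
  rw [Fintype.card_fin] at this
  convert this using 3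
  field_simp

open Classical in
/-- Within a strip, points at which both functions are stable are so close to each other that they
occupy boundedly many substrips per value of `f`; only unstable points spread along the strip. -/
theorem card_le_of_unstableCount_le {D : Set ℝ} {C α : ℝ} (h : AssouadHomogeneous D C α)
    (hC : 0 < C) {M : ℕ} (hAP : ¬ HasApproxAP D M) (hq : 2 ≤ q) {P : Finset (Euc 2)}
    (hfD : ∀ x ∈ P, f x ∈ D) (hlip : ∀ x ∈ P, ∀ x' ∈ P, |f x - f x'| ≤ dist x x') (hφ : 0 < φ)
    (hφ2 : φ ≤ 1 / 2) (hT : TransversalOn (P : Set (Euc 2)) f f' φ) {R : ℝ} (hR : 0 < R)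
    (hdiam : ∀ x ∈ P, ∀ x' ∈ P, dist x x' ≤ 2 * R) {H H' : ℝ} (hH : 0 ≤ H)
    (hφH : 2 * φ * H ≤ 1 / (16 * q)) (hH' : 2 / φ ≤ H' - H) {δ : ℝ} (hδ : 0 < δ)
    (hsep : (P : Set (Euc 2)).Pairwise fun x y => δ < dist x y) {n : ℕ}
    (hn : R ≤ q ^ (n + 1) * δ) {θ : ℝ}
    (hcount : (unstableCount P f H H' (6 * M + 10) (1 / (16 * q)) (fun l => R / q ^ l) n : ℝ) +
      unstableCount P f' H H' (6 * M + 10) (1 / (16 * q)) (fun l => R / q ^ l) n ≤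
      θ * n * P.card) :
    (P.card : ℝ) ≤
      27 * C * (8 * q) ^ α * (2 * q / φ + 2) ^ 2 * (54 * C * q ^ α * (q ^ 2) ^ θ) ^ n := by
  have hq0 : 0 < q := by linarith
  have hρ : ∀ l : ℕ, 0 < R / q ^ l := fun l => by positivity
  have hρ' : ∀ l : ℕ, R / q ^ (l + 1) = R / q ^ l / q := fun l => by rw [pow_succ, div_div]
  let stable (g : Euc 2 → ℝ) (l : ℕ) (x : Euc 2) : Prop := WindowStable P g (H * (R / q ^ l))
    (H' * (R / q ^ l)) ((6 * M + 10) * (R / q ^ l)) (1 / (16 * q) * (R / q ^ l)) x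
  refine card_le_of_branching P (fun l => stripCell f φ q (R / q ^ l))
    (fun l x => stable f l x ∧ stable f' l x) (by positivity) (by nlinarith) (by positivity)
    ?_ (fun l _ k => ?_) (fun l _ k => ?_) (fun k => ?_) (le_trans ?_ hcount)
  · simpa using card_image_stripCell_le_of_dist_le h hC.le hφ hφ2 hR hq hfD hlip hdiam
  · simp only [stable, one_div_mul_eq_div, hρ']
    exact card_image_stripCell_div_le_of_windowStable h hC.le hφ (hρ l)
      (fun x hx => hfD x (Finset.mem_filter.1 hx).1)
      (fun x hx x' hx' => (Finset.mem_filter.1 hx).2.1.trans (Finset.mem_filter.1 hx').2.1.symm)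
      hq (by linarith) (mt (·.mono (image_subset_iff.2 hfD)) hAP)
      (Finset.coe_subset.2 (Finset.filter_subset _ _)) hT (mul_nonneg hH (hρ l).le)
      (by simpa only [one_div_mul_eq_div, mul_assoc] using
        mul_le_mul_of_nonneg_right hφH (hρ l).le)
      (by simpa only [sub_mul, div_mul_eq_mul_div, mul_div_assoc] using
        mul_le_mul_of_nonneg_right hH' (hρ l).le)
      (fun x hx => (Finset.mem_filter.1 hx).2.2.1) (fun x hx => (Finset.mem_filter.1 hx).2.2.2)
  · simp only [hρ']
    exact card_image_stripCell_div_le h hC.le hφ (hρ l)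
      (fun x hx => hfD x (Finset.mem_filter.1 hx).1)
      (fun x hx x' hx' => (Finset.mem_filter.1 hx).2.1.trans (Finset.mem_filter.1 hx').2.1.symm) hq
  · exact card_le_of_stripCell_eq hφ (hρ n) hq0.le hδ
      (by rw [div_le_iff₀ (by positivity)]; exact hn.trans_eq (by ring))
      (fun x hx x' hx' => (Finset.mem_filter.1 hx).2.trans (Finset.mem_filter.1 hx').2.symm)
      (hsep.mono (Finset.coe_subset.2 (Finset.filter_subset _ _)))
  · unfold unstableCount
    rw [← Nat.cast_add, ← Finset.sum_add_distrib]
    push_cast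
    gcongr with x _
    simp only [not_and_or, Finset.filter_or]
    rw [← Nat.cast_add, Nat.cast_le]
    exact Finset.card_union_le _ _

end StablePair

section Frostman

variable {Y : Type*} [PseudoMetricSpace Y]

/-- A finite set of diameter at most `2 * R` is `t`-Frostman at scale `R` if a ball of radius `ρ`
around one of its points contains at most the proportion `(ρ / R) ^ t` of the set, or only one
point. -/
structure IsFrostman (X : Finset Y) (R t : ℝ) : Prop where
  dist_le : ∀ x ∈ X, ∀ y ∈ X, dist x y ≤ 2 * R
  card_le : ∀ z ∈ X, ∀ ρ > 0, ((X.filter fun x => dist x z ≤ ρ).card : ℝ) ≤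
    max 1 ((ρ / R) ^ t * X.card)

/-- The ball is one of maximal density `#(S ∩ B(z, ρ)) / ρ ^ t`. -/
theorem exists_ball_card_le_max {S : Finset Y} {δ t : ℝ} (hδ : 0 < δ) (ht : 0 ≤ t)
    (hS : 1 < S.card) (hsep : (S : Set Y).Pairwise fun x y => δ < dist x y) :
    ∃ z₀ ∈ S, ∃ R > δ, ∀ z ∈ S, ∀ ρ > 0, ((S.filter fun x => dist x z ≤ ρ).card : ℝ) ≤
      max 1 ((ρ / R) ^ t * (S.filter fun x => dist x z₀ ≤ R).card) := by
  have hpos : ∀ p ∈ S.offDiag, δ < dist p.2 p.1 := fun p hp =>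
    let ⟨h₁, h₂, hne⟩ := Finset.mem_offDiag.1 hp
    hsep h₂ h₁ hne.symm
  obtain ⟨⟨z₀, z₁⟩, hz, hmax⟩ := S.offDiag.exists_max_image
    (fun p => ((S.filter fun x => dist x p.1 ≤ dist p.2 p.1).card : ℝ) / dist p.2 p.1 ^ t)
    (let ⟨x, hx, y, hy, hxy⟩ := Finset.one_lt_card.1 hS
    ⟨(x, y), Finset.mem_offDiag.2 ⟨hx, hy, hxy⟩⟩)
  have hR : 0 < dist z₁ z₀ := hδ.trans (hpos _ hz)
  refine ⟨z₀, (Finset.mem_offDiag.1 hz).1, _, hpos _ hz, fun z hzS ρ hρ => ?_⟩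
  obtain ⟨w, hw, hwmax⟩ := (S.filter fun x => dist x z ≤ ρ).exists_max_image (dist · z)
    ⟨z, Finset.mem_filter.2 ⟨hzS, by simpa using hρ.le⟩⟩
  have hwS := Finset.mem_filter.1 hw
  have hsub : (S.filter fun x => dist x z ≤ ρ) ⊆ S.filter fun x => dist x z ≤ dist w z :=
    fun x hx => Finset.mem_filter.2 ⟨(Finset.mem_filter.1 hx).1, hwmax x hx⟩
  rcases eq_or_ne w z with rfl | hwz
  · refine le_max_of_le_left ?_
    rw [Nat.cast_le_one, ← Finset.card_singleton w]
    refine Finset.card_le_card fun x hx => Finset.mem_singleton.2 (by_contra fun hne => ?_)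
    have := (Finset.mem_filter.1 (hsub hx)).2
    rw [dist_self] at this
    linarith [hsep (Finset.mem_filter.1 hx).1 hzS hne]
  · have hzw : (z, w) ∈ S.offDiag := Finset.mem_offDiag.2 ⟨hzS, hwS.1, hwz.symm⟩
    have hρ' : 0 < dist w z := hδ.trans (hpos _ hzw)
    have hzmax := hmax (z, w) hzw
    dsimp only at hzmax
    rw [div_le_iff₀ (by positivity)] at hzmax
    refine le_max_of_le_right ((Nat.cast_le.2 (Finset.card_le_card hsub)).trans (hzmax.trans ?_))
    rw [Real.div_rpow hρ.le hR.le, div_mul_eq_mul_div, div_mul_eq_mul_div, mul_comm (ρ ^ t)]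
    gcongr
    exact hwS.2

theorem AssouadHomogeneous.of_isFrostman {F : Set Y} {t c : ℝ} (ht0 : 0 ≤ t) (ht1 : t ≤ 1)
    (hc : 1 ≤ c)
    (h : ∀ X : Finset Y, (X : Set Y) ⊆ F → ∀ δ R : ℝ, 0 < δ → δ < R →
      ((X : Set Y).Pairwise fun x y => δ < dist x y) → IsFrostman X R t →
      (X.card : ℝ) ≤ c * (R / δ) ^ t) :
    AssouadHomogeneous F (4 * c) t := by
  refine .of_card_separated_le fun x _ r R hr hrR S hS hsep => ?_
  rcases le_or_gt S.card 1 with hS1 | hS1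
  · have hRr : 1 ≤ (R / r) ^ t := Real.one_le_rpow ((one_le_div hr).2 hrR.le) ht0
    have : (S.card : ℝ) ≤ 1 := by exact_mod_cast hS1
    nlinarith
  obtain ⟨z₀, hz₀, R₀, hR₀, hmax⟩ := exists_ball_card_le_max (half_pos hr) ht0 hS1 hsep
  have hR₀0 : 0 < R₀ := (half_pos hr).trans hR₀
  set X := S.filter fun x => dist x z₀ ≤ R₀
  have hXS : X ⊆ S := Finset.filter_subset _ _
  have hfrost : IsFrostman X R₀ t := by
    refine ⟨fun y hy z hz => ?_, fun z hz ρ hρ => le_trans ?_ (hmax z (hXS hz) ρ hρ)⟩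
    · linarith [dist_triangle_right y z z₀, (Finset.mem_filter.1 hy).2, (Finset.mem_filter.1 hz).2]
    · exact_mod_cast Finset.card_le_card (Finset.filter_subset_filter _ hXS)
  have hXcard := h X (subset_trans (Finset.coe_subset.2 hXS) (hS.trans inter_subset_left)) _ R₀
    (half_pos hr) hR₀ (hsep.mono (Finset.coe_subset.2 hXS)) hfrost
  have hSX : (S.card : ℝ) ≤ (2 * R / R₀) ^ t * X.card := by
    have hball := hmax z₀ hz₀ (2 * R) (by linarith)
    rw [Finset.filter_true_of_mem fun y hy => (dist_triangle_right y z₀ x).trans <| by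
      linarith [mem_closedBall.1 (hS hy).2, mem_closedBall.1 (hS hz₀).2]] at hball
    exact (le_max_iff.1 hball).resolve_left (by exact_mod_cast hS1.not_ge)
  have hR0 : 0 < R := hr.trans hrR
  calc (S.card : ℝ) ≤ (2 * R / R₀) ^ t * (c * (R₀ / (r / 2)) ^ t) := hSX.trans (by gcongr)
    _ = c * (4 * (R / r)) ^ t := by
        rw [mul_left_comm, ← Real.mul_rpow (by positivity) (by positivity)]
        congr 2
        field_simp
        norm_num
    _ = c * (4 ^ t * (R / r) ^ t) := by rw [Real.mul_rpow (by norm_num) (by positivity)]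
    _ ≤ c * (4 * (R / r) ^ t) := by
        gcongr
        exact Real.rpow_le_self_of_one_le (by norm_num) ht1
    _ = 4 * c * (R / r) ^ t := by ring

end Frostman

section Pins

theorem exists_subset_dist_le {ι κ : Type*} [Fintype ι] {S : Finset κ} (hS : S.Nonempty)
    (e : κ → EuclideanSpace ℝ ι) {w L : ℝ} (hw : 0 < w) (hL : 0 ≤ L)
    (he : ∀ x ∈ S, ∀ y ∈ S, dist (e x) (e y) ≤ L) :
    ∃ T ⊆ S, T.Nonempty ∧ (∀ x ∈ T, ∀ y ∈ T, dist (e x) (e y) ≤ Fintype.card ι * w) ∧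
      (S.card : ℝ) ≤ (L / w + 2) ^ Fintype.card ι * T.card := by
  obtain ⟨a, ha, hcard⟩ := exists_card_le_mul_card_fiber hS (gridCell w ∘ e)
  refine ⟨S.filter fun x => (gridCell w ∘ e) x = a, Finset.filter_subset _ _,
    Finset.fiber_nonempty_iff_mem_image.2 ha, fun x hx y hy => dist_le_of_gridCell_eq hw ?_, ?_⟩
  · exact (Finset.mem_filter.1 hx).2.trans (Finset.mem_filter.1 hy).2.symm
  · refine (Nat.cast_le.2 hcard).trans ?_
    rw [Nat.cast_mul, ← Finset.image_image]
    gcongr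
    refine card_image_gridCell_le hw hL _ ?_
    simp only [Finset.forall_mem_image]
    exact fun x hx y hy i => (abs_coord_sub_le_dist _ _ i).trans (he x hx y hy)

section Arc

variable {V : Type*} [NormedAddCommGroup V] [InnerProductSpace ℝ V]

theorem dist_le_add_mul_norm_unitDirection_sub {x x' y : V} (hx : 0 < dist x y)
    (hx' : 0 < dist x' y) :
    dist x x' ≤ |dist x y - dist x' y| + dist x y * ‖unitDirection x y - unitDirection x' y‖ := by
  have hsplit : x' - x = (dist x y - dist x' y) • unitDirection x' y +
      dist x y • (unitDirection x y - unitDirection x' y) := by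
    rw [smul_sub, sub_smul, dist_smul_unitDirection hx, dist_smul_unitDirection hx']
    abel
  rw [dist_eq_norm', hsplit]
  refine (norm_add_le _ _).trans_eq ?_
  rw [norm_smul, norm_smul, norm_unitDirection hx', mul_one, Real.norm_eq_abs,
    Real.norm_of_nonneg dist_nonneg]

variable {D : Set ℝ} {C α t R : ℝ} {X S : Finset V} {y : V}

theorem AssouadHomogeneous.card_le_of_norm_unitDirection_sub_le (h : AssouadHomogeneous D C α)
    (hC : 0 < C) (hα : α ≤ 1) (ht : t ≤ 1) (hR : 0 < R) (hX : IsFrostman X R t) (hSX : S ⊆ X)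
    (hpos : ∀ x ∈ S, 0 < dist x y) (hle : ∀ x ∈ S, dist x y ≤ 2 * R)
    (hD : ∀ x ∈ S, dist x y ∈ D) {a : ℝ} (ha : 0 < a) (ha2 : a < 2) (haX : 1 ≤ a ^ t * X.card)
    (hS : ∀ x ∈ S, ∀ x' ∈ S, ‖unitDirection x y - unitDirection x' y‖ ≤ a) :
    (S.card : ℝ) ≤ 18 * C * a ^ (t - α) * X.card := by
  rcases S.eq_empty_or_nonempty with rfl | hne
  · rw [Finset.card_empty, Nat.cast_zero]
    positivity
  have himage := h.card_image_floor_le hC.le S (fun x => dist x y) hD (w := a * R) (q := 2 / a)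
    (by positivity) (by rwa [lt_div_iff₀ ha, one_mul]) fun x hx x' hx' => by
      have hscale : 2 / a * (a * R) = 2 * R := by field_simp
      rw [hscale, abs_le]
      constructor <;> linarith [hpos x hx, hpos x' hx', hle x hx, hle x' hx']
  obtain ⟨j, hj, hfib⟩ := exists_card_le_mul_card_fiber hne fun x => ⌊dist x y / (a * R)⌋
  obtain ⟨x₀, hx₀, rfl⟩ := Finset.mem_image.1 hj
  rw [← Nat.cast_le (α := ℝ), Nat.cast_mul] at hfib
  have hball : (S.filter fun x => ⌊dist x y / (a * R)⌋ = ⌊dist x₀ y / (a * R)⌋) ⊆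
      X.filter fun x => dist x x₀ ≤ 3 * a * R := fun x hx => by
    obtain ⟨hxS, hfloor⟩ := Finset.mem_filter.1 hx
    refine Finset.mem_filter.2 ⟨hSX hxS, ?_⟩
    have hradial := abs_sub_lt_of_floor_div_eq (by positivity) hfloor
    have hangular := mul_le_mul (hle x hxS) (hS x hxS x₀ hx₀) (norm_nonneg _) (by positivity)
    linarith [dist_le_add_mul_norm_unitDirection_sub (hpos x hxS) (hpos x₀ hx₀)]
  have hfiber : ((S.filter fun x => ⌊dist x y / (a * R)⌋ = ⌊dist x₀ y / (a * R)⌋).card : ℝ) ≤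
      3 * (a ^ t * X.card) := by
    refine (Nat.cast_le.2 (Finset.card_le_card hball)).trans <|
      (hX.card_le x₀ (hSX hx₀) _ (by positivity)).trans <| max_le (by linarith) ?_
    rw [mul_div_cancel_right₀ _ hR.ne', Real.mul_rpow (by norm_num) ha.le, mul_assoc]
    gcongr
    exact Real.rpow_le_self_of_one_le (by norm_num) ht
  calc (S.card : ℝ) ≤ 3 * C * (2 / a) ^ α * (3 * (a ^ t * X.card)) :=
        hfib.trans (by gcongr)
    _ = 9 * C * 2 ^ α * a ^ (t - α) * X.card := by
        rw [Real.div_rpow (by norm_num) ha.le, Real.rpow_sub ha]; ring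
    _ ≤ 9 * C * 2 * a ^ (t - α) * X.card := by
        gcongr
        exact Real.rpow_le_self_of_one_le (by norm_num) hα
    _ = _ := by ring

end Arc

variable {D : Set ℝ} {C α t R : ℝ} {X S : Finset (Euc 2)} {y : Euc 2}

theorem AssouadHomogeneous.exists_norm_unitDirection_sub_mem_Ioc (h : AssouadHomogeneous D C α)
    (hC : 0 < C) (hα : α ≤ 1) (ht : t ≤ 1) (hR : 0 < R) (hX : IsFrostman X R t) (hSX : S ⊆ X)
    (hpos : ∀ x ∈ S, 0 < dist x y) (hle : ∀ x ∈ S, dist x y ≤ 2 * R)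
    (hD : ∀ x ∈ S, dist x y ∈ D) {a b : ℝ} (ha : 0 < a) (hb : 0 < b) (hb1 : b ≤ 1)
    (hbX : 1 ≤ b ^ t * X.card)
    (hcard : (4 / a + 2) ^ 2 * (18 * C * b ^ (t - α) * X.card) < S.card) :
    ∃ x ∈ S, ∃ x' ∈ S, ‖unitDirection x' y - unitDirection x y‖ ∈ Ioc b a := by
  have hS : S.Nonempty := Finset.card_pos.1 (by
    exact_mod_cast (by positivity : (0 : ℝ) ≤ _).trans_lt hcard)
  obtain ⟨T, hTS, -, hTa, hST⟩ := exists_subset_dist_le hS (fun x => unitDirection x y)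
    (w := a / 2) (L := 2) (by positivity) (by norm_num) fun x hx x' hx' => by
      refine (dist_le_norm_add_norm _ _).trans ?_
      rw [norm_unitDirection (hpos x hx), norm_unitDirection (hpos x' hx')]
      norm_num
  have hratio : 2 / (a / 2) = 4 / a := by field_simp; norm_num
  rw [Fintype.card_fin, hratio] at hST
  have hT : 18 * C * b ^ (t - α) * X.card < T.card :=
    lt_of_mul_lt_mul_left (hcard.trans_le hST) (by positivity)
  by_contra! hcon
  refine hT.not_ge <| h.card_le_of_norm_unitDirection_sub_le hC hα ht hR hX (hTS.trans hSX)
    (fun x hx => hpos x (hTS hx)) (fun x hx => hle x (hTS hx)) (fun x hx => hD x (hTS hx)) hb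
    (by linarith) hbX fun x hx x' hx' => ?_
  by_contra! hlt
  refine hcon x' (hTS hx') x (hTS hx) ⟨hlt, ?_⟩
  simpa [dist_eq_norm, mul_div_cancel₀] using hTa x hx x' hx'

theorem eventually_mul_rpow_lt {κ c c' : ℝ} (hκ : 0 < κ) (hc : 0 < c) :
    ∀ᶠ b in 𝓝[>] (0 : ℝ), c' * b ^ κ < c := by
  have hlim : Tendsto (fun b : ℝ => c' * b ^ κ) (𝓝[>] 0) (𝓝 0) := by
    simpa [Real.zero_rpow hκ.ne'] using
      ((Real.continuousAt_rpow_const 0 κ (.inr hκ.le)).tendsto.const_mul c').mono_left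
        nhdsWithin_le_nhds
  exact hlim.eventually_lt_const hc

theorem IsFrostman.card_le_two_mul_card_filter_lt_dist {Y : Type*} [PseudoMetricSpace Y]
    {X : Finset Y} {R t : ℝ} (hX : IsFrostman X R t) (hR : 0 < R) {c : ℝ} (hc : 0 < c)
    (hct : c ^ t ≤ 1 / 2) (hcX : 1 ≤ c ^ t * X.card) {y : Y} (hy : y ∈ X) :
    (X.card : ℝ) ≤ 2 * (X.filter fun x => c * R < dist x y).card := by
  have hnear := hX.card_le y hy (c * R) (by positivity)
  rw [mul_div_cancel_right₀ _ hR.ne', max_eq_right hcX] at hnear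
  have hhalf := mul_le_mul_of_nonneg_right hct (Nat.cast_nonneg (α := ℝ) X.card)
  have hsplit := Finset.card_filter_add_card_filter_not (s := X) fun x => dist x y ≤ c * R
  simp only [not_le] at hsplit
  rw [← Nat.cast_inj (R := ℝ), Nat.cast_add] at hsplit
  linarith

theorem AssouadHomogeneous.exists_pins_of_forall_exists_lt (h : AssouadHomogeneous D C α)
    (hC : 0 < C) (hα : α ≤ 1) (ht : t ≤ 1) (hR : 0 < R) (hX : IsFrostman X R t) (hy : y ∈ X)
    (hD : ∀ x ∈ X, dist x y ∈ D) {c : ℝ} (hc : 0 < c) (hct : c ^ t ≤ 1 / 2) (ht0 : 0 ≤ t)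
    (hcX : 1 ≤ c ^ t * X.card) {K : ℕ} {a b : ℕ → ℝ} (ha : ∀ k < K, 0 < a k)
    (hcb : ∀ k < K, c ≤ b k) (hb1 : ∀ k < K, b k ≤ 1)
    (hab : ∀ k < K, 2 * K * ((4 / a k + 2) ^ 2 * (18 * C * b k ^ (t - α))) < 1)
    {good : ℕ → Euc 2 → Prop} (hgood : ∀ x, ∃ k < K, good k x) :
    ∃ k < K, ∃ x ∈ X, ∃ x' ∈ X, c * R < dist x y ∧ c * R < dist x' y ∧ good k x ∧ good k x' ∧
      ‖unitDirection x' y - unitDirection x y‖ ∈ Ioc (b k) (a k) := by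
  have hcard := hX.card_le_two_mul_card_filter_lt_dist hR hc hct hcX hy
  set S := X.filter fun x => c * R < dist x y
  have hX0 : (0 : ℝ) < X.card := by exact_mod_cast Finset.card_pos.2 ⟨y, hy⟩
  have hS : S.Nonempty := Finset.card_pos.1 (by exact_mod_cast (by linarith : (0 : ℝ) < S.card))
  choose stage hstage hgood using hgood
  obtain ⟨k, hk, hfib⟩ := exists_card_le_mul_card_fiber hS stage
  have hkK : k < K := by
    obtain ⟨x, -, rfl⟩ := Finset.mem_image.1 hk
    exact hstage x
  set T := S.filter fun x => stage x = k with hT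
  have hTX : T ⊆ X := (Finset.filter_subset _ _).trans (Finset.filter_subset _ _)
  have hfar : ∀ x ∈ T, c * R < dist x y := fun x hx =>
    (Finset.mem_filter.1 (Finset.mem_filter.1 hx).1).2
  have himage : (S.image stage).card ≤ K := by
    simpa using Finset.card_le_card (Finset.image_subset_iff.2 fun x (_ : x ∈ S) =>
      Finset.mem_range.2 (hstage x))
  have hST : (X.card : ℝ) ≤ 2 * (K * T.card) := hcard.trans <| by
    gcongr
    exact_mod_cast hfib.trans (Nat.mul_le_mul_right _ himage)
  have hb0 : 0 < b k := hc.trans_le (hcb k hkK)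
  obtain ⟨x, hx, x', hx', hxx'⟩ := h.exists_norm_unitDirection_sub_mem_Ioc hC hα ht hR hX hTX
    (fun x hx => (by positivity : 0 < c * R).trans (hfar x hx))
    (fun x hx => hX.dist_le x (hTX hx) y hy) (fun x hx => hD x (hTX hx)) (ha k hkK) hb0 (hb1 k hkK)
    (hcX.trans (by gcongr; exact hcb k hkK)) (by
      have hK : (0 : ℝ) < 2 * K := by exact_mod_cast Nat.mul_pos two_pos (by omega)
      have := mul_lt_mul_of_pos_right (hab k hkK) hX0
      refine lt_of_mul_lt_mul_left ?_ hK.le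
      linarith)
  have hgood' : ∀ z ∈ T, good k z := fun z hz => (Finset.mem_filter.1 hz).2 ▸ hgood z
  exact ⟨k, hkK, x, hTX hx, x', hTX hx', hfar x hx, hfar x' hx', hgood' x hx, hgood' x' hx', hxx'⟩

theorem exists_monotone_windows {p : ℝ → ℝ → Prop} (hp : ∀ H, ∃ b > 0, p H b) :
    ∃ H b : ℕ → ℝ, Monotone H ∧ (∀ k, 0 ≤ H k) ∧
      ∀ k, 0 < b k ∧ p (H k) (b k) ∧ H (k + 1) = H k + 2 / b k := by
  choose b hb0 hpb using hp
  have hsucc : ∀ k : ℕ, (fun H => H + 2 / b H)^[k + 1] 0 =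
      (fun H => H + 2 / b H)^[k] 0 + 2 / b ((fun H => H + 2 / b H)^[k] 0) :=
    fun k => Function.iterate_succ_apply' _ _ _
  have hmono : Monotone fun k : ℕ => (fun H => H + 2 / b H)^[k] 0 :=
    monotone_nat_of_le_succ fun k => by
      rw [hsucc]
      exact le_add_of_nonneg_right (div_pos two_pos (hb0 _)).le
  exact ⟨fun k => (fun H => H + 2 / b H)^[k] 0, fun k => b ((fun H => H + 2 / b H)^[k] 0), hmono,
    fun k => hmono k.zero_le, fun k => ⟨hb0 _, hpb _, hsucc k⟩⟩

/-- The window sizes `H` and direction thresholds `b` are fixed before the Frostman set: two stable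
pins at stage `k` make an angle that is small compared to `1 / H k`, yet large enough for the window
`H (k + 1) - H k` to resolve it. -/
theorem AssouadHomogeneous.exists_stable_pins (h : AssouadHomogeneous D C α) (hC : 0 < C)
    (hα0 : 0 ≤ α) (hαt : α < t) (ht : t ≤ 1) {W η ε : ℝ} (hW : 0 ≤ W) (hη : 0 < η) (hε : 0 < ε) :
    ∃ c > (0 : ℝ), c ≤ 1 ∧ ∀ (X : Finset (Euc 2)) (R : ℝ), 0 < R → IsFrostman X R t →
      1 ≤ c ^ t * X.card →
      ∀ y ∈ X, (∀ x ∈ X, dist x y ∈ D) → ∀ (P : Finset (Euc 2)) (ρ : ℕ → ℝ) (n : ℕ),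
      (∀ l, 0 < ρ l) → ∃ x ∈ X, ∃ x' ∈ X, c * R < dist x y ∧ c * R < dist x' y ∧ ∃ φ H H' : ℝ,
        ‖unitDirection x' y - unitDirection x y‖ = φ ∧ c ≤ φ ∧ 0 ≤ H ∧ φ * (2 * H + 1) ≤ η ∧
        2 / φ ≤ H' - H ∧ (unstableCount P (dist · x) H H' W η ρ n : ℝ) ≤ ε * n * P.card ∧
        (unstableCount P (dist · x') H H' W η ρ n : ℝ) ≤ ε * n * P.card := by
  obtain ⟨K, hK⟩ := exists_nat_ge ((2 * W / η + 2) / ε)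
  have hK0 : K ≠ 0 := by
    rintro rfl
    exact hK.not_gt (by rw [Nat.cast_zero]; positivity)
  rw [div_le_iff₀ hε] at hK
  obtain ⟨H, b, hHmono, hH0, hHb⟩ := exists_monotone_windows (p := fun H b : ℝ => b ≤ 1 ∧
      2 * K * ((4 / (η / (2 * H + 1)) + 2) ^ 2 * (18 * C * b ^ (t - α))) < 1) fun H => by
    obtain ⟨b, hb, hb0, hb1⟩ := ((eventually_mul_rpow_lt (c' := 2 * (K : ℝ) *
      ((4 / (η / (2 * H + 1)) + 2) ^ 2 * (18 * C))) (sub_pos.2 hαt) one_pos).and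
      (Ioc_mem_nhdsGT one_pos)).exists
    exact ⟨b, hb0, hb1, by linarith⟩
  choose hb0 hb hHsucc using hHb
  obtain ⟨c, hcb, hct, hc0, hc1⟩ := (((Finset.range K).eventually_all.2 fun k _ =>
    Ioc_mem_nhdsGT (hb0 k)).and ((eventually_mul_rpow_lt (c' := 1) (by linarith : 0 < t)
      one_half_pos).and (Ioc_mem_nhdsGT one_pos))).exists
  rw [one_mul] at hct
  refine ⟨c, hc0, hc1, fun X R hR hX hcX y hy hD P ρ n hρ => ?_⟩
  obtain ⟨k, hk, x, hx, x', hx', hfar, hfar', hs, hs', hbφ, hφa⟩ :=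
    h.exists_pins_of_forall_exists_lt hC (by linarith) ht hR hX hy hD hc0 hct.le (by linarith) hcX
      (a := fun k => η / (2 * H k + 1)) (b := b)
      (fun k _ => by have := hH0 k; positivity)
      (fun k hk => (hcb k (Finset.mem_range.2 hk)).2) (fun k _ => (hb k).1) (fun k _ => (hb k).2)
      (fun x => exists_unstableCount_le P (dist · x) hHmono hW hη hρ hK0 hK n)
  have hHk := hH0 k
  have hbk := hb0 k
  refine ⟨x, hx, x', hx', hfar, hfar', _, H k, H (k + 1), rfl,
    (hcb k (Finset.mem_range.2 hk)).2.trans hbφ.le, hHk, ?_, ?_, hs, hs'⟩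
  · rwa [le_div_iff₀ (by positivity)] at hφa
  · rw [hHsucc, add_sub_cancel_left]
    gcongr

end Pins

section LowerBound

variable {D : Set ℝ} {C α t : ℝ}

theorem AssouadHomogeneous.card_le_of_pins (h : AssouadHomogeneous D C α) (hC : 0 < C) {M : ℕ}
    (hAP : ¬ HasApproxAP D M) {q : ℝ} (hq : 2 ≤ q) {P : Finset (Euc 2)} {x x' y : Euc 2}
    {φ R : ℝ} (hR : 0 < R) (hφ : ‖unitDirection x' y - unitDirection x y‖ = φ)
    (hx : R ≤ φ / 64 * dist x y) (hx' : R ≤ φ / 64 * dist x' y)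
    (hP : ∀ z ∈ P, dist z y ≤ R) (hD : ∀ z ∈ P, dist z x ∈ D) {H H' : ℝ} (hH : 0 ≤ H)
    (hφH : φ * (2 * H + 1) ≤ 1 / (16 * q)) (hH' : 2 / φ ≤ H' - H) {δ : ℝ} (hδ : 0 < δ)
    (hsep : (P : Set (Euc 2)).Pairwise fun z z' => δ < dist z z') {n : ℕ}
    (hn : R ≤ q ^ (n + 1) * δ) {θ : ℝ}
    (hcount : (unstableCount P (dist · x) H H' (6 * M + 10) (1 / (16 * q))
        (fun l => R / q ^ l) n : ℝ) ≤ θ / 2 * n * P.card)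
    (hcount' : (unstableCount P (dist · x') H H' (6 * M + 10) (1 / (16 * q))
        (fun l => R / q ^ l) n : ℝ) ≤ θ / 2 * n * P.card) :
    (P.card : ℝ) ≤
      27 * C * (8 * q) ^ α * (2 * q / φ + 2) ^ 2 * (54 * C * q ^ α * (q ^ 2) ^ θ) ^ n := by
  have hφ0 : 0 < φ := lt_of_not_ge fun hle => hR.not_ge <|
    hx.trans (mul_nonpos_of_nonpos_of_nonneg (by linarith) dist_nonneg)
  have hη : 1 / (16 * q) ≤ 1 / 4 := by gcongr; linarith
  have hφ4 : φ ≤ 1 / 4 := by nlinarith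
  have : Fact (Module.finrank ℝ (Euc 2) = 2) := ⟨by simp⟩
  refine card_le_of_unstableCount_le h hC hAP hq hD (f' := (dist · x'))
    (fun z _ z' _ => abs_dist_sub_le z z' x) hφ0 (by linarith)
    ((transversalOn_dist hR hφ hφ4 hx hx').mono hP) hR
    (fun z hz z' hz' => ?_) hH (by nlinarith) hH' hδ hsep hn (by linarith)
  linarith [dist_triangle_right z z' y, hP z hz, hP z' hz']

theorem eventually_mul_rpow_le_rpow {a b : ℝ} (hab : a < b) (c : ℝ) :
    ∀ᶠ q : ℝ in atTop, c * q ^ a ≤ q ^ b := by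
  filter_upwards [(tendsto_rpow_atTop (sub_pos.2 hab)).eventually_ge_atTop c,
    eventually_gt_atTop 0] with q hc hq
  calc c * q ^ a ≤ q ^ (b - a) * q ^ a := by gcongr
    _ = q ^ b := by rw [← Real.rpow_add hq, sub_add_cancel]

variable {F : Set (Euc 2)}

theorem AssouadHomogeneous.exists_card_le_of_dist_le (h : AssouadHomogeneous (distSet F) C α)
    (hC : 0 < C) (hα : 0 ≤ α) (hαt : α < t) (ht : t ≤ 1) :
    ∃ c > (0 : ℝ), ∃ V ≥ 0, ∀ X : Finset (Euc 2), (X : Set (Euc 2)) ⊆ F → ∀ δ R : ℝ, 0 < δ →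
      δ < R → ((X : Set (Euc 2)).Pairwise fun x y => δ < dist x y) → IsFrostman X R t →
      1 ≤ c ^ t * X.card → ∀ P ⊆ X, ∀ y ∈ P, (∀ z ∈ P, dist z y ≤ c ^ 2 / 64 * R) →
      (P.card : ℝ) ≤ V * (R / δ) ^ t := by
  obtain ⟨M, hM⟩ := h.exists_not_hasApproxAP (hαt.trans_le ht)
  obtain ⟨q, hqt, hq⟩ := ((eventually_mul_rpow_le_rpow (by linarith : α + 2 * ((t - α) / 4) < t)
    (54 * C)).and (eventually_ge_atTop 2)).exists
  have hq0 : 0 < q := by linarith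
  rw [Real.rpow_add hq0, Real.rpow_mul hq0.le, Real.rpow_two, ← mul_assoc] at hqt
  obtain ⟨c, hc0, hc1, hpins⟩ := h.exists_stable_pins hC hα hαt ht (W := 6 * M + 10)
    (η := 1 / (16 * q)) (ε := (t - α) / 4 / 2) (by positivity) (by positivity) (by linarith)
  refine ⟨c, hc0, 27 * C * (8 * q) ^ α * (2 * q / c + 2) ^ 2, by positivity,
    fun X hXF δ R hδ hδR hsep hX hcX P hPX y hy hPy => ?_⟩
  have hR : 0 < R := hδ.trans hδR
  obtain ⟨n, hnle, hnlt⟩ := exists_nat_pow_near ((one_lt_div hδ).2 hδR).le (by linarith : 1 < q)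
  rw [div_lt_iff₀ hδ] at hnlt
  obtain ⟨x, hx, x', -, hfar, hfar', φ, H, H', hφ, hcφ, hH, hφH, hH', hs, hs'⟩ :=
    hpins X R hR hX hcX y (hPX hy) (fun x hx => ⟨x, hXF hx, y, hXF (hPX hy), rfl⟩)
      P (fun l => c ^ 2 / 64 * R / q ^ l) n fun l => by positivity
  have hφ0 : 0 < φ := lt_of_lt_of_le hc0 hcφ
  have hscale : ∀ z, c * R < dist z y → c ^ 2 / 64 * R ≤ φ / 64 * dist z y := fun z hz => by
    calc c ^ 2 / 64 * R = c / 64 * (c * R) := by ring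
      _ ≤ φ / 64 * dist z y := by gcongr
  have hpow : (54 * C * q ^ α * (q ^ 2) ^ ((t - α) / 4)) ^ n ≤ (R / δ) ^ t := by
    calc _ ≤ (q ^ t) ^ n := by gcongr
      _ = (q ^ n) ^ t := by rw [← Real.rpow_natCast, ← Real.rpow_mul hq0.le, mul_comm,
          Real.rpow_mul hq0.le, Real.rpow_natCast]
      _ ≤ _ := Real.rpow_le_rpow (by positivity) hnle (by linarith)
  refine (h.card_le_of_pins hC hM hq (by positivity) hφ (hscale x hfar) (hscale x' hfar') hPy
    (fun z hz => ⟨z, hXF (hPX hz), x, hXF hx, rfl⟩) hH hφH hH' hδ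
    (hsep.mono (Finset.coe_subset.2 hPX)) ?_ hs hs').trans (by gcongr)
  exact (mul_le_of_le_one_left hR.le (by nlinarith)).trans hnlt.le

theorem AssouadHomogeneous.exists_card_le_of_isFrostman (h : AssouadHomogeneous (distSet F) C α)
    (hC : 0 < C) (hα : 0 ≤ α) (hαt : α < t) (ht : t ≤ 1) :
    ∃ c ≥ 1, ∀ X : Finset (Euc 2), (X : Set (Euc 2)) ⊆ F → ∀ δ R : ℝ, 0 < δ → δ < R →
      ((X : Set (Euc 2)).Pairwise fun x y => δ < dist x y) → IsFrostman X R t →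
      (X.card : ℝ) ≤ c * (R / δ) ^ t := by
  obtain ⟨c, hc0, V, hV, hlocal⟩ := h.exists_card_le_of_dist_le hC hα hαt ht
  have hc : 0 < (c ^ t)⁻¹ := by positivity
  have hNV : 0 ≤ (2 / (c ^ 2 / 64 / 2) + 2) ^ 2 * V := by positivity
  refine ⟨1 + (c ^ t)⁻¹ + (2 / (c ^ 2 / 64 / 2) + 2) ^ 2 * V, by linarith,
    fun X hXF δ R hδ hδR hsep hX => ?_⟩
  have hR : 0 < R := hδ.trans hδR
  have hRδ : 1 ≤ (R / δ) ^ t := Real.one_le_rpow ((one_lt_div hδ).2 hδR).le (by linarith)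
  rcases lt_or_ge (c ^ t * X.card) 1 with hsmall | hlarge
  · rw [← lt_inv_mul_iff₀ (by positivity), mul_one] at hsmall
    nlinarith
  · have hXne : X.Nonempty := Finset.card_pos.1 <| by
      exact_mod_cast pos_of_mul_pos_right (one_pos.trans_le hlarge) (by positivity)
    obtain ⟨P, hPX, ⟨y, hy⟩, hPdist, hXP⟩ := exists_subset_dist_le hXne id
      (w := c ^ 2 / 64 / 2 * R) (L := 2 * R) (by positivity) (by positivity) hX.dist_le
    rw [Fintype.card_fin, mul_div_mul_right _ _ hR.ne'] at hXP
    have hP := hlocal X hXF δ R hδ hδR hsep hX hlarge P hPX y hy fun z hz =>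
      (hPdist z hz y hy).trans_eq (by rw [Fintype.card_fin]; push_cast; ring)
    have := hXP.trans (mul_le_mul_of_nonneg_left hP (by positivity))
    nlinarith

theorem min_assouadDim_one_le_assouadDim_distSet (F : Set (Euc 2)) :
    min (assouadDim F) 1 ≤ assouadDim (distSet F) := by
  refine (assouadHomogeneous_real _).le_assouadDim (by norm_num) zero_le_one fun α C hα hC h => ?_
  refine le_of_forall_gt_imp_ge_of_dense fun t hαt => ?_
  rcases le_or_gt t 1 with ht | ht
  · obtain ⟨c, hc, hF⟩ := h.exists_card_le_of_isFrostman hC hα hαt ht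
    have ht0 : 0 ≤ t := hα.trans hαt.le
    exact (min_le_left _ _).trans <|
      (AssouadHomogeneous.of_isFrostman ht0 ht hc hF).assouadDim_le (by linarith) ht0
  · exact (min_le_right _ _).trans ht.le

end LowerBound

section Digits

/-- The integers with a base `b` expansion of length `k` whose digits belong to `Δ`. Digits need not
lie in `[0, b)`, so that differences of digit sums are digit sums for the differences of digits. -/
def digitSums (b : ℤ) (Δ : Finset ℤ) : ℕ → Finset ℤ
  | 0 => {0}
  | k + 1 => Finset.image₂ (fun v d => v + b ^ k * d) (digitSums b Δ k) Δ

/-- The integers, as real numbers, with a finite base `b` expansion whose digits belong to `Δ`. -/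
def digitSet (b : ℤ) (Δ : Finset ℤ) : Set ℝ :=
  ⋃ k, (↑) '' (digitSums b Δ k : Set ℤ)

variable {b : ℤ} {Δ Δ' : Finset ℤ} {j k n : ℕ} {v v' : ℤ} {α C : ℝ}

theorem mem_digitSums_succ :
    v ∈ digitSums b Δ (k + 1) ↔ ∃ w ∈ digitSums b Δ k, ∃ d ∈ Δ, w + b ^ k * d = v :=
  Finset.mem_image₂

theorem mem_digitSet {x : ℝ} : x ∈ digitSet b Δ ↔ ∃ k, ∃ v ∈ digitSums b Δ k, (v : ℝ) = x := by
  simp [digitSet]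

theorem zero_mem_digitSet : 0 ∈ digitSet b Δ := mem_digitSet.2 ⟨0, 0, by simp [digitSums]⟩

theorem monotone_digitSums (h0 : 0 ∈ Δ) : Monotone (digitSums b Δ) :=
  monotone_nat_of_le_succ fun _ v hv => mem_digitSums_succ.2 ⟨v, hv, 0, h0, by simp⟩

theorem sub_mem_digitSums (hΔ : ∀ d ∈ Δ, ∀ d' ∈ Δ, d - d' ∈ Δ') (hv : v ∈ digitSums b Δ k)
    (hv' : v' ∈ digitSums b Δ k) : v - v' ∈ digitSums b Δ' k := by
  induction k generalizing v v' with
  | zero => simp_all [digitSums]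
  | succ k ih =>
    obtain ⟨w, hw, d, hd, rfl⟩ := mem_digitSums_succ.1 hv
    obtain ⟨w', hw', d', hd', rfl⟩ := mem_digitSums_succ.1 hv'
    exact mem_digitSums_succ.2 ⟨w - w', ih hw hw', d - d', hΔ d hd d' hd', by ring⟩

theorem abs_lt_of_mem_digitSums (hΔ : ∀ d ∈ Δ, |d| < b) (hv : v ∈ digitSums b Δ k) :
    |v| < b ^ k := by
  induction k generalizing v with
  | zero => simp_all [digitSums]
  | succ k ih =>
    obtain ⟨w, hw, d, hd, rfl⟩ := mem_digitSums_succ.1 hv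
    have hb : 0 < b := (abs_nonneg d).trans_lt (hΔ d hd)
    calc |w + b ^ k * d| ≤ |w| + b ^ k * |d| :=
          (abs_add_le _ _).trans_eq (by rw [abs_mul, abs_of_pos (pow_pos hb k)])
      _ < b ^ k + b ^ k * (b - 1) :=
          add_lt_add_of_lt_of_le (ih hw) (by gcongr; exact Int.le_sub_one_of_lt (hΔ d hd))
      _ = b ^ (k + 1) := by ring

theorem nonneg_of_mem_digitSums (hb : 0 ≤ b) (hΔ : ∀ d ∈ Δ, 0 ≤ d) (hv : v ∈ digitSums b Δ k) :
    0 ≤ v := by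
  induction k generalizing v with
  | zero => simp_all [digitSums]
  | succ k ih =>
    obtain ⟨w, hw, d, hd, rfl⟩ := mem_digitSums_succ.1 hv
    have := ih hw
    have := hΔ d hd
    positivity

theorem card_digitSums_le (b : ℤ) (Δ : Finset ℤ) (k : ℕ) :
    (digitSums b Δ k).card ≤ Δ.card ^ k := by
  induction k with
  | zero => simp [digitSums]
  | succ k ih => exact (Finset.card_image₂_le _ _ _).trans (Nat.mul_le_mul_right _ ih)

theorem card_digitSums (hb : 0 < b) (hΔ : ∀ d ∈ Δ, 0 ≤ d ∧ d < b) (k : ℕ) :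
    (digitSums b Δ k).card = Δ.card ^ k := by
  induction k with
  | zero => simp [digitSums]
  | succ k ih =>
    rw [digitSums, Finset.card_image₂_iff.2, ih, pow_succ]
    rintro ⟨w, d⟩ hwd ⟨w', d'⟩ hwd' heq
    have hdiv : ∀ u ∈ digitSums b Δ k, ∀ e, (u + b ^ k * e) / b ^ k = e := fun u hu e => by
      rw [Int.add_mul_ediv_left _ _ (pow_pos hb k).ne', Int.ediv_eq_zero_of_lt, zero_add]
      · exact nonneg_of_mem_digitSums hb.le (fun d hd => (hΔ d hd).1) hu
      · refine (le_abs_self u).trans_lt (abs_lt_of_mem_digitSums (fun d hd => ?_) hu)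
        rw [abs_of_nonneg (hΔ d hd).1]
        exact (hΔ d hd).2
    have hdd : d = d' := by
      rw [← hdiv w hwd.1 d, ← hdiv w' hwd'.1 d']
      exact congrArg (· / b ^ k) heq
    subst hdd
    simpa using heq

theorem exists_eq_pow_mul_add_of_mem_digitSums (h0 : 0 ∈ Δ) (hv : v ∈ digitSums b Δ n) (k : ℕ) :
    ∃ u, ∃ w ∈ digitSums b Δ k, v = b ^ k * u + w := by
  rcases le_total n k with hnk | hkn
  · exact ⟨0, v, monotone_digitSums h0 hnk hv, by simp⟩
  · induction n, hkn using Nat.le_induction generalizing v with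
    | base => exact ⟨0, v, hv, by simp⟩
    | succ n hkn ih =>
      obtain ⟨v', hv', d, -, rfl⟩ := mem_digitSums_succ.1 hv
      obtain ⟨u, w, hw, rfl⟩ := ih hv'
      refine ⟨u + b ^ (n - k) * d, w, hw, ?_⟩
      rw [mul_add, ← mul_assoc, ← pow_add, Nat.add_sub_cancel' hkn]
      ring

theorem exists_eq_pow_mul_add_of_mem_digitSums_add (hv : v ∈ digitSums b Δ (j + k)) :
    ∃ u ∈ digitSums b Δ k, ∃ w ∈ digitSums b Δ j, v = b ^ j * u + w := by
  induction k generalizing v with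
  | zero => exact ⟨0, by simp [digitSums], v, hv, by simp⟩
  | succ k ih =>
    rw [← add_assoc] at hv
    obtain ⟨v', hv', d, hd, rfl⟩ := mem_digitSums_succ.1 hv
    obtain ⟨u, hu, w, hw, rfl⟩ := ih hv'
    exact ⟨u + b ^ k * d, mem_digitSums_succ.2 ⟨u, hu, d, hd, rfl⟩, w, hw, by rw [pow_add]; ring⟩

theorem exists_digit_blocks_of_mem_digitSet (h0 : 0 ∈ Δ) (hΔ : ∀ d ∈ Δ, |d| < b) {x : ℝ}
    (hx : x ∈ digitSet b Δ) (j k : ℕ) :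
    ∃ u : ℤ, ∃ v ∈ digitSums b Δ k, |x - (b : ℝ) ^ (j + k) * u| ≤ (b : ℝ) ^ (j + k) ∧
      |x - ((b : ℝ) ^ (j + k) * u + (b : ℝ) ^ j * v)| ≤ (b : ℝ) ^ j - 1 := by
  obtain ⟨n, m, hm, rfl⟩ := mem_digitSet.1 hx
  obtain ⟨u, y, hy, rfl⟩ := exists_eq_pow_mul_add_of_mem_digitSums h0 hm (j + k)
  have hylt := abs_lt_of_mem_digitSums hΔ hy
  obtain ⟨v, hv, w, hw, rfl⟩ := exists_eq_pow_mul_add_of_mem_digitSums_add hy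
  have hwlt := Int.le_sub_one_of_lt (abs_lt_of_mem_digitSums hΔ hw)
  refine ⟨u, v, hv, ?_, ?_⟩
  · rw [Int.cast_add, Int.cast_mul, Int.cast_pow, add_sub_cancel_left]
    exact_mod_cast hylt.le
  · push_cast
    rw [← add_assoc, add_sub_cancel_left]
    exact_mod_cast hwlt

theorem card_le_of_subset_digitSet (hb : 0 < b) (h0 : 0 ∈ Δ) (hΔ : ∀ d ∈ Δ, |d| < b) {x R r : ℝ}
    (hj : (b : ℝ) ^ j - 1 ≤ r / 2) (hR : R ≤ (b : ℝ) ^ (j + k)) {S : Finset ℝ}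
    (hS : (S : Set ℝ) ⊆ digitSet b Δ ∩ closedBall x R)
    (hsep : (S : Set ℝ).Pairwise fun y z => r < dist y z) :
    S.card ≤ 5 * Δ.card ^ k := by
  have hB : (0 : ℝ) < (b : ℝ) ^ (j + k) := by positivity
  choose! u v hv hu huv using fun y (hy : y ∈ S) =>
    exists_digit_blocks_of_mem_digitSet h0 hΔ (hS hy).1 j k
  have hinj : InjOn (fun y => (u y, v y)) S := fun y hy z hz heq => by
    by_contra hne
    rw [Prod.mk.injEq] at heq
    have hyz := huv z hz
    rw [← heq.1, ← heq.2] at hyz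
    exact (hsep hy hz hne).not_ge <| (dist_triangle_right _ _ _).trans <|
      (add_le_add (huv y hy) hyz).trans (by linarith)
  have hmaps : ∀ y ∈ S, (u y, v y) ∈
      Finset.Icc ⌈x / (b : ℝ) ^ (j + k) - 2⌉ (⌈x / (b : ℝ) ^ (j + k) - 2⌉ + 4) ×ˢ digitSums b Δ k :=
    fun y hy => by
      have hyx := mem_closedBall.1 (hS hy).2
      rw [Real.dist_eq] at hyx
      have hlow : x / (b : ℝ) ^ (j + k) - 2 ≤ u y := by
        rw [sub_le_iff_le_add, div_le_iff₀ hB]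
        linarith [(abs_le.1 (hu y hy)).2, (abs_le.1 hyx).1]
      have hhigh : (u y : ℝ) ≤ x / (b : ℝ) ^ (j + k) - 2 + 4 := by
        rw [sub_add, le_sub_iff_add_le, le_div_iff₀ hB]
        linarith [(abs_le.1 (hu y hy)).1, (abs_le.1 hyx).2]
      refine Finset.mem_product.2 ⟨Finset.mem_Icc.2 ⟨Int.ceil_le.2 hlow, ?_⟩, hv y hy⟩
      exact_mod_cast hhigh.trans (add_le_add_left (Int.le_ceil _) 4)
  calc S.card ≤ _ := Finset.card_le_card_of_injOn _ hmaps hinj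
    _ = 5 * (digitSums b Δ k).card := by
        rw [Finset.card_product, Int.card_Icc]
        congr 1
        omega
    _ ≤ _ := Nat.mul_le_mul_left _ (card_digitSums_le b Δ k)

theorem assouadHomogeneous_digitSet (hb : 2 ≤ b) (h0 : 0 ∈ Δ) (hΔ : ∀ d ∈ Δ, |d| < b)
    (hα : 0 ≤ α) (hcard : (Δ.card : ℝ) ≤ (b : ℝ) ^ α) :
    AssouadHomogeneous (digitSet b Δ) (5 * ((b : ℝ) ^ α) ^ 4) α := by
  refine .of_card_separated_le fun x _ r R hr hrR S hS hsep => ?_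
  have hb2 : (2 : ℝ) ≤ b := by exact_mod_cast hb
  have hb1 : (1 : ℝ) < b := by linarith
  obtain ⟨j, hj, hrj⟩ := exists_nat_pow_near (by linarith : 1 ≤ r / 4 + 1) hb1
  obtain ⟨i, hi, hRi⟩ := exists_nat_pow_near ((one_lt_div hr).2 hrR).le hb1
  have hR : R ≤ (b : ℝ) ^ (j + (i + 4)) := by
    rw [div_lt_iff₀ hr] at hRi
    calc R ≤ (b : ℝ) ^ (i + 1) * (2 ^ 2 * b ^ (j + 1)) := hRi.le.trans (by gcongr; linarith)
      _ ≤ (b : ℝ) ^ (i + 1) * (b ^ 2 * b ^ (j + 1)) := by gcongr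
      _ = _ := by ring
  calc (S.card : ℝ) ≤ 5 * (Δ.card : ℝ) ^ (i + 4) := by
        exact_mod_cast card_le_of_subset_digitSet (by omega) h0 hΔ (by linarith) hR hS hsep
    _ ≤ 5 * ((b : ℝ) ^ α) ^ (i + 4) := by gcongr
    _ = 5 * ((b : ℝ) ^ α) ^ 4 * ((b : ℝ) ^ i) ^ α := by
        rw [← Real.rpow_natCast_mul (by positivity), mul_comm (i : ℝ),
          Real.rpow_mul_natCast (by positivity)]
        ring
    _ ≤ 5 * ((b : ℝ) ^ α) ^ 4 * (R / r) ^ α := by gcongr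

theorem le_of_forall_pow_le_mul_pow {x y c : ℝ} (hy : 0 < y) (h : ∀ k : ℕ, x ^ k ≤ c * y ^ k) :
    x ≤ y := by
  by_contra! hlt
  obtain ⟨k, hk⟩ := pow_unbounded_of_one_lt c ((one_lt_div hy).2 hlt)
  rw [div_pow, lt_div_iff₀ (by positivity)] at hk
  exact hk.not_ge (h k)

open Classical in
theorem AssouadHomogeneous.card_le_rpow_of_image_digitSet {X : Type*} [PseudoMetricSpace X]
    {g : ℝ → X} (hg : Isometry g) (hb : 0 < b) (hΔ : ∀ d ∈ Δ, 0 ≤ d ∧ d < b)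
    (h : AssouadHomogeneous (g '' digitSet b Δ) C α) : (Δ.card : ℝ) ≤ (b : ℝ) ^ α := by
  have hb0 : (1 : ℝ) ≤ b := by exact_mod_cast hb
  have habs : ∀ d ∈ Δ, |d| < b := fun d hd => by
    rw [abs_of_nonneg (hΔ d hd).1]
    exact (hΔ d hd).2
  refine le_of_forall_pow_le_mul_pow (c := C * 2 ^ α) (by positivity) fun k => ?_
  have hdist : ∀ v w : ℤ, dist (g v) (g w) = |((v - w : ℤ) : ℝ)| := fun v w => by
    rw [hg.dist_eq, Real.dist_eq, Int.cast_sub]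
  have hinj : Function.Injective fun v : ℤ => g v := fun v w hvw => by
    simpa [hvw, sub_eq_zero, eq_comm] using hdist v w
  have := h.card_le_of_separated (x := g 0) (r := 1 / 2) (R := (b : ℝ) ^ k)
    (S := (digitSums b Δ k).image fun v : ℤ => g v) ⟨0, zero_mem_digitSet, rfl⟩
    (by norm_num) (by linarith [one_le_pow₀ hb0 (n := k)]) ?_ ?_
  · rw [Finset.card_image_of_injective _ hinj, card_digitSums hb hΔ] at this
    push_cast at this
    refine this.trans_eq ?_
    rw [div_div_eq_mul_div, div_one, Real.mul_rpow (by positivity) (by positivity),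
      ← Real.rpow_natCast_mul (by positivity), mul_comm (k : ℝ),
      Real.rpow_mul_natCast (by positivity)]
    ring
  · simp only [Finset.coe_image, image_subset_iff]
    refine fun v hv => ⟨⟨v, mem_digitSet.2 ⟨k, v, hv, rfl⟩, rfl⟩, ?_⟩
    have := hdist v 0
    rw [Int.cast_zero, sub_zero] at this
    rw [mem_closedBall, this]
    exact_mod_cast (abs_lt_of_mem_digitSums habs hv).le
  · rw [Finset.coe_image]
    rintro _ ⟨v, -, rfl⟩ _ ⟨w, -, rfl⟩ hne
    rw [hdist]
    have : 1 ≤ |v - w| := Int.one_le_abs (sub_ne_zero.2 fun h => hne (by rw [h]))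
    have : (1 : ℝ) ≤ |((v - w : ℤ) : ℝ)| := by exact_mod_cast this
    linarith

theorem distSet_image_digitSet_subset {n : ℕ} {g : ℝ → Euc n} (hg : Isometry g) (h0 : 0 ∈ Δ)
    (hΔ : ∀ d ∈ Δ, ∀ d' ∈ Δ, d - d' ∈ Δ') : distSet (g '' digitSet b Δ) ⊆ digitSet b Δ' := by
  rintro _ ⟨_, ⟨x, hx, rfl⟩, _, ⟨y, hy, rfl⟩, rfl⟩
  obtain ⟨k, v, hv, rfl⟩ := mem_digitSet.1 hx
  obtain ⟨k', w, hw, rfl⟩ := mem_digitSet.1 hy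
  have hv' := monotone_digitSums h0 (le_max_left k k') hv
  have hw' := monotone_digitSums h0 (le_max_right k k') hw
  rw [hg.dist_eq, Real.dist_eq, mem_digitSet]
  rcases abs_choice ((v : ℝ) - w) with h | h
  · exact ⟨_, v - w, sub_mem_digitSums hΔ hv' hw', by rw [h]; push_cast; ring⟩
  · exact ⟨_, w - v, sub_mem_digitSums hΔ hw' hv', by rw [h]; push_cast; ring⟩

theorem exists_le_assouadDim_assouadDim_distSet_le {s ε : ℝ} (hs0 : 0 ≤ s) (hs1 : s ≤ 1)
    (hε : 0 < ε) :
    ∃ F : Set (Euc 2), F.Nonempty ∧ s ≤ assouadDim F ∧ assouadDim (distSet F) ≤ s + ε := by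
  obtain ⟨b, hbε, hb⟩ := ((tendsto_intCast_atTop_atTop.eventually
    (eventually_mul_rpow_le_rpow (lt_add_of_pos_right s hε) 4)).and (eventually_ge_atTop 2)).exists
  have hb1 : (1 : ℝ) < b := by exact_mod_cast hb
  have hbs : 1 ≤ (b : ℝ) ^ s := Real.one_le_rpow hb1.le hs0
  set N := ⌈(b : ℝ) ^ s⌉
  have hN0 : 0 < N := Int.ceil_pos.2 (by linarith)
  have hNb : N ≤ b := Int.ceil_le.2 (Real.rpow_le_self_of_one_le hb1.le hs1)
  have hg : Isometry fun u : ℝ => (EuclideanSpace.single 0 u : Euc 2) :=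
    Isometry.of_dist_eq fun u v => PiLp.dist_single_same 2 (fun _ => ℝ) 0 u v
  have hcast : ((N.toNat : ℕ) : ℝ) = N := by exact_mod_cast Int.toNat_of_nonneg hN0.le
  refine ⟨(fun u => EuclideanSpace.single 0 u) '' digitSet b (Finset.Ico 0 N),
    ⟨_, 0, zero_mem_digitSet, rfl⟩, ?_, ?_⟩
  · refine ((assouadHomogeneous_real _).image_isometry hg).le_assouadDim (by norm_num)
      zero_le_one fun β C _ _ h => ?_
    have hle := h.card_le_rpow_of_image_digitSet hg (by omega) fun d hd =>
      ⟨(Finset.mem_Ico.1 hd).1, (Finset.mem_Ico.1 hd).2.trans_le hNb⟩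
    rw [Int.card_Ico, sub_zero, hcast] at hle
    exact (Real.rpow_le_rpow_left_iff hb1).1 ((Int.le_ceil _).trans hle)
  · have hsub := distSet_image_digitSet_subset (b := b) (Δ := Finset.Ico 0 N)
      (Δ' := Finset.Ioo (-N) N) hg (by simpa) fun d hd d' hd' => by
        simp only [Finset.mem_Ico, Finset.mem_Ioo] at hd hd' ⊢
        omega
    have hcard : (((Finset.Ioo (-N) N).card : ℕ) : ℝ) ≤ (b : ℝ) ^ (s + ε) := by
      have hle : (Finset.Ioo (-N) N).card ≤ 2 * N.toNat := by rw [Int.card_Ioo]; omega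
      rw [← Nat.cast_le (α := ℝ), Nat.cast_mul, hcast] at hle
      push_cast at hle
      linarith [Int.ceil_lt_add_one ((b : ℝ) ^ s)]
    refine ((assouadHomogeneous_digitSet hb (by simpa) (fun d hd => ?_) (by linarith)
      hcard).mono hsub).assouadDim_le (by positivity) (by linarith)
    rw [Finset.mem_Ioo] at hd
    exact abs_lt.2 ⟨by omega, by omega⟩

end Digits

/-- **Corollary 3.2**: for all `s ∈ [0,1]`,
`inf {dim_A D(F) : F ⊆ ℝ² nonempty and dim_A F ≥ s} = s`. -/
theorem assouad_distance_set_inf (s : ℝ) (hs0 : 0 ≤ s) (hs1 : s ≤ 1) :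
    sInf {d : ℝ | ∃ F : Set (Euc 2), F.Nonempty ∧ s ≤ assouadDim F ∧
      d = assouadDim (distSet F)} = s := by
  have le_of_mem : ∀ d ∈ {d : ℝ | ∃ F : Set (Euc 2), F.Nonempty ∧ s ≤ assouadDim F ∧
      d = assouadDim (distSet F)}, s ≤ d := by
    rintro _ ⟨F, -, hF, rfl⟩
    exact (le_min hF hs1).trans (min_assouadDim_one_le_assouadDim_distSet F)
  refine le_antisymm (le_of_forall_pos_le_add fun ε hε => ?_) (le_csInf ?_ le_of_mem)
  · obtain ⟨F, hne, hF, hD⟩ := exists_le_assouadDim_assouadDim_distSet_le hs0 hs1 hε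
    exact (csInf_le ⟨s, le_of_mem⟩ ⟨F, hne, hF, rfl⟩).trans hD
  · obtain ⟨F, hne, hF, -⟩ := exists_le_assouadDim_assouadDim_distSet_le hs0 hs1 one_pos
    exact ⟨_, F, hne, hF, rfl⟩

end
end

section
/- Let n ≥ 2. If F ⊆ ℝⁿ is non-empty with dim_A F ≥ (n+1)/2, then dim_A D(F) = 1. -/
open Metric MeasureTheory Filter Set
open scoped ENNReal NNReal Pointwise Topology

noncomputable section

/-!
If `s` is not an Assouad exponent of `F`, then over arbitrarily long ranges of scales `F` contains
finite sets obeying a uniform `s`-dimensional Frostman condition: among the balls centred at points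
of a large separated set, take one that nearly maximises the number of points per `s`-th power of
the radius. Rescale such a set to the unit ball, down to a scale `δ`. Expanding the squared
distances `‖x - y‖ ^ 2` turns the exponential sums `∑ exp (i u ‖x - y‖ ^ 2)` into bilinear forms in
the inner products `⟪x, y⟫`, and the double large sieve bounds them in terms of the Frostman
condition. Integrating the square of this bound against a Gaussian in `u` of width `1 / δ` shows
that few quadruples have squared distances agreeing up to `δ`, so by Cauchy–Schwarz the distances
cannot be covered by much fewer than `δ ^ (n - 2s)` intervals of length `δ`, provided
`n ≤ 2s < n + 1`. Hence `min 1 (2 dim_A F - n) ≤ dim_A D(F)`.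
-/

section LargeSieve

open scoped Real RealInnerProductSpace ComplexConjugate
open Complex (I)

theorem sq_norm_integral_mul_le {α : Type*} [MeasurableSpace α] {μ : Measure α} {f g : α → ℂ}
    {w : α → ℝ} (hw : ∀ x, 0 < w x) (hf : Integrable (fun x => w x * ‖f x‖ ^ 2) μ)
    (hg : Integrable (fun x => (w x)⁻¹ * ‖g x‖ ^ 2) μ) :
    ‖∫ x, f x * g x ∂μ‖ ^ 2 ≤
      (∫ x, w x * ‖f x‖ ^ 2 ∂μ) * ∫ x, (w x)⁻¹ * ‖g x‖ ^ 2 ∂μ := by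
  set J := ‖∫ x, f x * g x ∂μ‖
  have pointwise (c : ℝ) (x : α) :
      ‖(2 * c : ℂ) * (f x * g x)‖ ≤ c * c * (w x * ‖f x‖ ^ 2) + (w x)⁻¹ * ‖g x‖ ^ 2 := by
    have hsq : 0 ≤ (w x)⁻¹ * (|c| * w x * ‖f x‖ - ‖g x‖) ^ 2 :=
      mul_nonneg (inv_nonneg.mpr (hw x).le) (sq_nonneg _)
    have hexpand : (w x)⁻¹ * (|c| * w x * ‖f x‖ - ‖g x‖) ^ 2 =
        c * c * (w x * ‖f x‖ ^ 2) + (w x)⁻¹ * ‖g x‖ ^ 2 - 2 * |c| * (‖f x‖ * ‖g x‖) := by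
      have := (hw x).ne'
      rw [← abs_mul_abs_self c]
      field_simp
      ring
    have hnorm : ‖(2 * c : ℂ) * (f x * g x)‖ = 2 * |c| * (‖f x‖ * ‖g x‖) := by simp
    linarith
  have quadratic (c : ℝ) : 0 ≤ (∫ x, w x * ‖f x‖ ^ 2 ∂μ) * (c * c) + -(2 * J) * c +
      ∫ x, (w x)⁻¹ * ‖g x‖ ^ 2 ∂μ := by
    have h := norm_integral_le_of_norm_le ((hf.const_mul (c * c)).add hg)
      (Eventually.of_forall (pointwise c))
    simp only [Pi.add_apply] at h
    rw [integral_add (hf.const_mul _) hg, integral_const_mul, integral_const_mul, norm_mul] at h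
    have hJ : 2 * J * c ≤ ‖(2 * c : ℂ)‖ * J := by
      rw [norm_mul, Complex.norm_ofNat, Complex.norm_real, Real.norm_eq_abs]
      nlinarith [le_abs_self c, norm_nonneg (∫ x, f x * g x ∂μ)]
    linarith
  have := discrim_le_zero quadratic
  rw [discrim] at this
  linarith

variable {ι κ V : Type*} [Fintype ι] [Fintype κ] [NormedAddCommGroup V]

/-- The superposition `∑ i, a i e ^ (-τ² ‖v - p i‖²)` of Gaussian bumps of width `1 / τ` centred at
the points `p i`. -/
def gaussianSum (τ : ℝ) (a : ι → ℂ) (p : ι → V) (v : V) : ℂ :=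
  ∑ i, a i * (Real.exp (-τ ^ 2 * ‖v - p i‖ ^ 2) : ℝ)

/-- The number of pairs of points of the family `p` at distance `≲ 1 / τ`, counted with a Gaussian
weight. -/
def gaussianEnergy (τ : ℝ) (p : ι → V) : ℝ :=
  ∑ i, ∑ j, Real.exp (-(τ ^ 2 * ‖p i - p j‖ ^ 2 / 2))

theorem gaussianEnergy_nonneg (τ : ℝ) (p : ι → V) : 0 ≤ gaussianEnergy τ p :=
  Finset.sum_nonneg fun _ _ => Finset.sum_nonneg fun _ _ => (Real.exp_pos _).le

theorem gaussianEnergy_neg (τ : ℝ) (p : ι → V) :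
    gaussianEnergy τ (fun i => -p i) = gaussianEnergy τ p := by
  simp only [gaussianEnergy, neg_sub_neg, norm_sub_rev]

variable [InnerProductSpace ℝ V]

/-- The exponential sum `∑ j, c j e ^ (i ⟪w j, v⟫)` with coefficients `c` and frequencies `w`. -/
def expSum (c : ι → ℂ) (w : ι → V) (v : V) : ℂ :=
  ∑ j, c j * Complex.exp (I * (⟪w j, v⟫ : ℝ))

theorem exp_mul_gaussian_mul_gaussian_le {τ : ℝ} (hτ : 1 ≤ τ) {p q : V} (hp : ‖p‖ ≤ 1)
    (hq : ‖q‖ ≤ 1) (v : V) :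
    Real.exp (‖v‖ ^ 2 / 2) *
      (Real.exp (-τ ^ 2 * ‖v - p‖ ^ 2) * Real.exp (-τ ^ 2 * ‖v - q‖ ^ 2)) ≤
    Real.exp 1 * Real.exp (-(τ ^ 2 * ‖p - q‖ ^ 2 / 2)) *
      Real.exp (-τ ^ 2 * ‖v - midpoint ℝ p q‖ ^ 2) := by
  simp only [← Real.exp_add]
  refine Real.exp_le_exp.mpr ?_
  set m := midpoint ℝ p q with hm
  have parallelogram : ‖v - p‖ ^ 2 + ‖v - q‖ ^ 2 = 2 * ‖v - m‖ ^ 2 + ‖p - q‖ ^ 2 / 2 := by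
    have h := parallelogram_law_with_norm ℝ (v - p) (v - q)
    have hadd : v - p + (v - q) = (2 : ℝ) • (v - m) := by
      rw [hm, midpoint_eq_smul_add, invOf_eq_inv]
      module
    rw [hadd, sub_sub_sub_cancel_left, norm_sub_rev q, norm_smul, Real.norm_ofNat] at h
    linarith
  have hm1 : ‖m‖ ≤ 1 := by
    rw [hm, midpoint_eq_smul_add, norm_smul, invOf_eq_inv, norm_inv, Real.norm_ofNat]
    linarith [norm_add_le p q]
  have hv : ‖v‖ ^ 2 ≤ 2 * ‖v - m‖ ^ 2 + 2 := by
    have : ‖v‖ ≤ ‖v - m‖ + ‖m‖ := by simpa using norm_add_le (v - m) m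
    nlinarith [sq_nonneg (‖v - m‖ - ‖m‖), norm_nonneg v, norm_nonneg (v - m), norm_nonneg m]
  have hτ2 : 1 ≤ τ ^ 2 := one_le_pow₀ hτ
  nlinarith [mul_nonneg (sub_nonneg.mpr hτ2) (sq_nonneg ‖v - m‖)]

theorem exp_mul_sq_norm_gaussianSum_le {τ : ℝ} (hτ : 1 ≤ τ) {a : ι → ℂ} (ha : ∀ i, ‖a i‖ ≤ 1)
    {p : ι → V} (hp : ∀ i, ‖p i‖ ≤ 1) (v : V) :
    Real.exp (‖v‖ ^ 2 / 2) * ‖gaussianSum τ a p v‖ ^ 2 ≤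
      ∑ i, ∑ j, Real.exp 1 * Real.exp (-(τ ^ 2 * ‖p i - p j‖ ^ 2 / 2)) *
        Real.exp (-τ ^ 2 * ‖v - midpoint ℝ (p i) (p j)‖ ^ 2) := by
  have triangle : ‖gaussianSum τ a p v‖ ≤ ∑ i, Real.exp (-τ ^ 2 * ‖v - p i‖ ^ 2) := by
    refine norm_sum_le_of_le _ fun i _ => ?_
    rw [norm_mul, Complex.norm_real, Real.norm_of_nonneg (Real.exp_pos _).le]
    exact mul_le_of_le_one_left (Real.exp_pos _).le (ha i)
  calc Real.exp (‖v‖ ^ 2 / 2) * ‖gaussianSum τ a p v‖ ^ 2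
      ≤ Real.exp (‖v‖ ^ 2 / 2) * (∑ i, Real.exp (-τ ^ 2 * ‖v - p i‖ ^ 2)) ^ 2 := by gcongr
    _ = ∑ i, ∑ j, Real.exp (‖v‖ ^ 2 / 2) *
          (Real.exp (-τ ^ 2 * ‖v - p i‖ ^ 2) * Real.exp (-τ ^ 2 * ‖v - p j‖ ^ 2)) := by
        rw [sq (∑ i, _), Finset.sum_mul_sum]
        simp only [Finset.mul_sum]
    _ ≤ _ := Finset.sum_le_sum fun i _ => Finset.sum_le_sum fun j _ =>
        exp_mul_gaussian_mul_gaussian_le hτ (hp i) (hp j) v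

theorem ofReal_gaussian_mul_sq_norm_expSum (b : ℝ) (c : ι → ℂ) (w : ι → V) (v : V) :
    ((Real.exp (-b * ‖v‖ ^ 2) * ‖expSum c w v‖ ^ 2 : ℝ) : ℂ) =
      ∑ i, ∑ j, c i * conj (c j) *
        ((Real.exp (-b * ‖v - 0‖ ^ 2) : ℂ) * Complex.exp (I * (⟪w i - w j, v⟫ : ℝ))) := by
  rw [sub_zero, Complex.ofReal_mul, Complex.ofReal_pow, ← Complex.mul_conj', expSum, map_sum,
    Finset.sum_mul_sum, Finset.mul_sum]
  refine Finset.sum_congr rfl fun i _ => ?_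
  rw [Finset.mul_sum]
  refine Finset.sum_congr rfl fun j _ => ?_
  rw [inner_sub_left, map_mul, ← Complex.exp_conj, map_mul, Complex.conj_I, Complex.conj_ofReal,
    Complex.ofReal_sub, mul_sub, Complex.exp_sub, neg_mul I, Complex.exp_neg (I * _)]
  ring

variable [FiniteDimensional ℝ V]

section Integrals

variable [MeasurableSpace V] [BorelSpace V]

theorem integrable_gaussian_mul_cexp {b : ℝ} (hb : 0 < b) (p w : V) :
    Integrable fun v : V =>
      (Real.exp (-b * ‖v - p‖ ^ 2) : ℂ) * Complex.exp (I * (⟪w, v⟫ : ℝ)) := by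
  have h := (GaussianFourier.integrable_cexp_neg_mul_sq_norm_add (V := V) (b := (b : ℂ))
    (by simpa using hb) I w).comp_sub_right p |>.mul_const (Complex.exp (I * (⟪w, p⟫ : ℝ)))
  refine h.congr (Eventually.of_forall fun v => ?_)
  simp only [Complex.ofReal_exp, ← Complex.exp_add, inner_sub_right]
  congr 1
  push_cast
  ring

theorem integral_gaussian_mul_cexp {b : ℝ} (hb : 0 < b) (p w : V) :
    ∫ v : V, (Real.exp (-b * ‖v - p‖ ^ 2) : ℂ) * Complex.exp (I * (⟪w, v⟫ : ℝ)) =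
      ((π / b) ^ (Module.finrank ℝ V / 2 : ℝ) * Real.exp (-(‖w‖ ^ 2 / (4 * b))) : ℝ) *
        Complex.exp (I * (⟪w, p⟫ : ℝ)) := by
  have translate (v : V) :
      (Real.exp (-b * ‖v - p‖ ^ 2) : ℂ) * Complex.exp (I * (⟪w, v⟫ : ℝ)) =
        Complex.exp (-b * ‖v - p‖ ^ 2 + I * ⟪w, v - p⟫) * Complex.exp (I * (⟪w, p⟫ : ℝ)) := by
    simp only [Complex.ofReal_exp, ← Complex.exp_add, inner_sub_right]
    congr 1
    push_cast
    ring
  simp only [translate]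
  rw [integral_mul_const,
    integral_sub_right_eq_self fun v : V => Complex.exp (-b * ‖v‖ ^ 2 + I * ⟪w, v⟫),
    GaussianFourier.integral_cexp_neg_mul_sq_norm_add (by simpa using hb) I w,
    Complex.ofReal_mul, Complex.ofReal_cpow (by positivity)]
  push_cast
  rw [Complex.I_sq, neg_one_mul, neg_div]

theorem integrable_gaussian {b : ℝ} (hb : 0 < b) (p : V) :
    Integrable fun v : V => Real.exp (-b * ‖v - p‖ ^ 2) := by
  simpa [← Complex.ofReal_exp] using (integrable_gaussian_mul_cexp hb p 0).re

theorem integral_gaussian_sq_norm {b : ℝ} (hb : 0 < b) (p : V) :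
    ∫ v : V, Real.exp (-b * ‖v - p‖ ^ 2) = (π / b) ^ (Module.finrank ℝ V / 2 : ℝ) := by
  rw [integral_sub_right_eq_self fun v : V => Real.exp (-b * ‖v‖ ^ 2),
    GaussianFourier.integral_rexp_neg_mul_sq_norm hb]

theorem integrable_gaussian_mul_sq_norm_expSum {b : ℝ} (hb : 0 < b) (c : ι → ℂ) (w : ι → V) :
    Integrable fun v : V => Real.exp (-b * ‖v‖ ^ 2) * ‖expSum c w v‖ ^ 2 := by
  have h : Integrable fun v : V => ((Real.exp (-b * ‖v‖ ^ 2) * ‖expSum c w v‖ ^ 2 : ℝ) : ℂ) := by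
    simp only [ofReal_gaussian_mul_sq_norm_expSum]
    exact integrable_finsetSum _ fun i _ => integrable_finsetSum _ fun j _ =>
      (integrable_gaussian_mul_cexp hb 0 _).const_mul _
  simpa only [RCLike.re_to_complex, Complex.ofReal_re] using h.re

theorem integral_gaussian_mul_sq_norm_expSum {b : ℝ} (hb : 0 < b) (c : ι → ℂ) (w : ι → V) :
    ((∫ v : V, Real.exp (-b * ‖v‖ ^ 2) * ‖expSum c w v‖ ^ 2 : ℝ) : ℂ) =
      ∑ i, ∑ j, c i * conj (c j) * ((π / b) ^ (Module.finrank ℝ V / 2 : ℝ) *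
        Real.exp (-(‖w i - w j‖ ^ 2 / (4 * b))) : ℝ) := by
  have hint (i j : ι) := (integrable_gaussian_mul_cexp hb 0 (w i - w j)).const_mul
    (c i * conj (c j))
  rw [← integral_complex_ofReal]
  simp only [ofReal_gaussian_mul_sq_norm_expSum]
  rw [integral_finsetSum _ fun i _ => integrable_finsetSum _ fun j _ => hint i j]
  refine Finset.sum_congr rfl fun i _ => ?_
  rw [integral_finsetSum _ fun j _ => hint i j]
  refine Finset.sum_congr rfl fun j _ => ?_
  rw [integral_const_mul, integral_gaussian_mul_cexp hb]
  simp

theorem integral_gaussian_mul_sq_norm_expSum_le {b B : ℝ} (hb : 0 < b) {c : ι → ℂ}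
    (hc : ∀ i, ‖c i‖ ≤ B) (w : ι → V) :
    ∫ v : V, Real.exp (-b * ‖v‖ ^ 2) * ‖expSum c w v‖ ^ 2 ≤
      B ^ 2 * (π / b) ^ (Module.finrank ℝ V / 2 : ℝ) *
        ∑ i, ∑ j, Real.exp (-(‖w i - w j‖ ^ 2 / (4 * b))) := by
  refine (le_abs_self _).trans ?_
  rw [← Real.norm_eq_abs, ← Complex.norm_real, integral_gaussian_mul_sq_norm_expSum hb]
  simp only [Finset.mul_sum]
  refine norm_sum_le_of_le _ fun i _ => norm_sum_le_of_le _ fun j _ => ?_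
  rw [norm_mul, norm_mul, RCLike.norm_conj, Complex.norm_real,
    Real.norm_of_nonneg (by positivity), mul_assoc (B ^ 2), sq B]
  exact mul_le_mul_of_nonneg_right
    (mul_le_mul (hc i) (hc j) (norm_nonneg _) ((norm_nonneg _).trans (hc i))) (by positivity)

theorem integrable_sum_exp_mul_gaussian_midpoint {τ : ℝ} (hτ : 0 < τ) (p : ι → V) :
    Integrable fun v : V => ∑ i, ∑ j, Real.exp 1 * Real.exp (-(τ ^ 2 * ‖p i - p j‖ ^ 2 / 2)) *
      Real.exp (-τ ^ 2 * ‖v - midpoint ℝ (p i) (p j)‖ ^ 2) :=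
  integrable_finsetSum _ fun _ _ => integrable_finsetSum _ fun _ _ =>
    (integrable_gaussian (pow_pos hτ 2) _).const_mul _

theorem integrable_exp_mul_sq_norm_gaussianSum {τ : ℝ} (hτ : 1 ≤ τ) {a : ι → ℂ}
    (ha : ∀ i, ‖a i‖ ≤ 1) {p : ι → V} (hp : ∀ i, ‖p i‖ ≤ 1) :
    Integrable fun v : V => Real.exp (‖v‖ ^ 2 / 2) * ‖gaussianSum τ a p v‖ ^ 2 := by
  refine (integrable_sum_exp_mul_gaussian_midpoint (one_pos.trans_le hτ) p).mono' ?_ ?_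
  · unfold gaussianSum
    exact Continuous.aestronglyMeasurable (by fun_prop)
  · refine Eventually.of_forall fun v => ?_
    rw [Real.norm_of_nonneg (by positivity)]
    exact exp_mul_sq_norm_gaussianSum_le hτ ha hp v

theorem integral_exp_mul_sq_norm_gaussianSum_le {τ : ℝ} (hτ : 1 ≤ τ) {a : ι → ℂ}
    (ha : ∀ i, ‖a i‖ ≤ 1) {p : ι → V} (hp : ∀ i, ‖p i‖ ≤ 1) :
    ∫ v : V, Real.exp (‖v‖ ^ 2 / 2) * ‖gaussianSum τ a p v‖ ^ 2 ≤
      Real.exp 1 * (π / τ ^ 2) ^ (Module.finrank ℝ V / 2 : ℝ) * gaussianEnergy τ p := by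
  have hτ0 : 0 < τ := one_pos.trans_le hτ
  have hint (i j : ι) := (integrable_gaussian (pow_pos hτ0 2) (midpoint ℝ (p i) (p j))).const_mul
    (Real.exp 1 * Real.exp (-(τ ^ 2 * ‖p i - p j‖ ^ 2 / 2)))
  refine (integral_mono (integrable_exp_mul_sq_norm_gaussianSum hτ ha hp)
    (integrable_sum_exp_mul_gaussian_midpoint hτ0 p)
    (exp_mul_sq_norm_gaussianSum_le hτ ha hp)).trans_eq ?_
  rw [integral_finsetSum _ fun i _ => integrable_finsetSum _ fun j _ => hint i j]
  simp only [gaussianEnergy, Finset.mul_sum]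
  refine Finset.sum_congr rfl fun i _ => ?_
  rw [integral_finsetSum _ fun j _ => hint i j]
  refine Finset.sum_congr rfl fun j _ => ?_
  rw [integral_const_mul, integral_gaussian_sq_norm (pow_pos hτ0 2)]
  ring

theorem integral_gaussianSum_mul_expSum {τ : ℝ} (hτ : 0 < τ) (a : ι → ℂ) (b : κ → ℂ) (p : ι → V)
    (w : κ → V) :
    ∫ v : V, gaussianSum τ a p v * expSum b w v =
      ((π / τ ^ 2) ^ (Module.finrank ℝ V / 2 : ℝ) : ℝ) * ∑ i, ∑ j,
        a i * (b j * (Real.exp (-(‖w j‖ ^ 2 / (4 * τ ^ 2))) : ℝ)) *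
          Complex.exp (I * (⟪w j, p i⟫ : ℝ)) := by
  have hint (i : ι) (j : κ) := (integrable_gaussian_mul_cexp (pow_pos hτ 2) (p i) (w j)).const_mul
    (a i * b j)
  have expand (v : V) : gaussianSum τ a p v * expSum b w v = ∑ i, ∑ j, a i * b j *
      ((Real.exp (-τ ^ 2 * ‖v - p i‖ ^ 2) : ℂ) * Complex.exp (I * (⟪w j, v⟫ : ℝ))) := by
    rw [gaussianSum, expSum, Finset.sum_mul_sum]
    exact Finset.sum_congr rfl fun i _ => Finset.sum_congr rfl fun j _ => by ring
  simp only [expand, Finset.mul_sum]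
  rw [integral_finsetSum _ fun i _ => integrable_finsetSum _ fun j _ => hint i j]
  refine Finset.sum_congr rfl fun i _ => ?_
  rw [integral_finsetSum _ fun j _ => hint i j]
  refine Finset.sum_congr rfl fun j _ => ?_
  rw [integral_const_mul, integral_gaussian_mul_cexp (pow_pos hτ 2)]
  push_cast
  ring

end Integrals

theorem inv_exp_half_sq (x : ℝ) : (Real.exp (x ^ 2 / 2))⁻¹ = Real.exp (-(1 / 2) * x ^ 2) := by
  rw [← Real.exp_neg]
  ring_nf

theorem integral_inv_exp_mul_sq_norm_expSum_smul_le [MeasurableSpace V] [BorelSpace V] {B : ℝ}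
    {c : ι → ℂ} (hc : ∀ i, ‖c i‖ ≤ B) (τ : ℝ) (q : ι → V) :
    ∫ v : V, (Real.exp (‖v‖ ^ 2 / 2))⁻¹ * ‖expSum c (fun i => (2 * τ) • q i) v‖ ^ 2 ≤
      B ^ 2 * (2 * π) ^ (Module.finrank ℝ V / 2 : ℝ) * gaussianEnergy τ q := by
  simp only [inv_exp_half_sq]
  refine (integral_gaussian_mul_sq_norm_expSum_le one_half_pos hc _).trans ?_
  rw [div_div_eq_mul_div, div_one, mul_comm π]
  gcongr
  refine Finset.sum_le_sum fun i _ => Finset.sum_le_sum fun j _ => Real.exp_le_exp.mpr ?_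
  rw [← smul_sub, norm_smul, mul_pow, Real.norm_eq_abs, sq_abs]
  nlinarith [mul_nonneg (sq_nonneg τ) (sq_nonneg ‖q i - q j‖)]

theorem integral_gaussianSum_mul_expSum_smul [MeasurableSpace V] [BorelSpace V] {τ : ℝ}
    (hτ : 0 < τ) (a : ι → ℂ) (b : κ → ℂ) (p : ι → V) (q : κ → V) :
    ∫ v : V, gaussianSum τ a p v *
        expSum (fun j => b j * (Real.exp (‖q j‖ ^ 2) : ℝ)) (fun j => (2 * τ) • q j) v =
      ((π / τ ^ 2) ^ (Module.finrank ℝ V / 2 : ℝ) : ℝ) *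
        ∑ i, ∑ j, a i * b j * Complex.exp (I * (2 * τ * ⟪q j, p i⟫ : ℝ)) := by
  rw [integral_gaussianSum_mul_expSum hτ]
  congr 1
  refine Finset.sum_congr rfl fun i _ => Finset.sum_congr rfl fun j _ => ?_
  have hnorm : ‖(2 * τ) • q j‖ ^ 2 = 4 * τ ^ 2 * ‖q j‖ ^ 2 := by
    rw [norm_smul, mul_pow, Real.norm_eq_abs, sq_abs]
    ring
  rw [hnorm, mul_div_cancel_left₀ _ (by positivity), mul_assoc (b j), ← Complex.ofReal_mul,
    ← Real.exp_add, add_neg_cancel, Real.exp_zero, Complex.ofReal_one, mul_one,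
    real_inner_smul_left]

/-- The double large sieve of Bombieri and Iwaniec. -/
theorem sq_norm_bilinear_expSum_le {τ : ℝ} (hτ : 1 ≤ τ) {a : ι → ℂ} {b : κ → ℂ}
    (ha : ∀ i, ‖a i‖ ≤ 1) (hb : ∀ j, ‖b j‖ ≤ 1) {p : ι → V} {q : κ → V} (hp : ∀ i, ‖p i‖ ≤ 1)
    (hq : ∀ j, ‖q j‖ ≤ 1) :
    ‖∑ i, ∑ j, a i * b j * Complex.exp (I * (2 * τ * ⟪q j, p i⟫ : ℝ))‖ ^ 2 ≤
      Real.exp 3 * 2 ^ (Module.finrank ℝ V / 2 : ℝ) * τ ^ Module.finrank ℝ V *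
        gaussianEnergy τ p * gaussianEnergy τ q := by
  borelize V
  have hτ0 : 0 < τ := one_pos.trans_le hτ
  set n := Module.finrank ℝ V
  set P : ℝ := (π / τ ^ 2) ^ (n / 2 : ℝ) with hP
  have hP0 : 0 < P := by positivity
  set c : κ → ℂ := fun j => b j * (Real.exp (‖q j‖ ^ 2) : ℝ)
  have hc (j : κ) : ‖c j‖ ≤ Real.exp 1 := by
    rw [norm_mul, Complex.norm_real, Real.norm_of_nonneg (Real.exp_pos _).le]
    exact (mul_le_of_le_one_left (Real.exp_pos _).le (hb j)).trans
      (Real.exp_le_exp.mpr (pow_le_one₀ (norm_nonneg _) (hq j)))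
  have cauchySchwarz := sq_norm_integral_mul_le (fun v : V => Real.exp_pos (‖v‖ ^ 2 / 2))
    (integrable_exp_mul_sq_norm_gaussianSum hτ ha hp)
    (by simpa only [inv_exp_half_sq] using
      integrable_gaussian_mul_sq_norm_expSum one_half_pos c fun j => (2 * τ) • q j)
  rw [integral_gaussianSum_mul_expSum_smul hτ0, norm_mul, Complex.norm_real,
    Real.norm_of_nonneg hP0.le, mul_pow] at cauchySchwarz
  have constants : Real.exp 3 * 2 ^ (n / 2 : ℝ) * τ ^ n * P ^ 2 =
      Real.exp 1 * P * (Real.exp 1 ^ 2 * (2 * π) ^ (n / 2 : ℝ)) := by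
    have hτn : (τ ^ 2) ^ (n / 2 : ℝ) = τ ^ n := by
      rw [← Real.rpow_natCast, ← Real.rpow_mul hτ0.le, ← Real.rpow_natCast]
      congr 1
      push_cast
      ring
    have he : Real.exp 3 = Real.exp 1 ^ 3 := by rw [← Real.exp_nat_mul]; norm_num
    rw [hP, Real.div_rpow Real.pi_pos.le (by positivity), hτn,
      Real.mul_rpow two_pos.le Real.pi_pos.le, he]
    field_simp
  refine le_of_mul_le_mul_left ?_ (pow_pos hP0 2)
  calc _ ≤ _ := cauchySchwarz
    _ ≤ _ := mul_le_mul (integral_exp_mul_sq_norm_gaussianSum_le hτ ha hp)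
        (integral_inv_exp_mul_sq_norm_expSum_smul_le hc τ q)
        (integral_nonneg fun v => by positivity)
        (mul_nonneg (by positivity) (gaussianEnergy_nonneg τ p))
    _ = _ := by linear_combination (gaussianEnergy τ p * gaussianEnergy τ q) * (-constants)

end LargeSieve

section Frostman

/-- A finite family of points, possibly with repetitions, is `s`-dimensional Frostman down to scale
`δ`, with constant `B`, when every ball of radius `ρ ≥ δ` centred at one of its points contains at
most a proportion `B ρ ^ s` of the family. -/
def IsFrostman_s7 {ι X : Type*} [Fintype ι] [PseudoMetricSpace X] (p : ι → X) (B s δ : ℝ) : Prop :=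
  ∀ i ρ, δ ≤ ρ →
    ((Finset.univ.filter fun j => dist (p i) (p j) ≤ ρ).card : ℝ) ≤ B * Fintype.card ι * ρ ^ s

/-- The constant `∑ₖ e ^ (-k² / 2) (k + 1) ^ s` arising when the mass of an `s`-dimensional family
under a Gaussian is summed over unit annuli. -/
def gaussianMoment (s : ℝ) : ℝ :=
  ∑' k : ℕ, Real.exp (-((k : ℝ) ^ 2 / 2)) * ((k : ℝ) + 1) ^ s

theorem summable_exp_neg_sq_mul_rpow (s : ℝ) :
    Summable fun k : ℕ => Real.exp (-((k : ℝ) ^ 2 / 2)) * ((k : ℝ) + 1) ^ s := by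
  have h := ((summable_nat_add_iff 1).mpr
    (Real.summable_pow_mul_exp_neg_nat_mul ⌈s⌉₊ one_pos)).mul_left (Real.exp (3 / 2))
  refine Summable.of_nonneg_of_le (fun k => by positivity) (fun k => ?_) h
  have hpow : ((k : ℝ) + 1) ^ s ≤ ((k : ℝ) + 1) ^ ⌈s⌉₊ := by
    rw [← Real.rpow_natCast]
    exact Real.rpow_le_rpow_of_exponent_le (by linarith [k.cast_nonneg (α := ℝ)]) (Nat.le_ceil s)
  have hexp : Real.exp (-((k : ℝ) ^ 2 / 2)) ≤ Real.exp (3 / 2) * Real.exp (-((k : ℝ) + 1)) := by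
    rw [← Real.exp_add]
    exact Real.exp_le_exp.mpr (by nlinarith [sq_nonneg ((k : ℝ) - 1)])
  push_cast
  calc _ ≤ (Real.exp (3 / 2) * Real.exp (-((k : ℝ) + 1))) * ((k : ℝ) + 1) ^ ⌈s⌉₊ := by gcongr
    _ = _ := by rw [neg_one_mul]; ring

theorem sum_exp_neg_sq_le_mul_gaussianMoment {ι : Type*} [Fintype ι] {u : ι → ℝ}
    (hu : ∀ j, 0 ≤ u j) {M s : ℝ}
    (hM : ∀ k : ℕ, ((Finset.univ.filter fun j => u j ≤ k + 1).card : ℝ) ≤ M * (k + 1) ^ s) :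
    ∑ j, Real.exp (-(u j ^ 2 / 2)) ≤ M * gaussianMoment s := by
  classical
  have hM0 : 0 ≤ M := by simpa using (Nat.cast_nonneg _).trans (hM 0)
  calc ∑ j, Real.exp (-(u j ^ 2 / 2))
      ≤ ∑ j, Real.exp (-((⌊u j⌋₊ : ℝ) ^ 2 / 2)) := by
        gcongr with j
        exact Nat.floor_le (hu j)
    _ = ∑ k ∈ Finset.univ.image fun j => ⌊u j⌋₊,
          ((Finset.univ.filter fun j => ⌊u j⌋₊ = k).card : ℝ) * Real.exp (-((k : ℝ) ^ 2 / 2)) := by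
        rw [Finset.sum_comp (fun k : ℕ => Real.exp (-((k : ℝ) ^ 2 / 2)))]
        simp only [nsmul_eq_mul]
    _ ≤ ∑ k ∈ Finset.univ.image fun j => ⌊u j⌋₊,
          M * (Real.exp (-((k : ℝ) ^ 2 / 2)) * ((k : ℝ) + 1) ^ s) := by
        refine Finset.sum_le_sum fun k _ => ?_
        have hfiber : ((Finset.univ.filter fun j => ⌊u j⌋₊ = k).card : ℝ) ≤ M * (k + 1) ^ s := by
          refine le_trans (Nat.cast_le.mpr (Finset.card_le_card ?_)) (hM k)
          exact Finset.monotone_filter_right _ fun j _ hj => hj ▸ (Nat.lt_floor_add_one (u j)).le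
        rw [mul_left_comm, mul_comm]
        gcongr
    _ ≤ M * gaussianMoment s := by
        rw [← Finset.mul_sum]
        gcongr
        exact (summable_exp_neg_sq_mul_rpow s).sum_le_tsum _ fun k _ => by positivity

theorem IsFrostman_s7.gaussianEnergy_le {ι V : Type*} [Fintype ι] [NormedAddCommGroup V]
    {p : ι → V} {B s δ τ : ℝ} (h : IsFrostman_s7 p B s δ) (hδ : 0 < δ) (hτ : 0 < τ) :
    gaussianEnergy τ p ≤ B * gaussianMoment s * max τ⁻¹ δ ^ s * (Fintype.card ι : ℝ) ^ 2 := by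
  set ρ := max τ⁻¹ δ
  have hρ : 0 < ρ := lt_max_of_lt_right hδ
  have hρτ : ρ⁻¹ ≤ τ := inv_le_of_inv_le₀ hτ (le_max_left _ _)
  have hrow (i : ι) : ∑ j, Real.exp (-(τ ^ 2 * ‖p i - p j‖ ^ 2 / 2)) ≤
      B * Fintype.card ι * ρ ^ s * gaussianMoment s := by
    refine le_trans ?_ (sum_exp_neg_sq_le_mul_gaussianMoment (u := fun j => dist (p i) (p j) / ρ)
      (fun j => by positivity) fun k => ?_)
    · refine Finset.sum_le_sum fun j _ => Real.exp_le_exp.mpr ?_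
      rw [div_eq_mul_inv (dist _ _), mul_pow, mul_comm (_ ^ 2), dist_eq_norm]
      gcongr
    · have hδk : δ ≤ (k + 1) * ρ :=
        (le_max_right _ _).trans (le_mul_of_one_le_left hρ.le (by simp))
      simp only [div_le_iff₀ hρ]
      refine (h i _ hδk).trans_eq ?_
      rw [Real.mul_rpow (by positivity) hρ.le]
      ring
  refine (Finset.sum_le_sum fun i _ => hrow i).trans_eq ?_
  rw [Finset.sum_const, Finset.card_univ, nsmul_eq_mul]
  ring

end Frostman

section DistanceEnergy

open scoped Real RealInnerProductSpace ComplexConjugate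
open Complex (I)

theorem norm_expSum_neg {ι : Type*} [Fintype ι] (x : ι → ℝ) (t : ℝ) :
    ‖expSum (fun _ => 1) x (-t)‖ = ‖expSum (fun _ => 1) x t‖ := by
  rw [← RCLike.norm_conj]
  simp [expSum, ← Complex.exp_conj]

theorem integral_gaussian_mul_sq_norm_expSum_real {ι : Type*} [Fintype ι] {δ : ℝ} (hδ : 0 < δ)
    (x : ι → ℝ) :
    2 * ∫ t in Ioi (0 : ℝ), Real.exp (-δ ^ 2 * t ^ 2) * ‖expSum (fun _ => 1) x t‖ ^ 2 =
      √π / δ * ∑ i, ∑ j, Real.exp (-((x i - x j) ^ 2 / (4 * δ ^ 2))) := by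
  have even (t : ℝ) : Real.exp (-δ ^ 2 * ‖t‖ ^ 2) * ‖expSum (fun _ => 1) x t‖ ^ 2 =
      Real.exp (-δ ^ 2 * |t| ^ 2) * ‖expSum (fun _ => 1) x |t|‖ ^ 2 := by
    rcases abs_choice t with h | h <;> simp [h, norm_expSum_neg]
  rw [← integral_comp_abs (f := fun t => Real.exp (-δ ^ 2 * t ^ 2) * ‖expSum (fun _ => 1) x t‖ ^ 2),
    ← integral_congr_ae (Eventually.of_forall even), ← Complex.ofReal_inj,
    integral_gaussian_mul_sq_norm_expSum (pow_pos hδ 2)]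
  have hsqrt : (π / δ ^ 2) ^ ((Module.finrank ℝ ℝ : ℝ) / 2) = √π / δ := by
    rw [Module.finrank_self, Nat.cast_one, ← Real.sqrt_eq_rpow, Real.sqrt_div' _ (by positivity),
      Real.sqrt_sq hδ.le]
  simp only [hsqrt, map_one, one_mul, Real.norm_eq_abs, sq_abs, Finset.mul_sum, Complex.ofReal_sum]

theorem sum_exp_neg_sq_sub_le_of_sq_norm_expSum_le {ι : Type*} [Fintype ι] {x : ι → ℝ}
    {δ M a c : ℝ} (hδ : 0 < δ) (ha : -1 < a) (hc : -1 < c)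
    (decay : ∀ t, 0 < t → ‖expSum (fun _ => 1) x t‖ ^ 2 ≤ M * (t ^ a + δ ^ (c - a) * t ^ c)) :
    ∑ i, ∑ j, Real.exp (-((x i - x j) ^ 2 / (4 * δ ^ 2))) ≤
      M * (Real.Gamma ((a + 1) / 2) + Real.Gamma ((c + 1) / 2)) * δ ^ (-a) := by
  have hδ2 : 0 < δ ^ 2 := pow_pos hδ 2
  have hint {b : ℝ} (hb : -1 < b) :
      IntegrableOn (fun t : ℝ => t ^ b * Real.exp (-δ ^ 2 * t ^ (2 : ℝ))) (Ioi 0) :=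
    integrableOn_rpow_mul_exp_neg_mul_rpow hb two_pos hδ2
  have hval {b : ℝ} (hb : -1 < b) :
      ∫ t in Ioi (0 : ℝ), t ^ b * Real.exp (-δ ^ 2 * t ^ (2 : ℝ)) =
        δ ^ (-(b + 1)) * (1 / 2) * Real.Gamma ((b + 1) / 2) := by
    rw [integral_rpow_mul_exp_neg_mul_rpow two_pos hb hδ2, ← Real.rpow_natCast,
      ← Real.rpow_mul hδ.le, Nat.cast_ofNat, mul_div_cancel₀ _ two_ne_zero]
  have upper : √π / δ * ∑ i, ∑ j, Real.exp (-((x i - x j) ^ 2 / (4 * δ ^ 2))) ≤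
      δ ^ (-(a + 1)) * (M * (Real.Gamma ((a + 1) / 2) + Real.Gamma ((c + 1) / 2))) := by
    have hpow : δ ^ (c - a) * δ ^ (-(c + 1)) = δ ^ (-(a + 1)) := by
      rw [← Real.rpow_add hδ]
      ring_nf
    calc _ = 2 * ∫ t in Ioi (0 : ℝ), Real.exp (-δ ^ 2 * t ^ 2) * ‖expSum (fun _ => 1) x t‖ ^ 2 :=
          (integral_gaussian_mul_sq_norm_expSum_real hδ x).symm
      _ ≤ 2 * ∫ t in Ioi (0 : ℝ), M * (t ^ a * Real.exp (-δ ^ 2 * t ^ (2 : ℝ)) +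
            δ ^ (c - a) * (t ^ c * Real.exp (-δ ^ 2 * t ^ (2 : ℝ)))) := by
          refine mul_le_mul_of_nonneg_left (setIntegral_mono_on ?_
            (((hint ha).add ((hint hc).const_mul _)).const_mul _) measurableSet_Ioi
            fun t ht => ?_) two_pos.le
          · simpa only [Real.norm_eq_abs, sq_abs] using
              (integrable_gaussian_mul_sq_norm_expSum hδ2 _ x).integrableOn (s := Ioi 0)
          · simp only [Real.rpow_two]
            linarith [mul_le_mul_of_nonneg_left (decay t ht) (Real.exp_pos (-δ ^ 2 * t ^ 2)).le]
      _ = _ := by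
          rw [integral_const_mul, integral_add (hint ha) ((hint hc).const_mul _),
            integral_const_mul, hval ha, hval hc]
          linear_combination M * Real.Gamma ((c + 1) / 2) * hpow
  have hsqrt : 1 / δ ≤ √π / δ := by
    gcongr
    exact Real.one_le_sqrt.mpr (by linarith [Real.pi_gt_three])
  have lower := (mul_le_mul_of_nonneg_right hsqrt (Finset.sum_nonneg fun i _ =>
    Finset.sum_nonneg fun j _ => (Real.exp_pos (-((x i - x j) ^ 2 / (4 * δ ^ 2)))).le)).trans upper
  rw [one_div, inv_mul_le_iff₀ hδ, neg_add, Real.rpow_add hδ, Real.rpow_neg_one] at lower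
  refine lower.trans_eq ?_
  field_simp

/-- The Fourier transform `∑ i, ∑ j, e ^ (i t ‖p i - p j‖²)` of the distribution of the squared
distances of the family `p`, up to normalisation. -/
def sqDistSum {ι V : Type*} [Fintype ι] [NormedAddCommGroup V] (p : ι → V) (t : ℝ) : ℂ :=
  expSum (fun _ : ι × ι => 1) (fun x => ‖p x.1 - p x.2‖ ^ 2) t

theorem norm_sqDistSum_le_card_sq {ι V : Type*} [Fintype ι] [NormedAddCommGroup V] (p : ι → V)
    (t : ℝ) : ‖sqDistSum p t‖ ≤ (Fintype.card ι : ℝ) ^ 2 := by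
  refine (norm_sum_le _ _).trans_eq ?_
  simp only [one_mul, mul_comm I, Complex.norm_exp_ofReal_mul_I, Finset.sum_const,
    Finset.card_univ, Fintype.card_prod, nsmul_eq_mul, mul_one, Nat.cast_mul, sq]

variable {ι V : Type*} [Fintype ι] [NormedAddCommGroup V] [InnerProductSpace ℝ V]
  [FiniteDimensional ℝ V] {p : ι → V} {B s δ : ℝ}

theorem sq_norm_sqDistSum_le (hp : ∀ i, ‖p i‖ ≤ 1) {τ : ℝ} (hτ : 1 ≤ τ) :
    ‖sqDistSum p τ‖ ^ 2 ≤ Real.exp 3 * 2 ^ (Module.finrank ℝ V / 2 : ℝ) *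
      τ ^ Module.finrank ℝ V * gaussianEnergy τ p ^ 2 := by
  have phase_le (i : ι) : ‖Complex.exp (I * (τ * ‖p i‖ ^ 2 : ℝ))‖ ≤ 1 := by
    rw [mul_comm, Complex.norm_exp_ofReal_mul_I]
  have phase (x y : V) : Complex.exp (I * (τ * ‖x‖ ^ 2 : ℝ)) * Complex.exp (I * (τ * ‖y‖ ^ 2 : ℝ)) *
      Complex.exp (I * (2 * τ * ⟪-y, x⟫ : ℝ)) = Complex.exp (I * (⟪‖x - y‖ ^ 2, τ⟫ : ℝ)) := by
    rw [← Complex.exp_add, ← Complex.exp_add, norm_sub_sq_real, inner_neg_left,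
      real_inner_comm x y, Real.inner_apply]
    push_cast
    ring_nf
  have expand : sqDistSum p τ = ∑ i, ∑ j, Complex.exp (I * (τ * ‖p i‖ ^ 2 : ℝ)) *
      Complex.exp (I * (τ * ‖p j‖ ^ 2 : ℝ)) * Complex.exp (I * (2 * τ * ⟪-p j, p i⟫ : ℝ)) := by
    simp only [sqDistSum, expSum, Fintype.sum_prod_type, one_mul, phase]
  rw [expand, sq (gaussianEnergy τ p), ← mul_assoc]
  nth_rewrite 2 [← gaussianEnergy_neg]
  exact sq_norm_bilinear_expSum_le hτ phase_le phase_le hp fun j => by simpa using hp j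

theorem sq_max_inv_rpow_mul_pow_le {τ : ℝ} (hτ : 0 < τ) (hδ : 0 < δ) (s : ℝ) (n : ℕ) :
    (max τ⁻¹ δ ^ s) ^ 2 * τ ^ n ≤ τ ^ (n - 2 * s) + δ ^ (2 * s) * τ ^ (n : ℝ) := by
  have sq_rpow {x : ℝ} (hx : 0 < x) : (x ^ s) ^ 2 = x ^ (2 * s) := by
    rw [← Real.rpow_natCast, ← Real.rpow_mul hx.le, Nat.cast_ofNat, mul_comm]
  have hτs : τ ^ (n - 2 * s) = (τ⁻¹) ^ (2 * s) * τ ^ n := by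
    rw [Real.inv_rpow hτ.le, ← Real.rpow_neg hτ.le, ← Real.rpow_natCast, ← Real.rpow_add hτ]
    ring_nf
  rw [hτs, Real.rpow_natCast]
  rcases max_choice τ⁻¹ δ with h | h <;> rw [h]
  · rw [sq_rpow (inv_pos.mpr hτ)]
    exact le_add_of_nonneg_right (by positivity)
  · rw [sq_rpow hδ]
    exact le_add_of_nonneg_left (by positivity)

/-- The constant in the Fourier decay of the distribution of squared distances of an
`s`-dimensional family with Frostman constant `B` in dimension `n`. -/
def sqDistConst (n : ℕ) (B s : ℝ) : ℝ :=
  Real.exp 3 * 2 ^ (n / 2 : ℝ) * (B * gaussianMoment s) ^ 2 + 1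

theorem sqDistConst_pos (n : ℕ) (B s : ℝ) : 0 < sqDistConst n B s := by
  unfold sqDistConst
  positivity

theorem IsFrostman_s7.sq_norm_sqDistSum_le (h : IsFrostman_s7 p B s δ) (hδ : 0 < δ)
    (hs : Module.finrank ℝ V ≤ 2 * s) (hp : ∀ i, ‖p i‖ ≤ 1) {τ : ℝ} (hτ : 0 < τ) :
    ‖sqDistSum p τ‖ ^ 2 ≤
      sqDistConst (Module.finrank ℝ V) B s * (Fintype.card ι : ℝ) ^ 4 *
        (τ ^ (Module.finrank ℝ V - 2 * s) + δ ^ (2 * s) * τ ^ (Module.finrank ℝ V : ℝ)) := by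
  set n := Module.finrank ℝ V
  set N : ℝ := (Fintype.card ι : ℝ)
  set K : ℝ := Real.exp 3 * 2 ^ (n / 2 : ℝ) * (B * gaussianMoment s) ^ 2
  have hK : 0 ≤ K := by positivity
  rw [sqDistConst]
  rcases le_total τ 1 with h1 | h1
  · have hone : 1 ≤ τ ^ (n - 2 * s) :=
      Real.one_le_rpow_of_pos_of_le_one_of_nonpos hτ h1 (by linarith)
    calc ‖sqDistSum p τ‖ ^ 2 ≤ (N ^ 2) ^ 2 := by gcongr; exact norm_sqDistSum_le_card_sq p τ
      _ = (0 + 1) * N ^ 4 * (1 + 0) := by ring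
      _ ≤ _ := by gcongr; positivity
  · calc ‖sqDistSum p τ‖ ^ 2
        ≤ Real.exp 3 * 2 ^ (n / 2 : ℝ) * τ ^ n * gaussianEnergy τ p ^ 2 :=
          _root_.sq_norm_sqDistSum_le hp h1
      _ ≤ Real.exp 3 * 2 ^ (n / 2 : ℝ) * τ ^ n *
            (B * gaussianMoment s * max τ⁻¹ δ ^ s * N ^ 2) ^ 2 := by
          gcongr
          exacts [gaussianEnergy_nonneg τ p, h.gaussianEnergy_le hδ hτ]
      _ = K * N ^ 4 * ((max τ⁻¹ δ ^ s) ^ 2 * τ ^ n) := by ring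
      _ ≤ _ := by
          gcongr
          · exact le_add_of_nonneg_right zero_le_one
          · exact sq_max_inv_rpow_mul_pow_le hτ hδ s n

theorem IsFrostman_s7.sum_exp_neg_sq_sub_sq_le (h : IsFrostman_s7 p B s δ) (hδ : 0 < δ)
    (hs : Module.finrank ℝ V ≤ 2 * s) (hs' : 2 * s < Module.finrank ℝ V + 1)
    (hp : ∀ i, ‖p i‖ ≤ 1) :
    ∑ x : ι × ι, ∑ y : ι × ι,
        Real.exp (-((‖p x.1 - p x.2‖ ^ 2 - ‖p y.1 - p y.2‖ ^ 2) ^ 2 / (4 * δ ^ 2))) ≤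
      sqDistConst (Module.finrank ℝ V) B s * (Fintype.card ι : ℝ) ^ 4 *
        (Real.Gamma ((Module.finrank ℝ V - 2 * s + 1) / 2) +
          Real.Gamma ((Module.finrank ℝ V + 1) / 2)) *
        δ ^ (-(Module.finrank ℝ V - 2 * s)) := by
  refine sum_exp_neg_sq_sub_le_of_sq_norm_expSum_le (x := fun x : ι × ι => ‖p x.1 - p x.2‖ ^ 2)
    hδ (by linarith) (neg_one_lt_zero.trans_le (Nat.cast_nonneg _)) fun t ht => ?_
  rw [sub_sub_cancel]
  exact h.sq_norm_sqDistSum_le hδ hs hp ht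

theorem card_sq_le_card_mul_sum_of_mapsTo {α β : Type*} [Fintype α] {t : Finset β} {f : α → β}
    (hf : ∀ x, f x ∈ t) {w : α → α → ℝ} (hw : ∀ x y, 0 ≤ w x y) {c : ℝ} (hc : 0 ≤ c)
    (hfw : ∀ x y, f x = f y → c ≤ w x y) :
    c * (Fintype.card α : ℝ) ^ 2 ≤ t.card * ∑ x, ∑ y, w x y := by
  classical
  have fiber_count : ∑ u ∈ t, ∑ x, (if f x = u then (1 : ℝ) else 0) = Fintype.card α := by
    rw [Finset.sum_comm]
    simp [hf]
  have coincidences : ∑ u ∈ t, (∑ x, (if f x = u then (1 : ℝ) else 0)) ^ 2 =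
      ∑ x, ∑ y, if f x = f y then 1 else 0 := by
    simp only [sq, Finset.sum_mul_sum]
    rw [Finset.sum_comm]
    refine Finset.sum_congr rfl fun x _ => ?_
    rw [Finset.sum_comm]
    refine Finset.sum_congr rfl fun y _ => ?_
    simp [hf, eq_comm]
  calc c * (Fintype.card α : ℝ) ^ 2
      ≤ c * (t.card * ∑ x, ∑ y, if f x = f y then 1 else 0) := by
        rw [← fiber_count, ← coincidences]
        gcongr
        exact sq_sum_le_card_mul_sum_sq
    _ = t.card * ∑ x, ∑ y, c * (if f x = f y then 1 else 0) := by
        simp only [← Finset.mul_sum]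
        ring
    _ ≤ t.card * ∑ x, ∑ y, w x y := by
        gcongr with x _ y _
        split_ifs with hxy
        · simpa using hfw x y hxy
        · simpa using hw x y

theorem exp_neg_four_le_of_abs_sub_le {u v : ℝ} (hu : u ∈ Icc 0 2) (hv : v ∈ Icc 0 2)
    (hδ : 0 < δ) (h : |u - v| ≤ δ) :
    Real.exp (-4) ≤ Real.exp (-((u ^ 2 - v ^ 2) ^ 2 / (4 * δ ^ 2))) := by
  have hsum : |u + v| ≤ 4 := abs_le.mpr ⟨by linarith [hu.1, hv.1], by linarith [hu.2, hv.2]⟩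
  refine Real.exp_le_exp.mpr (neg_le_neg ?_)
  rw [div_le_iff₀ (by positivity), ← sq_abs, sq_sub_sq, abs_mul]
  calc (|u + v| * |u - v|) ^ 2 ≤ (4 * δ) ^ 2 := by gcongr
    _ = 4 * (4 * δ ^ 2) := by ring

theorem exists_rpow_le_mul_card (V : Type*) [NormedAddCommGroup V] [InnerProductSpace ℝ V]
    [FiniteDimensional ℝ V] (B : ℝ) {s : ℝ} (hs : Module.finrank ℝ V ≤ 2 * s)
    (hs' : 2 * s < Module.finrank ℝ V + 1) :
    ∃ K : ℝ, 0 < K ∧ ∀ {ι : Type*} [Fintype ι] [Nonempty ι] {p : ι → V} {δ : ℝ},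
      IsFrostman_s7 p B s δ → 0 < δ → (∀ i, ‖p i‖ ≤ 1) →
      ∀ {β : Type*} {t : Finset β} {f : ι × ι → β}, (∀ x, f x ∈ t) →
        (∀ x y, f x = f y → |‖p x.1 - p x.2‖ - ‖p y.1 - p y.2‖| ≤ δ) →
        δ ^ (Module.finrank ℝ V - 2 * s) ≤ K * t.card := by
  set a : ℝ := Module.finrank ℝ V - 2 * s with ha
  set G : ℝ := Real.Gamma ((a + 1) / 2) + Real.Gamma ((Module.finrank ℝ V + 1) / 2)
  have hG : 0 < G :=
    add_pos (Real.Gamma_pos_of_pos (by linarith)) (Real.Gamma_pos_of_pos (by positivity))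
  have hD := sqDistConst_pos (Module.finrank ℝ V) B s
  refine ⟨Real.exp 4 * sqDistConst (Module.finrank ℝ V) B s * G, by positivity, ?_⟩
  intro ι _ _ p δ hF hδ hp β t f hf hfδ
  have dist_mem (x : ι × ι) : ‖p x.1 - p x.2‖ ∈ Icc (0 : ℝ) 2 :=
    ⟨norm_nonneg _, (norm_sub_le _ _).trans (by linarith [hp x.1, hp x.2])⟩
  have hcount := card_sq_le_card_mul_sum_of_mapsTo hf (fun x y => (Real.exp_pos _).le)
    (Real.exp_pos (-4)).le fun x y hxy =>
      exp_neg_four_le_of_abs_sub_le (dist_mem x) (dist_mem y) hδ (hfδ x y hxy)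
  have hle := hcount.trans
    (mul_le_mul_of_nonneg_left (hF.sum_exp_neg_sq_sub_sq_le hδ hs hs' hp) (Nat.cast_nonneg _))
  have hN : (0 : ℝ) < Fintype.card ι := by exact_mod_cast Fintype.card_pos
  rw [Fintype.card_prod, Nat.cast_mul, ← ha, Real.rpow_neg hδ.le, Real.exp_neg] at hle
  have hδa : 0 < δ ^ a := by positivity
  field_simp at hle
  linarith

end DistanceEnergy

section Packing

variable {X : Type*} [PseudoMetricSpace X]

/-- `α` is an admissible exponent in the definition of the Assouad dimension of `E`, so that
`assouadDim E` is the infimum of these `α`. -/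
def IsAssouadExponent (E : Set X) (α : ℝ) : Prop :=
  0 ≤ α ∧ ∃ C : ℝ, 0 < C ∧ ∀ x ∈ E, ∀ r R : ℝ, 0 < r → r < R →
    ∃ 𝒰 : Finset (Set X), (E ∩ closedBall x R ⊆ ⋃ U ∈ 𝒰, U) ∧
      (∀ U ∈ 𝒰, ediam U ≤ ENNReal.ofReal r) ∧ ((𝒰.card : ℝ) ≤ C * (R / r) ^ α)

variable {E : Set X} {α C : ℝ}

theorem IsAssouadExponent.assouadDim_le (h : IsAssouadExponent E α) : assouadDim E ≤ α :=
  csInf_le ⟨0, fun _ hβ => hβ.1⟩ h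

theorem packingNumber_le_of_forall_card_le {ε : ℝ≥0} {n : ℕ}
    (h : ∀ P : Finset X, (P : Set X) ⊆ E → IsSeparated ε (P : Set X) → P.card ≤ n) :
    packingNumber ε E ≤ n := by
  refine iSup_le fun S => iSup_le fun hSE => iSup_le fun hS => ?_
  by_contra! hlt
  obtain ⟨T, hTS, hT⟩ := Set.exists_subset_encard_eq (Order.add_one_le_of_lt hlt)
  have hTfin : T.Finite := Set.finite_of_encard_eq_coe (k := n + 1) (by exact_mod_cast hT)
  lift T to Finset X using hTfin
  rw [Set.encard_coe_eq_coe_finsetCard] at hT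
  have hcard : T.card = n + 1 := by exact_mod_cast hT
  have := h T (hTS.trans hSE) (hS.subset hTS)
  omega

theorem exists_finset_cover_of_packingNumber_le {r : ℝ} {n : ℕ}
    (h : packingNumber (r / 2).toNNReal E ≤ n) :
    ∃ 𝒰 : Finset (Set X), (E ⊆ ⋃ U ∈ 𝒰, U) ∧ (∀ U ∈ 𝒰, ediam U ≤ ENNReal.ofReal r) ∧
      𝒰.card ≤ n := by
  classical
  have hfin : packingNumber (r / 2).toNNReal E ≠ ⊤ := ne_top_of_le_ne_top (ENat.natCast_ne_top n) h
  have hcover := isCover_iff_subset_iUnion_closedEBall.mp (isCover_maximalSeparatedSet hfin)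
  have hcard := (encard_maximalSeparatedSet hfin).trans_le h
  obtain ⟨N, hN⟩ := (Set.finite_of_encard_le_coe hcard).exists_finset_coe
  rw [← hN, Set.encard_coe_eq_coe_finsetCard, Nat.cast_le] at hcard
  rw [← hN] at hcover
  refine ⟨N.image (closedEBall · (r / 2).toNNReal), by simpa using hcover, ?_,
    Finset.card_image_le.trans hcard⟩
  simp only [Finset.forall_mem_image]
  intro c _
  calc ediam (closedEBall c (r / 2).toNNReal) ≤ 2 * ENNReal.ofReal (r / 2) := ediam_closedEBall_le
    _ = ENNReal.ofReal r := by
      rw [← ENNReal.ofReal_ofNat 2, ← ENNReal.ofReal_mul zero_le_two]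
      congr 1
      ring

theorem isAssouadExponent_of_card_le (hα : 0 ≤ α) (hC : 0 < C)
    (h : ∀ x ∈ E, ∀ r R : ℝ, 0 < r → r < R → ∀ P : Finset X, (P : Set X) ⊆ E ∩ closedBall x R →
      IsSeparated (ENNReal.ofReal (r / 2)) (P : Set X) → (P.card : ℝ) ≤ C * (R / r) ^ α) :
    IsAssouadExponent E α := by
  refine ⟨hα, C, hC, fun x hx r R hr hrR => ?_⟩
  have hR : 0 < R := hr.trans hrR
  obtain ⟨𝒰, hcover, hdiam, hcard⟩ := exists_finset_cover_of_packingNumber_le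
    (packingNumber_le_of_forall_card_le fun P hP hsep =>
      Nat.le_floor (h x hx r R hr hrR P hP hsep))
  exact ⟨𝒰, hcover, hdiam, (Nat.cast_le.mpr hcard).trans (Nat.floor_le (by positivity))⟩

theorem IsAssouadExponent.exists_card_le_of_isSeparated (h : IsAssouadExponent E α) :
    ∃ C : ℝ, 0 < C ∧ ∀ x ∈ E, ∀ r R : ℝ, 0 < r → r < R → ∀ P : Finset X,
      (P : Set X) ⊆ E ∩ closedBall x R → IsSeparated (ENNReal.ofReal r) (P : Set X) →
      (P.card : ℝ) ≤ C * (R / r) ^ α := by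
  obtain ⟨-, C, hC, hE⟩ := h
  refine ⟨C, hC, fun x hx r R hr hrR P hP hsep => ?_⟩
  obtain ⟨𝒰, hcover, hdiam, hcard⟩ := hE x hx r R hr hrR
  have mem_cell : ∀ a ∈ P, ∃ U ∈ 𝒰, a ∈ U := fun a ha => by simpa using hcover (hP ha)
  choose! U hU𝒰 haU using mem_cell
  refine le_trans (Nat.cast_le.mpr (Finset.card_le_card_of_injOn U hU𝒰 ?_)) hcard
  intro a ha b hb hab
  by_contra hne
  exact ((edist_le_ediam_of_mem (haU a ha) (hab ▸ haU b hb)).trans (hdiam _ (hU𝒰 a ha))).not_gt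
    (hsep ha hb hne)

theorem card_mul_pow_le_of_isSeparated {V : Type*} [NormedAddCommGroup V] [NormedSpace ℝ V]
    [FiniteDimensional ℝ V] {P : Finset V} {x : V} {ε R : ℝ}
    (h : IsSeparated (ENNReal.ofReal (2 * ε)) (P : Set V)) (hε : 0 < ε) (hR : 0 ≤ R)
    (hP : (P : Set V) ⊆ closedBall x R) :
    P.card * ε ^ Module.finrank ℝ V ≤ (R + ε) ^ Module.finrank ℝ V := by
  borelize V
  let μ : Measure V := Measure.addHaar
  have disjoint_balls : (P : Set V).PairwiseDisjoint (ball · ε) := fun a ha b hb hab => by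
    refine ball_disjoint_ball ?_
    have hdist : ENNReal.ofReal (2 * ε) < edist a b := h ha hb hab
    rw [edist_dist, ENNReal.ofReal_lt_ofReal_iff_of_nonneg (by positivity)] at hdist
    linarith
  have balls_subset : ⋃ a ∈ P, ball a ε ⊆ ball x (R + ε) := iUnion₂_subset fun a ha =>
    ball_subset_ball' (by linarith [mem_closedBall.mp (hP ha)])
  have volume_le : (P.card * ENNReal.ofReal (ε ^ Module.finrank ℝ V)) * μ (ball 0 1) ≤
      ENNReal.ofReal ((R + ε) ^ Module.finrank ℝ V) * μ (ball 0 1) :=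
    calc (P.card * ENNReal.ofReal (ε ^ Module.finrank ℝ V)) * μ (ball 0 1)
        = μ (⋃ a ∈ P, ball a ε) := by
          rw [measure_biUnion_finset disjoint_balls fun _ _ => measurableSet_ball]
          simp [μ.addHaar_ball_of_pos _ hε, mul_assoc]
      _ ≤ μ (ball x (R + ε)) := measure_mono balls_subset
      _ = _ := μ.addHaar_ball_of_pos _ (by positivity)
  rw [ENNReal.mul_le_mul_iff_left (measure_ball_pos _ _ zero_lt_one).ne' measure_ball_lt_top.ne]
    at volume_le
  simpa [ENNReal.toReal_ofReal (pow_nonneg hε.le _)] using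
    ENNReal.toReal_le_of_le_ofReal (by positivity) volume_le

theorem isAssouadExponent_finrank {V : Type*} [NormedAddCommGroup V] [NormedSpace ℝ V]
    [FiniteDimensional ℝ V] (E : Set V) : IsAssouadExponent E (Module.finrank ℝ V) := by
  refine isAssouadExponent_of_card_le (C := 5 ^ Module.finrank ℝ V) (by positivity) (by positivity)
    fun x _ r R hr hrR P hP hsep => ?_
  have hR : 0 < R := hr.trans hrR
  rw [show r / 2 = 2 * (r / 4) by ring] at hsep
  have hvol := card_mul_pow_le_of_isSeparated hsep (by positivity) hR.le
    (hP.trans inter_subset_right)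
  rw [Real.rpow_natCast, ← mul_pow]
  calc (P.card : ℝ) ≤ (R + r / 4) ^ Module.finrank ℝ V / (r / 4) ^ Module.finrank ℝ V :=
        (le_div_iff₀ (by positivity)).mpr hvol
    _ = ((R + r / 4) / (r / 4)) ^ Module.finrank ℝ V := (div_pow _ _ _).symm
    _ ≤ (5 * (R / r)) ^ Module.finrank ℝ V := by
        gcongr
        rw [div_le_iff₀ (by positivity)]
        field_simp
        linarith

end Packing

section FrostmanExtraction

variable {X : Type*} [PseudoMetricSpace X]

theorem exists_forall_le_two_mul {ι : Type*} {f : ι → ℝ} (hf : BddAbove (range f)) {i₀ : ι}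
    (hi₀ : 0 < f i₀) : ∃ i, ∀ j, f j ≤ 2 * f i := by
  have hsup : 0 < ⨆ i, f i := hi₀.trans_le (le_ciSup hf i₀)
  have : Nonempty ι := ⟨i₀⟩
  obtain ⟨i, hi⟩ := exists_lt_of_lt_ciSup (half_lt_self hsup)
  exact ⟨i, fun j => by linarith [le_ciSup hf j]⟩

/-- The number of points of `P` in the ball of centre `z` and radius `ρ`, normalised by the
`s`-th power of the radius measured in units of `r`. -/
def ballDensity (P : Finset X) (s r : ℝ) (z : X) (ρ : ℝ) : ℝ :=
  (P.filter fun a => dist z a ≤ ρ).card / (ρ / r) ^ s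

theorem card_filter_eq_ballDensity_mul (P : Finset X) (s : ℝ) {r ρ : ℝ} (hr : 0 < r) (hρ : 0 < ρ)
    (z : X) :
    ((P.filter fun a => dist z a ≤ ρ).card : ℝ) = ballDensity P s r z ρ * (ρ / r) ^ s :=
  (div_mul_cancel₀ _ (by positivity)).symm

theorem ballDensity_le_card {s r ρ : ℝ} (hs : 0 ≤ s) (hr : 0 < r) (hρ : r ≤ ρ) (P : Finset X)
    (z : X) : ballDensity P s r z ρ ≤ (P.filter fun a => dist z a ≤ ρ).card :=
  div_le_self (Nat.cast_nonneg _) (Real.one_le_rpow ((one_le_div hr).mpr hρ) hs)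

theorem exists_ballDensity_le_two_mul {E : Set X} {P : Finset X} {s r : ℝ} (hs : 0 ≤ s)
    (hr : 0 < r) {x : X} (hx : x ∈ E) {ρ₀ : ℝ} (hρ₀ : r ≤ ρ₀) (hpos : 0 < ballDensity P s r x ρ₀) :
    ∃ y ∈ E, ∃ R, r ≤ R ∧ ∀ z ∈ E, ∀ ρ, r ≤ ρ →
      ballDensity P s r z ρ ≤ 2 * ballDensity P s r y R := by
  have bdd : BddAbove (range fun i : E × Ici r => ballDensity P s r i.1 i.2) :=
    ⟨P.card, forall_mem_range.mpr fun i => (ballDensity_le_card hs hr i.2.2 P i.1).trans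
      (Nat.cast_le.mpr (Finset.card_filter_le _ _))⟩
  obtain ⟨⟨y, R⟩, hyR⟩ := exists_forall_le_two_mul bdd (i₀ := (⟨x, hx⟩, ⟨ρ₀, hρ₀⟩)) hpos
  exact ⟨y, y.2, R, R.2, fun z hz ρ hρ => hyR (⟨z, hz⟩, ⟨ρ, hρ⟩)⟩

theorem isFrostman_of_ballDensity_le {P : Finset X} {s r R : ℝ} {y : X} (hr : 0 < r) (hR : 0 < R)
    (h : ∀ z ∈ P, ∀ ρ, r ≤ ρ → ballDensity P s r z ρ ≤ 2 * ballDensity P s r y R) :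
    IsFrostman_s7 (fun a : {a ∈ P | dist y a ≤ R} => (a : X)) (2 / R ^ s) s r := by
  intro a ρ hρ
  have hρ₀ : 0 < ρ := hr.trans_le hρ
  have card_le : Fintype.card {b : {b ∈ P | dist y b ≤ R} // dist (a : X) b ≤ ρ} ≤
      (P.filter fun b => dist (a : X) b ≤ ρ).card := by
    rw [Fintype.card_subtype]
    refine Finset.card_le_card_of_injOn Subtype.val (fun b hb => ?_) Subtype.val_injective.injOn
    exact Finset.mem_filter.mpr
      ⟨(Finset.mem_filter.mp b.2).1, by simpa using hb⟩
  rw [Fintype.card_subtype] at card_le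
  calc ((Finset.univ.filter fun b : {b ∈ P | dist y b ≤ R} => dist (a : X) b ≤ ρ).card : ℝ)
      ≤ (P.filter fun b => dist (a : X) b ≤ ρ).card := Nat.cast_le.mpr card_le
    _ = ballDensity P s r a ρ * (ρ / r) ^ s := card_filter_eq_ballDensity_mul P s hr hρ₀ a
    _ ≤ 2 * ballDensity P s r y R * (ρ / r) ^ s := by
        gcongr
        exact h a (Finset.mem_filter.mp a.2).1 ρ hρ
    _ = _ := by
        rw [Fintype.card_coe, card_filter_eq_ballDensity_mul P s hr hR y,
          Real.div_rpow hρ₀.le hr.le, Real.div_rpow hR.le hr.le]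
        field_simp

theorem exists_isFrostman_of_not_isAssouadExponent {E : Set X} {s t : ℝ} (hs : 0 ≤ s)
    (hE : ¬ IsAssouadExponent E s) (ht : IsAssouadExponent E t) (L : ℝ) :
    ∃ (y : X) (r R : ℝ) (A : Finset X), 0 < r ∧ r ≤ R ∧ L * r < R ∧ A.Nonempty ∧
      (A : Set X) ⊆ E ∩ closedBall y R ∧ IsFrostman_s7 (fun a : A => (a : X)) (2 / R ^ s) s r := by
  obtain ⟨C, hC, hpack⟩ := ht.exists_card_le_of_isSeparated
  set M : ℝ := max L 1
  have hM : 1 ≤ M := le_max_right _ _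
  set D : ℝ := C * (2 * M) ^ t
  have hD₀ : 0 < D := by positivity
  have crowded := mt (isAssouadExponent_of_card_le (C := 2 * D) hs (by positivity)) hE
  push Not at crowded
  obtain ⟨x, hx, r, R₀, hr, hrR₀, P, hPE, hPsep, hPcard⟩ := crowded
  have dense : 2 * D < ballDensity P s r x R₀ := by
    have hall : (P.filter fun a => dist x a ≤ R₀) = P :=
      Finset.filter_true_of_mem fun a ha => mem_closedBall'.mp (hPE ha).2
    rw [ballDensity, hall, lt_div_iff₀ (by have := hr.trans hrR₀; positivity)]
    exact hPcard
  obtain ⟨y, hy, R, hrR, hmax⟩ :=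
    exists_ballDensity_le_two_mul hs hr hx hrR₀.le ((by positivity : 0 < 2 * D).trans dense)
  set A := P.filter fun a => dist y a ≤ R
  have hDA : D < A.card := by
    linarith [hmax x hx R₀ hrR₀.le, ballDensity_le_card hs hr hrR P y]
  have hAE : (A : Set X) ⊆ E ∩ closedBall y R := fun a ha =>
    have ha' := Finset.mem_filter.mp (Finset.mem_coe.mp ha)
    ⟨(hPE ha'.1).1, mem_closedBall'.mpr ha'.2⟩
  refine ⟨y, r, R, A, hr, hrR, ?_, ?_, hAE,
    isFrostman_of_ballDensity_le hr (hr.trans_le hrR) fun z hz => hmax z (hPE hz).1⟩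
  · by_contra! hle
    have hRM : R ≤ M * r := hle.trans (mul_le_mul_of_nonneg_right (le_max_left _ _) hr.le)
    have hcard := hpack y hy (r / 2) (M * r) (by positivity) (by nlinarith) A
      (hAE.trans (inter_subset_inter_right _ (closedBall_subset_closedBall hRM)))
      (hPsep.subset (Finset.coe_subset.mpr (Finset.filter_subset _ _)))
    rw [show M * r / (r / 2) = 2 * M by field_simp] at hcard
    exact hDA.not_ge hcard
  · exact Finset.card_pos.mp (by exact_mod_cast hD₀.trans hDA)

theorem IsFrostman_s7.of_dist_eq_mul {ι Y : Type*} [Fintype ι] [PseudoMetricSpace Y] {p : ι → X}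
    {q : ι → Y} {B s δ c : ℝ} (h : IsFrostman_s7 p B s δ) (hδ : 0 < δ) (hc : 0 < c)
    (hq : ∀ i j, dist (q i) (q j) = c * dist (p i) (p j)) :
    IsFrostman_s7 q (B / c ^ s) s (c * δ) := by
  intro i ρ hρ
  have hρ₀ : 0 ≤ ρ := (mul_pos hc hδ).le.trans hρ
  have := h i (ρ / c) (by rwa [le_div_iff₀' hc])
  simp_rw [hq, ← le_div_iff₀' hc]
  rw [Real.div_rpow hρ₀ hc.le] at this
  calc _ ≤ _ := this
    _ = _ := by ring

end FrostmanExtraction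

section DistanceSet

/-- The set of distances between points of `F`; `distSet` is the case of Euclidean space. -/
def distanceSet {X : Type*} [PseudoMetricSpace X] (F : Set X) : Set ℝ :=
  {d | ∃ x ∈ F, ∃ y ∈ F, d = dist x y}

theorem IsAssouadExponent.exists_distance_cells {X : Type*} [PseudoMetricSpace X] {F : Set X}
    {α : ℝ} (h : IsAssouadExponent (distanceSet F) α) :
    ∃ C : ℝ, ∀ (y : X) (r R : ℝ) (A : Finset X), 0 < r → r ≤ R → A.Nonempty →
      (A : Set X) ⊆ F ∩ closedBall y R →
      ∃ (𝒰 : Finset (Set ℝ)) (f : A × A → Set ℝ), (∀ x, f x ∈ 𝒰) ∧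
        (∀ x z, f x = f z → |dist (x.1 : X) x.2 - dist (z.1 : X) z.2| ≤ r) ∧
        (𝒰.card : ℝ) ≤ C * (2 * R / r) ^ α := by
  obtain ⟨-, C, -, hcov⟩ := h
  refine ⟨C, fun y r R A hr hrR ⟨a, ha⟩ hAF => ?_⟩
  have zero_mem : (0 : ℝ) ∈ distanceSet F := ⟨a, (hAF ha).1, a, (hAF ha).1, (dist_self a).symm⟩
  obtain ⟨𝒰, hcover, hdiam, hcard⟩ := hcov 0 zero_mem r (2 * R) hr (by linarith)
  have mem_cell (x : A × A) : ∃ U ∈ 𝒰, dist (x.1 : X) x.2 ∈ U := by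
    obtain ⟨h₁F, h₁⟩ := hAF x.1.2
    obtain ⟨h₂F, h₂⟩ := hAF x.2.2
    have hle : dist (x.1 : X) x.2 ≤ 2 * R :=
      (dist_triangle_right _ _ y).trans (by linarith [mem_closedBall.mp h₁, mem_closedBall.mp h₂])
    simpa using hcover ⟨⟨_, h₁F, _, h₂F, rfl⟩, by simpa using hle⟩
  choose f hf𝒰 hf using mem_cell
  refine ⟨𝒰, f, hf𝒰, fun x z hxz => ?_, hcard⟩
  have hdist := (edist_le_ediam_of_mem (hf x) (hxz ▸ hf z)).trans (hdiam _ (hf𝒰 x))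
  rwa [edist_dist, ENNReal.ofReal_le_ofReal_iff hr.le, Real.dist_eq] at hdist

variable {V : Type*} [NormedAddCommGroup V] [InnerProductSpace ℝ V] [FiniteDimensional ℝ V]
  {F : Set V} {s α : ℝ}

theorem exists_rescaled_rpow_le_mul_card (hs : Module.finrank ℝ V ≤ 2 * s)
    (hs' : 2 * s < Module.finrank ℝ V + 1) :
    ∃ K : ℝ, 0 < K ∧ ∀ (y : V) (r R : ℝ) (A : Finset V), 0 < r → 0 < R → A.Nonempty →
      (A : Set V) ⊆ closedBall y R → IsFrostman_s7 (fun a : A => (a : V)) (2 / R ^ s) s r →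
      ∀ (𝒰 : Finset (Set ℝ)) (f : A × A → Set ℝ), (∀ x, f x ∈ 𝒰) →
        (∀ x z, f x = f z → |dist (x.1 : V) x.2 - dist (z.1 : V) z.2| ≤ r) →
        (R / r) ^ (2 * s - Module.finrank ℝ V) ≤ K * 𝒰.card := by
  obtain ⟨K, hK, hcount⟩ := exists_rpow_le_mul_card V 2 hs hs'
  refine ⟨K, hK, fun y r R A hr hR hA hAy hAF 𝒰 f hf𝒰 hf => ?_⟩
  have : Nonempty A := hA.to_subtype
  set p : A → V := fun a => R⁻¹ • ((a : V) - y) with hp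
  have dist_p (a b : A) : dist (p a) (p b) = R⁻¹ * dist (a : V) b := by
    rw [hp, dist_smul₀, dist_sub_right, norm_inv, Real.norm_of_nonneg hR.le]
  have norm_p (a : A) : ‖p a‖ ≤ 1 := by
    rw [hp, norm_smul, norm_inv, Real.norm_of_nonneg hR.le, inv_mul_le_iff₀ hR, mul_one]
    exact mem_closedBall_iff_norm.mp (hAy a.2)
  have frostman_p : IsFrostman_s7 p 2 s (R⁻¹ * r) := by
    have h := hAF.of_dist_eq_mul hr (inv_pos.mpr hR) dist_p
    rwa [Real.inv_rpow hR.le, div_inv_eq_mul, div_mul_cancel₀ _ (by positivity)] at h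
  have h := hcount frostman_p (by positivity) norm_p hf𝒰 fun x z hxz => by
    rw [← dist_eq_norm, ← dist_eq_norm, dist_p, dist_p, ← mul_sub, abs_mul,
      abs_of_pos (inv_pos.mpr hR)]
    exact mul_le_mul_of_nonneg_left (hf x z hxz) (by positivity)
  rwa [← inv_div r R, Real.inv_rpow (by positivity), ← Real.rpow_neg (by positivity), neg_sub,
    div_eq_inv_mul]

theorem IsAssouadExponent.two_mul_sub_finrank_le (hα : IsAssouadExponent (distanceSet F) α)
    (hF : ¬ IsAssouadExponent F s) (hs : Module.finrank ℝ V ≤ 2 * s)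
    (hs' : 2 * s < Module.finrank ℝ V + 1) : 2 * s - Module.finrank ℝ V ≤ α := by
  by_contra! hlt
  set e : ℝ := 2 * s - Module.finrank ℝ V - α with he
  have hs₀ : 0 ≤ s := by linarith [(Module.finrank ℝ V).cast_nonneg (α := ℝ)]
  obtain ⟨C, hcells⟩ := hα.exists_distance_cells
  obtain ⟨K, hK, hcount⟩ := exists_rescaled_rpow_le_mul_card hs hs'
  obtain ⟨L, hL⟩ := eventually_atTop.mp
    ((tendsto_rpow_atTop (by linarith : 0 < e)).eventually_gt_atTop (K * C * 2 ^ α))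
  obtain ⟨y, r, R, A, hr, hrR, hLR, hA, hAF, hfrost⟩ :=
    exists_isFrostman_of_not_isAssouadExponent hs₀ hF (isAssouadExponent_finrank F) L
  have hR : 0 < R := hr.trans_le hrR
  obtain ⟨𝒰, f, hf𝒰, hf, hcard⟩ := hcells y r R A hr hrR hA hAF
  have hlower := hcount y r R A hr hR hA (hAF.trans inter_subset_right) hfrost 𝒰 f hf𝒰 hf
  have hupper : (R / r) ^ e * (R / r) ^ α ≤ K * C * 2 ^ α * (R / r) ^ α :=
    calc (R / r) ^ e * (R / r) ^ α = (R / r) ^ (2 * s - Module.finrank ℝ V) := by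
          rw [← Real.rpow_add (by positivity), he, sub_add_cancel]
      _ ≤ K * (C * (2 * R / r) ^ α) := hlower.trans (by gcongr)
      _ = K * C * 2 ^ α * (R / r) ^ α := by
          rw [mul_div_assoc, Real.mul_rpow zero_le_two (by positivity)]
          ring
  exact (hL (R / r) ((lt_div_iff₀ hr).mpr hLR).le).not_ge
    (le_of_mul_le_mul_right hupper (by positivity))

theorem isAssouadExponent_one (E : Set ℝ) : IsAssouadExponent E 1 := by
  simpa using isAssouadExponent_finrank E

theorem min_one_two_mul_assouadDim_sub_finrank_le (F : Set V) :
    min 1 (2 * assouadDim F - Module.finrank ℝ V) ≤ assouadDim (distanceSet F) := by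
  refine le_csInf ⟨1, isAssouadExponent_one _⟩ fun α (hα : IsAssouadExponent _ α) => ?_
  by_contra! hlt
  obtain ⟨β, hαβ, hβ⟩ := exists_between hlt
  obtain ⟨hβ₁, hβF⟩ := lt_min_iff.mp hβ
  have hβ₀ : 0 ≤ β := hα.1.trans hαβ.le
  have hF : ¬ IsAssouadExponent F ((Module.finrank ℝ V + β) / 2) := fun h => by
    linarith [h.assouadDim_le]
  linarith [hα.two_mul_sub_finrank_le hF (by linarith) (by linarith)]

end DistanceSet

theorem assouad_distance_set_eq_one_general {V : Type*} [NormedAddCommGroup V]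
    [InnerProductSpace ℝ V] [FiniteDimensional ℝ V] (F : Set V)
    (hdim : ((Module.finrank ℝ V : ℝ) + 1) / 2 ≤ assouadDim F) :
    assouadDim (distanceSet F) = 1 := by
  refine (isAssouadExponent_one _).assouadDim_le.antisymm ?_
  have hmin := min_one_two_mul_assouadDim_sub_finrank_le F
  rwa [min_eq_left (by linarith)] at hmin

/-- **Corollary 3.4**: if `F ⊆ ℝⁿ` is non-empty with `dim_A F ≥ (n+1)/2`, then
`dim_A D(F) = 1`. -/
theorem assouad_distance_set_eq_one (n : ℕ) (hn : 2 ≤ n) (F : Set (Euc n))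
    (hne : F.Nonempty) (hdim : ((n : ℝ) + 1) / 2 ≤ assouadDim F) :
    assouadDim (distSet F) = 1 :=
  assouad_distance_set_eq_one_general F (by rwa [finrank_euclideanSpace_fin])

end
end
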